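/- (Theorem 1.2, first formula.) Let n ≥ 3 be a natural number. The genus-zero Hurwitz number h_{2^1,2^1} with two degenerate branch points, each of reduced ramification type 2^1 (i.e., two permutations each of cycle type (3,1^{n-3})) and m = 2n−6 simple branch points satisfies h_{2^1,2^1} = (3/4)·(27n^2 − 137n + 180)·((2n−6)!/(n−3)!)·n^{n−6}. -/

import Mathlib

open Equiv

set_option linter.unusedSectionVars false
set_option linter.unusedSimpArgs false


section HurwitzAbel
variable {ι : Type*} [DecidableEq ι]

/-- generic sum over splittings of a finite set -/
lemma hz_split_symm (C : Finset ι) (f : Finset ι → Finset ι → ℚ) :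
    ∑ S ∈ C.powerset, f S (C \ S) = ∑ S ∈ C.powerset, f (C \ S) S := by
  refine Finset.sum_bij' (fun S _ => C \ S) (fun S _ => C \ S) ?_ ?_ ?_ ?_ ?_
  · intro S _; simp
  · intro S _; simp
  · intro S hS; simpa using hS
  · intro S hS; simpa using hS
  · intro S hS
    have : C \ (C \ S) = S := by simpa using hS
    rw [this]

/-- pulling out an element of the subset -/
lemma hz_split_mem (C : Finset ι) (f : ι → Finset ι → Finset ι → ℚ) :
    ∑ S ∈ C.powerset, ∑ j ∈ S, f j S (C \ S) =
      ∑ j ∈ C, ∑ S ∈ (C.erase j).powerset, f j (insert j S) ((C.erase j) \ S) := by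
  have h1 : ∑ S ∈ C.powerset, ∑ j ∈ S, f j S (C \ S) =
      ∑ j ∈ C, ∑ S ∈ C.powerset with j ∈ S, f j S (C \ S) := by
    refine Finset.sum_comm' ?_
    intro S j
    simp only [Finset.mem_powerset, Finset.mem_filter]
    constructor
    · rintro ⟨a, b⟩; exact ⟨⟨a, b⟩, a b⟩
    · rintro ⟨⟨a, b⟩, _⟩; exact ⟨a, b⟩
  rw [h1]
  refine Finset.sum_congr rfl fun j hj => ?_
  refine Finset.sum_bij' (fun S _ => S.erase j) (fun S _ => insert j S) ?_ ?_ ?_ ?_ ?_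
  · intro S hS
    simp only [Finset.mem_powerset, Finset.mem_filter] at hS ⊢
    exact Finset.erase_subset_erase _ hS.1
  · intro S hS
    simp only [Finset.mem_powerset, Finset.mem_filter] at hS ⊢
    refine ⟨?_, Finset.mem_insert_self _ _⟩
    exact Finset.insert_subset hj (hS.trans (Finset.erase_subset _ _))
  · intro S hS
    simp only [Finset.mem_powerset, Finset.mem_filter] at hS
    exact Finset.insert_erase hS.2
  · intro S hS
    simp only [Finset.mem_powerset] at hS
    exact Finset.erase_insert (fun h => by simpa using hS h)
  · intro S hS
    simp only [Finset.mem_powerset, Finset.mem_filter] at hS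
    rw [Finset.insert_erase hS.2]
    congr 1
    ext i
    simp only [Finset.mem_sdiff, Finset.mem_erase]
    by_cases hij : i = j
    · subst hij; simp [hS.2]
    · simp [hij]

/-- general splitting sum with exponent defects -/
noncomputable def hzZ (x : ι → ℚ) (p q : ℤ) (C : Finset ι) (a b : ℚ) : ℚ :=
  ∑ S ∈ C.powerset, (a + ∑ i ∈ S, x i) ^ ((S.card : ℤ) - p) *
    (b + ∑ i ∈ C \ S, x i) ^ (((C \ S).card : ℤ) - q)

lemma hzZ_symm (x : ι → ℚ) (p q : ℤ) (C : Finset ι) (a b : ℚ) :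
    hzZ x p q C a b = hzZ x q p C b a := by
  unfold hzZ
  rw [hz_split_symm C (fun S T => (a + ∑ i ∈ S, x i) ^ ((S.card : ℤ) - p) *
    (b + ∑ i ∈ T, x i) ^ ((T.card : ℤ) - q))]
  exact Finset.sum_congr rfl fun S _ => mul_comm _ _

lemma hz_sum_sdiff (x : ι → ℚ) {S C : Finset ι} (h : S ⊆ C) :
    ∑ i ∈ S, x i + ∑ i ∈ C \ S, x i = ∑ i ∈ C, x i := by
  rw [add_comm, Finset.sum_sdiff h]

/-- lowering the exponent -/
lemma hzZ_rec (x : ι → ℚ) (hx : ∀ i, 0 < x i) (p q : ℤ) (C : Finset ι) (a b : ℚ)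
    (ha : 0 < a) :
    a * hzZ x (p + 1) q C a b =
      hzZ x p q C a b - ∑ j ∈ C, x j * hzZ x p q (C.erase j) (a + x j) b := by
  have h := hz_split_mem C (fun j S T => x j * ((a + ∑ i ∈ S, x i) ^ ((S.card : ℤ) - (p + 1)) *
    (b + ∑ i ∈ T, x i) ^ ((T.card : ℤ) - q)))
  have h2 : ∑ j ∈ C, x j * hzZ x p q (C.erase j) (a + x j) b = ∑ j ∈ C,
      ∑ S ∈ (C.erase j).powerset, x j * ((a + ∑ i ∈ insert j S, x i) ^
        (((insert j S).card : ℤ) - (p + 1)) *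
        (b + ∑ i ∈ (C.erase j) \ S, x i) ^ ((((C.erase j) \ S).card : ℤ) - q)) := by
    refine Finset.sum_congr rfl fun j hj => ?_
    unfold hzZ
    rw [Finset.mul_sum]
    refine Finset.sum_congr rfl fun S hS => ?_
    have hjS : j ∉ S := fun h => by
      have := Finset.mem_powerset.1 hS h
      simp at this
    rw [Finset.sum_insert hjS, Finset.card_insert_of_notMem hjS]
    congr 3
    · ring
    · push_cast; ring
  rw [h2, ← h]
  unfold hzZ
  rw [Finset.mul_sum, ← Finset.sum_sub_distrib]
  refine Finset.sum_congr rfl fun S hS => ?_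
  rw [← Finset.sum_mul]
  have hpos : a + ∑ i ∈ S, x i ≠ 0 :=
    (add_pos_of_pos_of_nonneg ha (Finset.sum_nonneg fun i _ => (hx i).le)).ne'
  have : (a + ∑ i ∈ S, x i) ^ ((S.card : ℤ) - p) =
      (a + ∑ i ∈ S, x i) ^ ((S.card : ℤ) - (p + 1)) * (a + ∑ i ∈ S, x i) := by
    rw [← zpow_add_one₀ hpos]; congr 1; ring
  rw [this]
  ring

/-- multiplying by the total -/
lemma hzZ_total (x : ι → ℚ) (hx : ∀ i, 0 < x i) (p q : ℤ) (C : Finset ι) (a b : ℚ)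
    (ha : 0 < a) (hb : 0 < b) :
    (a + b + ∑ i ∈ C, x i) * hzZ x (p + 1) (q + 1) C a b =
      hzZ x p (q + 1) C a b + hzZ x (p + 1) q C a b := by
  unfold hzZ
  rw [Finset.mul_sum, ← Finset.sum_add_distrib]
  refine Finset.sum_congr rfl fun S hS => ?_
  have h1 : a + ∑ i ∈ S, x i ≠ 0 :=
    (add_pos_of_pos_of_nonneg ha (Finset.sum_nonneg fun i _ => (hx i).le)).ne'
  have h2 : b + ∑ i ∈ C \ S, x i ≠ 0 :=
    (add_pos_of_pos_of_nonneg hb (Finset.sum_nonneg fun i _ => (hx i).le)).ne'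
  have e1 : (a + ∑ i ∈ S, x i) ^ ((S.card : ℤ) - p) =
      (a + ∑ i ∈ S, x i) ^ ((S.card : ℤ) - (p + 1)) * (a + ∑ i ∈ S, x i) := by
    rw [← zpow_add_one₀ h1]; congr 1; ring
  have e2 : (b + ∑ i ∈ C \ S, x i) ^ (((C \ S).card : ℤ) - q) =
      (b + ∑ i ∈ C \ S, x i) ^ (((C \ S).card : ℤ) - (q + 1)) * (b + ∑ i ∈ C \ S, x i) := by
    rw [← zpow_add_one₀ h2]; congr 1; ring
  rw [e1, e2, ← hz_sum_sdiff x (Finset.mem_powerset.1 hS)]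
  ring

/-- The Hurwitz generalisation of Abel's identities. -/
lemma hz_abel (x : ι → ℚ) (hx : ∀ i, 0 < x i) (C : Finset ι) : ∀ (a b : ℚ), 0 < a → 0 < b →
    a * b * hzZ x 1 1 C a b = (a + b) * (a + b + ∑ i ∈ C, x i) ^ ((C.card : ℤ) - 1) ∧
    a * hzZ x 1 0 C a b = (a + b + ∑ i ∈ C, x i) ^ (C.card : ℤ) := by
  induction C using Finset.strongInduction with
  | H C ih =>
  -- the second identity in terms of the first sum
  have key : ∀ a b : ℚ, 0 < a → 0 < b → a * hzZ x 1 0 C a b = a * b * hzZ x 1 1 C a b +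
      (∑ j ∈ C, x j) * (a + b + ∑ i ∈ C, x i) ^ ((C.card : ℤ) - 1) := by
    intro a b ha hb
    have h := hzZ_rec x hx 0 1 C b a hb
    rw [hzZ_symm x (0+1) 1, hzZ_symm x 0 1 C b a] at h
    have h3 : ∀ j ∈ C, a * hzZ x 0 1 (C.erase j) (b + x j) a =
        (a + b + ∑ i ∈ C, x i) ^ ((C.card : ℤ) - 1) := by
      intro j hj
      have := (ih _ (Finset.erase_ssubset hj) a (b + x j) ha (add_pos hb (hx j))).2
      rw [hzZ_symm, this, ← Finset.add_sum_erase C x hj, Finset.card_erase_of_mem hj]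
      have hc : 1 ≤ C.card := Finset.card_pos.2 ⟨j, hj⟩
      rw [Nat.cast_sub hc]
      congr 1
      ring
    have h4 : a * ∑ j ∈ C, x j * hzZ x 0 1 (C.erase j) (b + x j) a =
        (∑ j ∈ C, x j) * (a + b + ∑ i ∈ C, x i) ^ ((C.card : ℤ) - 1) := by
      rw [Finset.mul_sum, Finset.sum_mul]
      refine Finset.sum_congr rfl fun j hj => ?_
      rw [← h3 j hj]; ring
    rw [zero_add] at h
    have h5 : a * hzZ x 1 0 C a b = a * (b * hzZ x 1 1 C a b) +
      a * ∑ j ∈ C, x j * hzZ x 0 1 (C.erase j) (b + x j) a := by rw [h]; ring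
    rw [h5, h4]; ring
  intro a b ha hb
  rcases C.eq_empty_or_nonempty with rfl | hne
  · simp only [hzZ, Finset.powerset_empty, Finset.sum_singleton, Finset.card_empty, Finset.sum_empty,
      Finset.empty_sdiff, add_zero]
    have := add_pos ha hb
    simp only [Nat.cast_zero, zero_sub, sub_zero, zpow_neg_one, zpow_zero]
    constructor <;> field_simp
  · have hX : 0 < ∑ i ∈ C, x i := Finset.sum_pos (fun i _ => hx i) hne
    have hN : 0 < a + b + ∑ i ∈ C, x i := by positivity
    have k1 := key a b ha hb
    have k2 := key b a hb ha
    have k3 := hzZ_total x hx 0 0 C a b ha hb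
    rw [zero_add] at k3
    rw [hzZ_symm x 1 0 C b a, hzZ_symm x 1 1 C b a, add_comm b a] at k2
    have hA : a * b * hzZ x 1 1 C a b = (a + b) * (a + b + ∑ i ∈ C, x i) ^ ((C.card : ℤ) - 1) := by
      generalize hzZ x 1 1 C a b = z at *
      generalize hzZ x 1 0 C a b = z1 at *
      generalize hzZ x 0 1 C a b = z2 at *
      generalize (a + b + ∑ i ∈ C, x i) ^ ((C.card : ℤ) - 1) = w at *
      have : (∑ i ∈ C, x i) * (a * b * z) = (∑ i ∈ C, x i) * ((a + b) * w) := by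
        linear_combination (a * b) * k3 + b * k1 + a * k2
      exact mul_left_cancel₀ hX.ne' this
    refine ⟨hA, ?_⟩
    rw [k1, hA]
    have : (a + b + ∑ i ∈ C, x i) ^ (C.card : ℤ) =
      (a + b + ∑ i ∈ C, x i) ^ ((C.card : ℤ) - 1) * (a + b + ∑ i ∈ C, x i) := by
      rw [← zpow_add_one₀ hN.ne']; congr 1; ring
    rw [this]; ring

/-- closed form with defects (2,1) -/
lemma hz_Q (x : ι → ℚ) (hx : ∀ i, 0 < x i) (C : Finset ι) (a b : ℚ) (ha : 0 < a) (hb : 0 < b) :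
    hzZ x 2 1 C a b = (a + b) / (a ^ 2 * b) * (a + b + ∑ i ∈ C, x i) ^ ((C.card : ℤ) - 1) -
      ∑ j ∈ C, x j * (a + b + x j) / (a * b * (a + x j)) *
        (a + b + ∑ i ∈ C, x i) ^ ((C.card : ℤ) - 2) := by
  have h := hzZ_rec x hx 1 1 C a b ha
  have h1 := (hz_abel x hx C a b ha hb).1
  have h2 : ∑ j ∈ C, x j * hzZ x 1 1 (C.erase j) (a + x j) b =
      a * ∑ j ∈ C, x j * (a + b + x j) / (a * b * (a + x j)) *
        (a + b + ∑ i ∈ C, x i) ^ ((C.card : ℤ) - 2) := by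
    rw [Finset.mul_sum]
    refine Finset.sum_congr rfl fun j hj => ?_
    have h3 := (hz_abel x hx (C.erase j) (a + x j) b (add_pos ha (hx j)) hb).1
    rw [Finset.card_erase_of_mem hj, Nat.cast_sub (Finset.card_pos.2 ⟨j, hj⟩)] at h3
    have e : a + x j + b + ∑ i ∈ C.erase j, x i = a + b + ∑ i ∈ C, x i := by
      rw [← Finset.add_sum_erase C x hj]; ring
    have e2 : (C.card : ℤ) - ((1 : ℕ) : ℤ) - 1 = (C.card : ℤ) - 2 := by push_cast; ring
    rw [e, e2] at h3
    have := hx j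
    have h4 : hzZ x 1 1 (C.erase j) (a + x j) b = (a + x j + b) *
      (a + b + ∑ i ∈ C, x i) ^ ((C.card : ℤ) - 2) / ((a + x j) * b) := by
      rw [← h3]; field_simp
    rw [h4]; field_simp; ring
  have h5 : hzZ x 1 1 C a b = (a + b) * (a + b + ∑ i ∈ C, x i) ^ ((C.card : ℤ) - 1) / (a * b) := by
    rw [← h1]; field_simp
  rw [h2, h5, show (1:ℤ)+1 = 2 by norm_num] at h
  have h6 : a * hzZ x 2 1 C a b = a * ((a + b) / (a ^ 2 * b) * (a + b + ∑ i ∈ C, x i) ^ ((C.card : ℤ) - 1) -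
      ∑ j ∈ C, x j * (a + b + x j) / (a * b * (a + x j)) *
        (a + b + ∑ i ∈ C, x i) ^ ((C.card : ℤ) - 2)) := by
    rw [h, mul_sub]; congr 1; field_simp
  exact mul_left_cancel₀ ha.ne' h6

end HurwitzAbel


section TreeSeries

/-- coefficients of the tree function -/
noncomputable def hzc (k : ℕ) : ℚ := (k : ℚ) ^ ((k : ℤ) - 1) / (k.factorial : ℚ)
noncomputable def hze (k : ℕ) : ℚ := (k : ℚ) ^ k / (k.factorial : ℚ)
noncomputable def hzphi (k : ℕ) : ℚ := (k : ℚ) ^ (k + 1) / (k.factorial : ℚ)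

lemma hzc_zero : hzc 0 = 0 := by simp [hzc]
lemma hzc_one : hzc 1 = 1 := by simp [hzc]
lemma hze_zero : hze 0 = 1 := by simp [hze]
lemma hze_one : hze 1 = 1 := by simp [hze]

lemma hz_mul_hzc (k : ℕ) (hk : k ≠ 0) : (k : ℚ) * hzc k = hze k := by
  unfold hzc hze
  have h : (k : ℚ) ≠ 0 := by exact_mod_cast hk
  have : (k : ℚ) ^ k = (k : ℚ) * (k : ℚ) ^ ((k : ℤ) - 1) := by
    rw [mul_comm, ← zpow_add_one₀ h, sub_add_cancel, zpow_natCast]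
  rw [this]; ring

lemma hzphi_eq (k : ℕ) : hzphi k = k * hze k := by
  unfold hzphi hze; ring

lemma hzphi_pos (k : ℕ) (hk : k ≠ 0) : 0 < hzphi k := by
  have : 0 < (k : ℚ) := by exact_mod_cast Nat.pos_of_ne_zero hk
  unfold hzphi; positivity

lemma hzZ_one {ι : Type*} [DecidableEq ι] (p q : ℤ) (C : Finset ι) (a b : ℚ) :
    hzZ (fun _ : ι => (1 : ℚ)) p q C a b = ∑ s ∈ Finset.range (C.card + 1),
      (C.card.choose s : ℚ) * ((a + s) ^ ((s : ℤ) - p) *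
        (b + ((C.card - s : ℕ) : ℚ)) ^ (((C.card - s : ℕ) : ℤ) - q)) := by
  unfold hzZ
  have := Finset.sum_powerset_apply_card (fun s => ((a + s) ^ ((s : ℤ) - p) *
        (b + ((C.card - s : ℕ) : ℚ)) ^ (((C.card - s : ℕ) : ℤ) - q))) (x := C)
  simp only [nsmul_eq_mul] at this
  rw [← this]
  refine Finset.sum_congr rfl fun S hS => ?_
  simp [Finset.card_sdiff_of_subset (Finset.mem_powerset.1 hS)]

lemma hz_cc (k : ℕ) :
    (k : ℚ) * ∑ ij ∈ Finset.HasAntidiagonal.antidiagonal k, hzc ij.1 * hzc ij.2 = 2 * ((k : ℚ) - 1) * hzc k := by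
  rcases k with _ | _ | k
  · simp [hzc_zero]
  · simp [Finset.Nat.antidiagonal_succ, hzc_zero]
  have h := (hz_abel (fun _ : ℕ => (1 : ℚ)) (fun _ => one_pos) (Finset.range k) 1 1 one_pos
    one_pos).1
  rw [hzZ_one] at h
  simp only [Finset.card_range, Finset.sum_const, nsmul_eq_mul, mul_one, one_mul] at h
  have h1 : ∑ ij ∈ Finset.HasAntidiagonal.antidiagonal (k + 2), hzc ij.1 * hzc ij.2 =
      ∑ s ∈ Finset.range (k + 1), hzc (s + 1) * hzc ((k - s) + 1) := by
    rw [Finset.Nat.sum_antidiagonal_eq_sum_range_succ (fun i j => hzc i * hzc j),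
      Finset.sum_range_succ, Finset.sum_range_succ']
    simp only [hzc_zero, zero_mul, Nat.sub_self, mul_zero, add_zero]
    refine Finset.sum_congr rfl fun s hs => ?_
    congr 2
    have := Finset.mem_range.1 hs
    omega
  have h2 : ∀ s ∈ Finset.range (k + 1), hzc (s + 1) * hzc ((k - s) + 1) =
      1 / (k.factorial : ℚ) * ((k.choose s : ℚ) * ((1 + (s:ℚ)) ^ ((s : ℤ) - 1) *
        (1 + ((k - s : ℕ) : ℚ)) ^ (((k - s : ℕ) : ℤ) - 1))) := by
    intro s hs
    have hs' : s ≤ k := by have := Finset.mem_range.1 hs; omega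
    have key : ∀ t : ℕ, hzc (t + 1) = (1 + (t : ℚ)) ^ ((t : ℤ) - 1) / (t.factorial : ℚ) := by
      intro t
      unfold hzc
      have ht : (1 + (t:ℚ)) ≠ 0 := by positivity
      have : (((t + 1 : ℕ) : ℚ)) ^ (((t + 1 : ℕ) : ℤ) - 1) =
          (1 + (t : ℚ)) ^ ((t : ℤ) - 1) * (1 + (t:ℚ)) := by
        rw [← zpow_add_one₀ ht]; push_cast; congr 1 <;> ring
      rw [this, Nat.factorial_succ]; push_cast
      have : (t.factorial : ℚ) ≠ 0 := by exact_mod_cast t.factorial_ne_zero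
      field_simp
      ring
    rw [key, key, Nat.choose_eq_factorial_div_factorial hs',
      Nat.cast_div (Nat.factorial_mul_factorial_dvd_factorial hs')
      (by exact_mod_cast (Nat.mul_ne_zero (Nat.factorial_ne_zero _) (Nat.factorial_ne_zero _)))]
    have a1 : (s.factorial : ℚ) ≠ 0 := by exact_mod_cast s.factorial_ne_zero
    have a2 : ((k-s).factorial : ℚ) ≠ 0 := by exact_mod_cast (k-s).factorial_ne_zero
    have a3 : (k.factorial : ℚ) ≠ 0 := by exact_mod_cast k.factorial_ne_zero
    push_cast
    field_simp
  rw [h1, Finset.sum_congr rfl h2, ← Finset.mul_sum, h]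
  unfold hzc
  have hk : (1 + 1 + (k:ℚ)) ≠ 0 := by positivity
  have : (((k + 1 + 1 : ℕ) : ℚ)) ^ (((k + 1 + 1 : ℕ) : ℤ) - 1) =
      (1 + 1 + (k : ℚ)) ^ ((k : ℤ) - 1) * (1 + 1 + (k:ℚ)) * (1 + 1 + (k:ℚ)) := by
    rw [← zpow_add_one₀ hk, ← zpow_add_one₀ hk]; push_cast; congr 1 <;> ring
  rw [this, Nat.factorial_succ, Nat.factorial_succ]; push_cast
  have a3 : (k.factorial : ℚ) ≠ 0 := by exact_mod_cast k.factorial_ne_zero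
  have a4 : (k + 1 + 1 : ℚ) ≠ 0 := by positivity
  have a5 : (k + 1 : ℚ) ≠ 0 := by positivity
  field_simp
  ring

/-- `T D T = D T - T` -/
lemma hz_cbc (k : ℕ) : ∑ ij ∈ Finset.HasAntidiagonal.antidiagonal k, hzc ij.1 * (ij.2 * hzc ij.2) =
    ((k : ℚ) - 1) * hzc k := by
  have h1 : ∑ ij ∈ Finset.HasAntidiagonal.antidiagonal k, hzc ij.1 * (ij.2 * hzc ij.2) =
      ∑ ij ∈ Finset.HasAntidiagonal.antidiagonal k, hzc ij.2 * (ij.1 * hzc ij.1) := by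
    rw [← Finset.Nat.sum_antidiagonal_swap]; rfl
  have h2 : ∑ ij ∈ Finset.HasAntidiagonal.antidiagonal k, hzc ij.1 * (ij.2 * hzc ij.2) +
      ∑ ij ∈ Finset.HasAntidiagonal.antidiagonal k, hzc ij.2 * (ij.1 * hzc ij.1) =
      (k : ℚ) * ∑ ij ∈ Finset.HasAntidiagonal.antidiagonal k, hzc ij.1 * hzc ij.2 := by
    rw [← Finset.sum_add_distrib, Finset.mul_sum]
    refine Finset.sum_congr rfl fun ij h => ?_
    rw [← Finset.HasAntidiagonal.mem_antidiagonal.1 h]; push_cast; ring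
  rw [← h1, hz_cc] at h2
  linarith

open PowerSeries in
/-- The rescaled series with rational coefficients. -/
noncomputable def hzser (f : ℕ → ℚ) (x : Polynomial ℚ) : PowerSeries (Polynomial ℚ) :=
  PowerSeries.mk fun n => Polynomial.C (f n) * x ^ n

lemma hzser_mul (f g : ℕ → ℚ) (x : Polynomial ℚ) :
    hzser f x * hzser g x =
      hzser (fun n => ∑ ij ∈ Finset.HasAntidiagonal.antidiagonal n, f ij.1 * g ij.2) x := by
  ext1 n
  simp only [hzser, PowerSeries.coeff_mul, PowerSeries.coeff_mk]
  rw [map_sum, Finset.sum_mul]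
  refine Finset.sum_congr rfl fun ij h => ?_
  rw [← Finset.HasAntidiagonal.mem_antidiagonal.1 h, pow_add, map_mul]; ring

/-- Euler operator -/
noncomputable def hzD (f : PowerSeries (Polynomial ℚ)) : PowerSeries (Polynomial ℚ) :=
  PowerSeries.X * PowerSeries.derivative (Polynomial ℚ) f

lemma hzD_coeff (f : PowerSeries (Polynomial ℚ)) (n : ℕ) :
    PowerSeries.coeff n (hzD f) = (n : Polynomial ℚ) * PowerSeries.coeff n f := by
  unfold hzD
  rcases n with _ | n
  · simp
  · rw [PowerSeries.coeff_succ_X_mul, PowerSeries.coeff_derivative]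
    push_cast; ring

lemma hzD_mul (f g : PowerSeries (Polynomial ℚ)) : hzD (f * g) = hzD f * g + f * hzD g := by
  ext1 n
  rw [map_add, hzD_coeff, PowerSeries.coeff_mul, PowerSeries.coeff_mul, PowerSeries.coeff_mul,
    Finset.mul_sum, ← Finset.sum_add_distrib]
  refine Finset.sum_congr rfl fun ij h => ?_
  rw [hzD_coeff, hzD_coeff, ← Finset.HasAntidiagonal.mem_antidiagonal.1 h]; push_cast; ring
lemma hzD_sub (f g : PowerSeries (Polynomial ℚ)) : hzD (f - g) = hzD f - hzD g := by
  unfold hzD; rw [map_sub, mul_sub]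
lemma hzD_C (c : Polynomial ℚ) : hzD (PowerSeries.C c) = 0 := by
  unfold hzD; simp
lemma hzD_one : hzD 1 = 0 := by
  unfold hzD; simp

lemma hzser_sub_one (x : Polynomial ℚ) : hzser hze x - 1 = hzser (fun n => n * hzc n) x := by
  ext1 n
  rcases n with _ | n
  · simp [hzser, hze_zero]
  · simp only [map_sub, hzser, PowerSeries.coeff_mk, PowerSeries.coeff_one]
    rw [hz_mul_hzc _ (Nat.succ_ne_zero n)]; simp

lemma hzser_D (x : Polynomial ℚ) : hzD (hzser hzc x) = hzser hze x - 1 := by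
  rw [hzser_sub_one]
  ext1 n
  rw [hzD_coeff]
  simp [hzser, mul_assoc]

lemma hzser_TE (x : Polynomial ℚ) : hzser hzc x * hzser hze x = hzser hze x - 1 := by
  have h : hzser hzc x * (hzser hze x - 1) = hzser hze x - 1 - hzser hzc x := by
    rw [hzser_sub_one, hzser_mul]
    ext1 n
    simp only [map_sub, hzser, PowerSeries.coeff_mk]
    rw [hz_cbc, ← sub_mul, ← map_sub]; congr 2; ring
  linear_combination h

/-- two-variable series -/
noncomputable def hzR (x y : Polynomial ℚ) : PowerSeries (Polynomial ℚ) :=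
  PowerSeries.mk fun n => ∑ ik ∈ Finset.HasAntidiagonal.antidiagonal n,
    Polynomial.C ((ik.2 : ℚ) * hze ik.2 * hze ik.1 / n) * x ^ ik.1 * y ^ ik.2

lemma hzR_D (x y : Polynomial ℚ) : hzD (hzR x y) = hzser hze x * hzD (hzser hze y) := by
  ext1 n
  rw [hzD_coeff, PowerSeries.coeff_mul]
  simp only [hzD_coeff, hzR, hzser, PowerSeries.coeff_mk]
  rw [Finset.mul_sum]
  refine Finset.sum_congr rfl fun ij h => ?_
  have hn : (n : Polynomial ℚ) = Polynomial.C (n : ℚ) := by simp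
  have hm : (ij.2 : Polynomial ℚ) = Polynomial.C (ij.2 : ℚ) := by simp
  rw [hn, hm]
  have : (ij.2 : ℚ) * hze ij.2 * hze ij.1 = n * ((ij.2 : ℚ) * hze ij.2 * hze ij.1 / n) := by
    rcases eq_or_ne n 0 with rfl | hn
    · simp only [Finset.Nat.antidiagonal_zero, Finset.mem_singleton] at h
      subst h; simp
    · have : (n : ℚ) ≠ 0 := by exact_mod_cast hn
      field_simp
  have h2 : Polynomial.C (ij.2 : ℚ) * Polynomial.C (hze ij.2) * Polynomial.C (hze ij.1) =
      Polynomial.C (n : ℚ) * Polynomial.C ((ij.2 : ℚ) * hze ij.2 * hze ij.1 / n) := by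
    rw [← map_mul, ← map_mul, ← map_mul, ← this]
  linear_combination (- x ^ ij.1 * y ^ ij.2) * h2

lemma hzser_DE (x : Polynomial ℚ) :
    hzD (hzser hze x) = hzser hze x ^ 2 * (hzser hze x - 1) := by
  have h1 := hzser_TE x
  have h2 := congrArg hzD h1
  rw [hzD_mul, hzser_D, hzD_sub, hzD_one] at h2
  linear_combination (hzD (hzser hze x)) * h1 - hzser hze x * h2

/-- the closed form of the two-variable series -/
lemma hzR_closed (x y : Polynomial ℚ) :
    PowerSeries.C (y - x) * (hzser hzc y - hzser hzc x) * hzR x y =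
      PowerSeries.C (y - x) * (hzser hze y - 1) -
        PowerSeries.C y * (hzser hzc y - hzser hzc x) := by
  set q := PowerSeries.C (y - x) * (hzser hzc y - hzser hzc x) * hzR x y -
      (PowerSeries.C (y - x) * (hzser hze y - 1) -
        PowerSeries.C y * (hzser hzc y - hzser hzc x)) with hq
  have hD : hzD q = hzser hze x * hzser hze y * q := by
    have tx := hzser_TE x
    have ty := hzser_TE y
    rw [hq]
    simp only [hzD_sub, hzD_mul, hzD_C, hzD_one, hzser_D, hzR_D]
    rw [hzser_DE y]
    generalize hzser hze x = ex at *
    generalize hzser hze y = ey at *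
    generalize hzser hzc x = u at *
    generalize hzser hzc y = v at *
    generalize PowerSeries.C (y - x) = d at *
    generalize PowerSeries.C y = yy at *
    generalize hzR x y = r at *
    have key : (v - u) * ex * ey - ey + ex = 0 := by linear_combination ex * ty - ey * tx
    linear_combination (d * ey * (ey - 1) - d * r - yy) * key
  have h0 : ∀ n, PowerSeries.coeff n q = 0 := by
    intro n
    induction n using Nat.strong_induction_on with
    | _ n ih =>
    rcases eq_or_ne n 1 with rfl | hn1
    · have hR0 : PowerSeries.coeff 0 (hzR x y) = 0 := by simp [hzR]
      have hR0' : PowerSeries.constantCoeff (hzR x y) = 0 := by simpa using hR0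
      have hu : ∀ x, PowerSeries.coeff 0 (hzser hzc x) = 0 := by intro x; simp [hzser, hzc_zero]
      have hu' : ∀ x, PowerSeries.constantCoeff (hzser hzc x) = 0 := by
        intro x; simpa using hu x
      have hu1 : ∀ x, PowerSeries.coeff 1 (hzser hzc x) = x := by intro x; simp [hzser, hzc_one]
      have he1 : ∀ x, PowerSeries.coeff 1 (hzser hze x) = x := by intro x; simp [hzser, hze_one]
      rw [hq]
      rw [mul_assoc, map_sub (PowerSeries.coeff 1), map_sub (PowerSeries.coeff 1), PowerSeries.coeff_C_mul, PowerSeries.coeff_C_mul,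
        PowerSeries.coeff_C_mul, PowerSeries.coeff_mul]
      simp [Finset.Nat.antidiagonal_succ, hu', hR0', hu1, he1, PowerSeries.coeff_one]
      ring
    · have h := congrArg (PowerSeries.coeff n) hD
      rw [hzD_coeff, PowerSeries.coeff_mul] at h
      have h1 : ∑ p ∈ Finset.HasAntidiagonal.antidiagonal n, PowerSeries.coeff p.1 (hzser hze x * hzser hze y) *
          PowerSeries.coeff p.2 q = PowerSeries.coeff n q := by
        rw [Finset.sum_eq_single (0, n)]
        · have : PowerSeries.coeff 0 (hzser hze x * hzser hze y) = 1 := by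
            rw [PowerSeries.coeff_mul]; simp [hzser, hze_zero]
          rw [this, one_mul]
        · rintro ⟨i, j⟩ hij hne
          have hij' := Finset.HasAntidiagonal.mem_antidiagonal.1 hij
          simp only at hij'
          have : j < n := by
            rcases Nat.eq_zero_or_pos i with rfl | hi
            · exact absurd (by simp at hij'; rw [hij']) hne
            · omega
          simp [ih j this]
        · intro h; simp at h
      rw [h1] at h
      have h2 : ((n : Polynomial ℚ) - 1) * PowerSeries.coeff n q = 0 := by linear_combination h
      rcases mul_eq_zero.1 h2 with h3 | h3
      · exfalso
        apply hn1
        have : (n : Polynomial ℚ) = ((1 : ℕ) : Polynomial ℚ) := by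
          push_cast; linear_combination h3
        exact_mod_cast this
      · exact h3
  have : q = 0 := by ext1 n; simpa using h0 n
  exact sub_eq_zero.1 this

end TreeSeries


section TreeSeries2

/-- the product generating series -/
lemma hz_W (x y : Polynomial ℚ) (hxy : x ≠ y) :
    hzR x y * (hzser hze x - 1) + hzR y x * (hzser hze y - 1) =
      PowerSeries.mk (fun n => ∑ lk ∈ Finset.HasAntidiagonal.antidiagonal n,
        if lk.1 = 0 ∨ lk.2 = 0 then 0 else Polynomial.C (hze n) * x ^ lk.1 * y ^ lk.2) := by
  have h1 := hzR_closed x y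
  have h2 := hzR_closed y x
  have hW : PowerSeries.C (y - x) * (PowerSeries.mk
      (fun n => ∑ lk ∈ Finset.HasAntidiagonal.antidiagonal n,
        if lk.1 = 0 ∨ lk.2 = 0 then 0 else Polynomial.C (hze n) * x ^ lk.1 * y ^ lk.2)) =
      PowerSeries.C x * (hzser hze y - 1) - PowerSeries.C y * (hzser hze x - 1) := by
    ext1 n
    rw [PowerSeries.coeff_C_mul, map_sub (PowerSeries.coeff n), PowerSeries.coeff_C_mul,
      PowerSeries.coeff_C_mul, PowerSeries.coeff_mk]
    rcases n with _ | _ | n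
    · simp [hzser, hze_zero]
    · simp [hzser, hze_one, Finset.Nat.antidiagonal_succ, PowerSeries.coeff_one]; ring
    · have e1 : ∀ z, PowerSeries.coeff (n + 1 + 1) (hzser hze z - 1) =
          Polynomial.C (hze (n + 1 + 1)) * z ^ (n + 2) := by
        intro z; simp [hzser, PowerSeries.coeff_one]
      rw [e1, e1]
      have e2 : ∑ lk ∈ Finset.HasAntidiagonal.antidiagonal (n + 1 + 1),
          (if lk.1 = 0 ∨ lk.2 = 0 then 0 else
            Polynomial.C (hze (n + 1 + 1)) * x ^ lk.1 * y ^ lk.2) =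
          Polynomial.C (hze (n + 1 + 1)) * x * y * ∑ i ∈ Finset.range (n + 1), x ^ i * y ^ (n - i) := by
        rw [Finset.Nat.sum_antidiagonal_eq_sum_range_succ (fun l k => if l = 0 ∨ k = 0 then 0 else
            Polynomial.C (hze (n + 1 + 1)) * x ^ l * y ^ k),
          Finset.sum_range_succ, Finset.sum_range_succ', Finset.mul_sum]
        simp only [true_or, if_true, Nat.sub_self, or_true, add_zero]
        refine Finset.sum_congr rfl fun s hs => ?_
        have := Finset.mem_range.1 hs
        rw [if_neg (by omega), show n + 1 + 1 - (s + 1) = n - s + 1 by omega]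
        ring
      rw [e2]
      have e3 := (Commute.all x y).geom_sum₂_mul (n + 1)
      simp only [Nat.add_sub_cancel] at e3
      linear_combination (- Polynomial.C (hze (n + 1 + 1)) * x * y) * e3
  have hne : hzser hzc y - hzser hzc x ≠ 0 := by
    intro h
    have := congrArg (PowerSeries.coeff 1) h
    simp [hzser, hzc_one] at this
    exact hxy (sub_eq_zero.1 this).symm
  have hne2 : PowerSeries.C (y - x) ≠ 0 := by
    intro h
    have := congrArg (PowerSeries.coeff 0) h
    rw [PowerSeries.coeff_C] at this
    simp at this
    exact hxy (sub_eq_zero.1 this).symm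
  refine mul_left_cancel₀ hne2 (mul_left_cancel₀ hne ?_)
  rw [hW]
  have e : PowerSeries.C (x - y) = - PowerSeries.C (y - x) := by rw [← map_neg]; congr 1; ring
  rw [e] at h2
  linear_combination (hzser hze x - 1) * h1 + (hzser hze y - 1) * h2

/-- coefficient extraction -/
lemma hz_coeff_aux (N l : ℕ) (hl : l ≤ N) (f : ℕ → ℕ → ℕ → ℚ) :
    ∑ pq ∈ Finset.HasAntidiagonal.antidiagonal N,
      ∑ ik ∈ Finset.HasAntidiagonal.antidiagonal pq.1,
        (if l = ik.1 + pq.2 then f ik.1 ik.2 pq.2 else 0) =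
    ∑ iq ∈ Finset.HasAntidiagonal.antidiagonal l, f iq.1 (N - l) iq.2 := by
  have h1 : ∀ pq ∈ Finset.HasAntidiagonal.antidiagonal N,
      ∑ ik ∈ Finset.HasAntidiagonal.antidiagonal pq.1,
        (if l = ik.1 + pq.2 then f ik.1 ik.2 pq.2 else 0) =
      if pq.2 ≤ l then f (l - pq.2) (N - l) pq.2 else 0 := by
    rintro ⟨p, q⟩ hpq
    have hpq' := Finset.HasAntidiagonal.mem_antidiagonal.1 hpq
    simp only at hpq' ⊢
    split_ifs with hq
    · rw [Finset.sum_eq_single (l - q, N - l)]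
      · rw [if_pos (by simp only; omega)]
      · rintro ⟨i, k⟩ hik hne
        have hik' := Finset.HasAntidiagonal.mem_antidiagonal.1 hik
        simp only at hik' ⊢
        rw [if_neg]
        intro h
        apply hne
        ext <;> simp only <;> omega
      · intro h
        exact absurd (Finset.HasAntidiagonal.mem_antidiagonal.2 (by simp only; omega)) h
    · refine Finset.sum_eq_zero fun ik _ => if_neg (by omega)
  rw [Finset.sum_congr rfl h1, ← Finset.sum_filter]
  refine Finset.sum_bij' (fun pq _ => (l - pq.2, pq.2)) (fun iq _ => (N - iq.2, iq.2)) ?_ ?_ ?_ ?_ ?_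
  · rintro ⟨p, q⟩ h
    simp only [Finset.mem_filter, Finset.HasAntidiagonal.mem_antidiagonal] at h ⊢; omega
  · rintro ⟨p, q⟩ h
    simp only [Finset.mem_filter, Finset.HasAntidiagonal.mem_antidiagonal] at h ⊢; omega
  · rintro ⟨p, q⟩ h
    simp only [Finset.mem_filter, Finset.HasAntidiagonal.mem_antidiagonal] at h
    ext <;> simp only; omega
  · rintro ⟨p, q⟩ h
    simp only [Finset.HasAntidiagonal.mem_antidiagonal] at h
    ext <;> simp only; omega
  · rintro ⟨p, q⟩ h; rfl

lemma hz_pair (k l : ℕ) (hk : k ≠ 0) (hl : l ≠ 0) :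
    ∑ iq ∈ Finset.HasAntidiagonal.antidiagonal l,
      (k : ℚ) * hze k * hze iq.1 * (iq.2 * hzc iq.2) / (iq.1 + k : ℚ) +
    ∑ iq ∈ Finset.HasAntidiagonal.antidiagonal k,
      (l : ℚ) * hze l * hze iq.1 * (iq.2 * hzc iq.2) / (iq.1 + l : ℚ) = hze (k + l) := by
  have h := hz_W Polynomial.X 1 (by
    intro h
    have := congrArg (Polynomial.coeff · 1) h
    simp [Polynomial.coeff_one] at this)
  rw [hzser_sub_one, hzser_sub_one] at h
  have h := congrArg (fun w => Polynomial.coeff (PowerSeries.coeff (k + l) w) l) h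
  simp only [map_add, PowerSeries.coeff_mul, hzR, hzser, PowerSeries.coeff_mk,
    one_pow, mul_one, Polynomial.coeff_add, Polynomial.finsetSum_coeff, Finset.sum_mul] at h
  have h3 : ∑ b ∈ Finset.HasAntidiagonal.antidiagonal (k + l),
      (if b.1 = 0 ∨ b.2 = 0 then (0 : Polynomial ℚ) else
        Polynomial.C (hze (k + l)) * Polynomial.X ^ b.1).coeff l = hze (k + l) := by
    rw [Finset.sum_eq_single (l, k)]
    · rw [if_neg (by simp [hk, hl])]; simp
    · rintro ⟨i, j⟩ hij hne
      split_ifs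
      · simp
      · rw [Polynomial.coeff_C_mul_X_pow, if_neg]
        rintro rfl
        apply hne
        have := Finset.HasAntidiagonal.mem_antidiagonal.1 hij
        ext <;> simp only at * ; omega
    · intro h; exact absurd (Finset.HasAntidiagonal.mem_antidiagonal.2 (by simp only; omega)) h
  rw [h3] at h
  rw [← h]
  congr 1
  · have := hz_coeff_aux (k + l) l (by omega) (fun i k q =>
      (k : ℚ) * hze k * hze i * (q * hzc q) / (i + k : ℚ))
    rw [Nat.add_sub_cancel] at this
    rw [← this]
    refine Finset.sum_congr rfl fun pq _ => Finset.sum_congr rfl fun ik hik => ?_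
    have e : Polynomial.C ((ik.2 : ℚ) * hze ik.2 * hze ik.1 / pq.1) * Polynomial.X ^ ik.1 *
        (Polynomial.C (pq.2 * hzc pq.2) * Polynomial.X ^ pq.2) =
        Polynomial.C ((ik.2 : ℚ) * hze ik.2 * hze ik.1 / pq.1 * (pq.2 * hzc pq.2)) *
          Polynomial.X ^ (ik.1 + pq.2) := by rw [pow_add, Polynomial.C_mul (a := _ / _)]; ring
    rw [e, Polynomial.coeff_C_mul_X_pow, ← Finset.HasAntidiagonal.mem_antidiagonal.1 hik]
    refine if_congr Iff.rfl ?_ rfl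
    push_cast; ring
  · have := hz_coeff_aux (k + l) k (by omega) (fun i k q =>
      (k : ℚ) * hze k * hze i * (q * hzc q) / (i + k : ℚ))
    rw [Nat.add_sub_cancel_left] at this
    rw [← this]
    refine Finset.sum_congr rfl fun pq hpq => Finset.sum_congr rfl fun ik hik => ?_
    have e : Polynomial.C ((ik.2 : ℚ) * hze ik.2 * hze ik.1 / pq.1) * Polynomial.X ^ ik.2 *
        (Polynomial.C (pq.2 * hzc pq.2)) =
        Polynomial.C ((ik.2 : ℚ) * hze ik.2 * hze ik.1 / pq.1 * (pq.2 * hzc pq.2)) *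
          Polynomial.X ^ (ik.2) := by rw [Polynomial.C_mul (a := _ / _)]; ring
    rw [e, Polynomial.coeff_C_mul_X_pow]
    have h1 := Finset.HasAntidiagonal.mem_antidiagonal.1 hik
    have h2 := Finset.HasAntidiagonal.mem_antidiagonal.1 hpq
    rw [← h1]
    refine if_congr (by omega) ?_ rfl
    push_cast; ring

end TreeSeries2


section CutJoin

lemma hze_pos (k : ℕ) (hk : k ≠ 0) : 0 < hze k := by
  have : 0 < (k : ℚ) := by exact_mod_cast Nat.pos_of_ne_zero hk
  unfold hze; positivity

lemma hzphi_zero : hzphi 0 = 0 := by simp [hzphi]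

noncomputable def hzM (k l : ℕ) : ℚ := ∑ ij ∈ Finset.HasAntidiagonal.antidiagonal k,
  ((ij.1 : ℚ) * hzc ij.1) * (ij.2 * hzc ij.2) / (ij.1 + l : ℚ)

lemma hzM_aux (k l : ℕ) (hl : l ≠ 0) (hk : k ≠ 0) :
    ∑ iq ∈ Finset.HasAntidiagonal.antidiagonal k,
      (l : ℚ) * hze l * hze iq.1 * (iq.2 * hzc iq.2) / (iq.1 + l : ℚ) =
    l * hze l * hzM k l + hze k * hze l := by
  obtain ⟨k, rfl⟩ := Nat.exists_eq_succ_of_ne_zero hk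
  unfold hzM
  rw [Finset.Nat.sum_antidiagonal_succ, Finset.Nat.sum_antidiagonal_succ]
  have hl' : (l : ℚ) ≠ 0 := by exact_mod_cast hl
  rw [← hz_mul_hzc (k + 1) (by omega), mul_add, Finset.mul_sum, hze_zero]
  have : ∑ x ∈ Finset.HasAntidiagonal.antidiagonal k,
      (l : ℚ) * hze l * hze (x.1 + 1) * (x.2 * hzc x.2) / (((x.1 + 1 : ℕ) : ℚ) + l) =
      ∑ x ∈ Finset.HasAntidiagonal.antidiagonal k, (l : ℚ) * hze l *
        ((((x.1 + 1 : ℕ) : ℚ) * hzc (x.1 + 1)) * (x.2 * hzc x.2) / (((x.1 + 1 : ℕ) : ℚ) + l)) := by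
    refine Finset.sum_congr rfl fun x _ => ?_
    rw [← hz_mul_hzc (x.1 + 1) (by omega)]; ring
  rw [this]
  push_cast
  field_simp
  ring

lemma hzM_pair (k l : ℕ) (hk : k ≠ 0) (hl : l ≠ 0) :
    k * hze k * hzM l k + l * hze l * hzM k l + 2 * (hze k * hze l) = hze (k + l) := by
  rw [← hz_pair k l hk hl, hzM_aux k l hl hk, hzM_aux l k hk hl]; ring

variable {ι : Type*} [DecidableEq ι]

lemma hz_cut_single (lam : ι → ℕ) (hlam : ∀ i, lam i ≠ 0) (C : Finset ι) (k : ℕ) (hk : k ≠ 0) :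
    ((k : ℚ) + ∑ i ∈ C, (lam i : ℚ)) * ∑ ab ∈ Finset.HasAntidiagonal.antidiagonal k,
      hzphi ab.1 * hzphi ab.2 / hzphi k * hzZ (fun i => (lam i : ℚ)) 2 2 C ab.1 ab.2 =
    2 * (((k : ℚ) - 1) / k * ((k : ℚ) + ∑ i ∈ C, (lam i : ℚ)) ^ ((C.card : ℤ) - 1) -
      ∑ j ∈ C, (k + lam j : ℚ) / (k * hze k * hze (lam j)) * (lam j * hze (lam j)) * hzM k (lam j) *
        ((k : ℚ) + ∑ i ∈ C, (lam i : ℚ)) ^ ((C.card : ℤ) - 2)) := by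
  have hx : ∀ i, 0 < ((lam i : ℕ) : ℚ) := fun i => by exact_mod_cast Nat.pos_of_ne_zero (hlam i)
  have hkp : 0 < (k : ℚ) := by exact_mod_cast Nat.pos_of_ne_zero hk
  have hek := hze_pos k hk
  set N := (k : ℚ) + ∑ i ∈ C, (lam i : ℚ) with hN
  -- symmetrise
  have s1 : N * ∑ ab ∈ Finset.HasAntidiagonal.antidiagonal k,
      hzphi ab.1 * hzphi ab.2 / hzphi k * hzZ (fun i => (lam i : ℚ)) 2 2 C ab.1 ab.2 =
      ∑ ab ∈ Finset.HasAntidiagonal.antidiagonal k,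
      hzphi ab.1 * hzphi ab.2 / hzphi k * hzZ (fun i => (lam i : ℚ)) 1 2 C ab.1 ab.2 +
      ∑ ab ∈ Finset.HasAntidiagonal.antidiagonal k,
      hzphi ab.1 * hzphi ab.2 / hzphi k * hzZ (fun i => (lam i : ℚ)) 2 1 C ab.1 ab.2 := by
    rw [Finset.mul_sum, ← Finset.sum_add_distrib]
    refine Finset.sum_congr rfl fun ab h => ?_
    have hab := Finset.HasAntidiagonal.mem_antidiagonal.1 h
    rcases eq_or_ne ab.1 0 with h0 | h0
    · rw [h0]; simp [hzphi_zero]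
    rcases eq_or_ne ab.2 0 with h1 | h1
    · rw [h1]; simp [hzphi_zero]
    have := hzZ_total (fun i => (lam i : ℚ)) hx 1 1 C ab.1 ab.2
      (by exact_mod_cast Nat.pos_of_ne_zero h0) (by exact_mod_cast Nat.pos_of_ne_zero h1)
    have e : (ab.1 : ℚ) + ab.2 + ∑ i ∈ C, (lam i : ℚ) = N := by rw [hN, ← hab]; push_cast; ring
    rw [e, show (1 : ℤ) + 1 = 2 by norm_num] at this
    rw [← mul_add, ← this]; ring
  have s2 : ∑ ab ∈ Finset.HasAntidiagonal.antidiagonal k,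
      hzphi ab.1 * hzphi ab.2 / hzphi k * hzZ (fun i => (lam i : ℚ)) 1 2 C ab.1 ab.2 =
      ∑ ab ∈ Finset.HasAntidiagonal.antidiagonal k,
      hzphi ab.1 * hzphi ab.2 / hzphi k * hzZ (fun i => (lam i : ℚ)) 2 1 C ab.1 ab.2 := by
    rw [← Finset.Nat.sum_antidiagonal_swap]
    refine Finset.sum_congr rfl fun ab h => ?_
    simp only [Prod.fst_swap, Prod.snd_swap]
    rw [hzZ_symm, mul_comm (hzphi ab.2)]
  rw [s1, s2, ← two_mul]
  congr 1
  have s3 : ∀ ab ∈ Finset.HasAntidiagonal.antidiagonal k,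
      hzphi ab.1 * hzphi ab.2 / hzphi k * hzZ (fun i => (lam i : ℚ)) 2 1 C ab.1 ab.2 =
      hzc ab.1 * (ab.2 * hzc ab.2) * (1 / hze k) * N ^ ((C.card : ℤ) - 1) -
      ∑ j ∈ C, (ab.1 * hzc ab.1) * (ab.2 * hzc ab.2) / (ab.1 + lam j : ℚ) *
        ((lam j * (k + lam j : ℚ)) / (k * hze k) * N ^ ((C.card : ℤ) - 2)) := by
    intro ab h
    have hab := Finset.HasAntidiagonal.mem_antidiagonal.1 h
    rcases eq_or_ne ab.1 0 with h0 | h0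
    · rw [h0]; simp [hzphi_zero, hzc_zero]
    rcases eq_or_ne ab.2 0 with h1 | h1
    · rw [h1]; simp [hzphi_zero, hzc_zero]
    have ha : 0 < (ab.1 : ℚ) := by exact_mod_cast Nat.pos_of_ne_zero h0
    have hb : 0 < (ab.2 : ℚ) := by exact_mod_cast Nat.pos_of_ne_zero h1
    have e : (ab.1 : ℚ) + ab.2 + ∑ i ∈ C, (lam i : ℚ) = N := by rw [hN, ← hab]; push_cast; ring
    have e2 : (ab.1 : ℚ) + ab.2 = k := by rw [← hab]; push_cast; ring
    rw [hz_Q _ hx C _ _ ha hb, e, e2, mul_sub, Finset.mul_sum, hzphi_eq, hzphi_eq, hzphi_eq,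
      ← hz_mul_hzc ab.1 h0, ← hz_mul_hzc ab.2 h1]
    congr 1
    · field_simp
    · refine Finset.sum_congr rfl fun j _ => ?_
      have := hx j
      field_simp
  rw [Finset.sum_congr rfl s3, Finset.sum_sub_distrib, ← Finset.sum_mul, ← Finset.sum_mul, hz_cbc,
    Finset.sum_comm]
  congr 1
  · rw [← hz_mul_hzc k hk] at hek ⊢
    have : 0 < hzc k := by
      rcases (mul_pos_iff_of_pos_left hkp).1 hek with h
      exact h
    field_simp
  · refine Finset.sum_congr rfl fun j _ => ?_
    rw [← Finset.sum_mul]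
    have := hze_pos (lam j) (hlam j)
    unfold hzM
    field_simp

/-- the numerical cut-and-join identity -/
lemma hz_cutjoin (lam : ι → ℕ) (hlam : ∀ i, lam i ≠ 0) (C : Finset ι) (hC : C.Nonempty) (n : ℚ)
    (hn : n = ∑ i ∈ C, (lam i : ℚ)) :
    ∑ c ∈ C, ∑ d ∈ C.erase c, (lam c : ℚ) * lam d *
      (hzphi (lam c + lam d) / (hzphi (lam c) * hzphi (lam d)) * n ^ ((C.card : ℤ) - 4)) +
    ∑ c ∈ C, (lam c : ℚ) * ∑ ab ∈ Finset.HasAntidiagonal.antidiagonal (lam c),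
      hzphi ab.1 * hzphi ab.2 / hzphi (lam c) *
        hzZ (fun i => (lam i : ℚ)) 2 2 (C.erase c) ab.1 ab.2 =
    2 * (n + C.card - 2) * n ^ ((C.card : ℤ) - 3) := by
  have hx : ∀ i, 0 < ((lam i : ℕ) : ℚ) := fun i => by exact_mod_cast Nat.pos_of_ne_zero (hlam i)
  have hnp : 0 < n := by rw [hn]; exact Finset.sum_pos (fun i _ => hx i) hC
  apply mul_left_cancel₀ hnp.ne'
  rw [mul_add, Finset.mul_sum, Finset.mul_sum]
  have z1 : n * n ^ ((C.card : ℤ) - 4) = n ^ ((C.card : ℤ) - 3) := by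
    rw [mul_comm, ← zpow_add_one₀ hnp.ne']; congr 1; ring
  have z2 : n * n ^ ((C.card : ℤ) - 3) = n ^ ((C.card : ℤ) - 2) := by
    rw [mul_comm, ← zpow_add_one₀ hnp.ne']; congr 1; ring
  have c1 : ∀ c ∈ C, n * ((lam c : ℚ) * ∑ ab ∈ Finset.HasAntidiagonal.antidiagonal (lam c),
      hzphi ab.1 * hzphi ab.2 / hzphi (lam c) *
        hzZ (fun i => (lam i : ℚ)) 2 2 (C.erase c) ab.1 ab.2) =
      2 * ((lam c : ℚ) - 1) * n ^ ((C.card : ℤ) - 2) -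
      ∑ d ∈ C.erase c, 2 * ((lam c + lam d : ℚ) / (hze (lam c) * hze (lam d)) *
        (lam d * hze (lam d)) * hzM (lam c) (lam d) * n ^ ((C.card : ℤ) - 3)) := by
    intro c hc
    have h := hz_cut_single lam hlam (C.erase c) (lam c) (hlam c)
    rw [Finset.add_sum_erase C (fun i => (lam i : ℚ)) hc, ← hn, Finset.card_erase_of_mem hc,
      Nat.cast_sub (Finset.card_pos.2 ⟨c, hc⟩)] at h
    have e1 : (C.card : ℤ) - (1 : ℕ) - 1 = (C.card : ℤ) - 2 := by push_cast; ring
    have e2 : (C.card : ℤ) - (1 : ℕ) - 2 = (C.card : ℤ) - 3 := by push_cast; ring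
    rw [e1, e2] at h
    have := hx c
    have := hze_pos _ (hlam c)
    rw [mul_left_comm, h, mul_left_comm, mul_sub, mul_sub, Finset.mul_sum, Finset.mul_sum]
    congr 1
    · field_simp
    · refine Finset.sum_congr rfl fun d _ => ?_
      have := hze_pos _ (hlam d)
      field_simp
  rw [Finset.sum_congr rfl c1, Finset.sum_sub_distrib]
  have j1 : ∀ c ∈ C, n * ∑ d ∈ C.erase c, (lam c : ℚ) * lam d *
      (hzphi (lam c + lam d) / (hzphi (lam c) * hzphi (lam d)) * n ^ ((C.card : ℤ) - 4)) =
      ∑ d ∈ C.erase c, (lam c + lam d : ℚ) / (hze (lam c) * hze (lam d)) * hze (lam c + lam d) *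
        n ^ ((C.card : ℤ) - 3) := by
    intro c _
    rw [Finset.mul_sum]
    refine Finset.sum_congr rfl fun d _ => ?_
    rw [← z1, hzphi_eq, hzphi_eq, hzphi_eq]
    have := hx c
    have := hx d
    have := hze_pos _ (hlam c)
    have := hze_pos _ (hlam d)
    push_cast
    field_simp
  rw [Finset.sum_congr rfl j1]
  set f : ι → ι → ℚ := fun c d => (lam c + lam d : ℚ) / (hze (lam c) * hze (lam d)) *
    (hze (lam c + lam d) - 2 * (lam d * hze (lam d)) * hzM (lam c) (lam d)) *
      n ^ ((C.card : ℤ) - 3) with hf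
  have f1 : ∀ c d, f c d + f d c = 4 * (lam c + lam d : ℚ) * n ^ ((C.card : ℤ) - 3) := by
    intro c d
    have h := hzM_pair (lam c) (lam d) (hlam c) (hlam d)
    have := hze_pos _ (hlam c)
    have := hze_pos _ (hlam d)
    rw [hf]
    simp only [add_comm (lam d) (lam c)]
    rw [← h]
    field_simp
    ring
  have f2 : ∑ c ∈ C, ∑ d ∈ C.erase c, f c d = ∑ c ∈ C, ∑ d ∈ C.erase c, f d c := by
    refine Finset.sum_comm' ?_
    intro c d
    simp only [Finset.mem_erase]
    tauto
  have f3 : ∑ c ∈ C, ∑ d ∈ C.erase c, (f c d + f d c) =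
      8 * ((C.card : ℚ) - 1) * n * n ^ ((C.card : ℤ) - 3) := by
    simp only [f1]
    have g1 : ∀ c ∈ C, ∑ d ∈ C.erase c, 4 * (lam c + lam d : ℚ) * n ^ ((C.card : ℤ) - 3) =
        4 * (((C.card : ℚ) - 2) * lam c + n) * n ^ ((C.card : ℤ) - 3) := by
      intro c hc
      rw [← Finset.sum_mul, ← Finset.mul_sum, Finset.sum_add_distrib, Finset.sum_const,
        Finset.card_erase_of_mem hc, nsmul_eq_mul, Nat.cast_sub (Finset.card_pos.2 ⟨c, hc⟩),
        Finset.sum_erase_eq_sub hc, ← hn]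
      push_cast; ring
    rw [Finset.sum_congr rfl g1, ← Finset.sum_mul, ← Finset.mul_sum, Finset.sum_add_distrib,
      ← Finset.mul_sum, ← hn, Finset.sum_const, nsmul_eq_mul]
    ring
  have f4 : ∑ c ∈ C, ∑ d ∈ C.erase c, f c d = 4 * ((C.card : ℚ) - 1) * n ^ ((C.card : ℤ) - 2) := by
    simp only [Finset.sum_add_distrib] at f3
    rw [← f2] at f3
    rw [← z2]
    linarith
  have f5 : ∑ c ∈ C, ∑ d ∈ C.erase c, f c d =
      ∑ c ∈ C, ∑ d ∈ C.erase c, (lam c + lam d : ℚ) / (hze (lam c) * hze (lam d)) *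
        hze (lam c + lam d) * n ^ ((C.card : ℤ) - 3) -
      ∑ c ∈ C, ∑ d ∈ C.erase c, 2 * ((lam c + lam d : ℚ) / (hze (lam c) * hze (lam d)) *
        (lam d * hze (lam d)) * hzM (lam c) (lam d) * n ^ ((C.card : ℤ) - 3)) := by
    rw [← Finset.sum_sub_distrib]
    refine Finset.sum_congr rfl fun c _ => ?_
    rw [← Finset.sum_sub_distrib]
    refine Finset.sum_congr rfl fun d _ => ?_
    rw [hf]; ring
  have f6 : ∑ c ∈ C, 2 * ((lam c : ℚ) - 1) * n ^ ((C.card : ℤ) - 2) =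
      2 * (n - C.card) * n ^ ((C.card : ℤ) - 2) := by
    rw [← Finset.sum_mul, ← Finset.mul_sum, Finset.sum_sub_distrib, ← hn]; simp
  rw [f6]
  rw [mul_left_comm, z2]
  linear_combination f4 - f5

end CutJoin


section setoids
variable {α : Type*} [Fintype α] [DecidableEq α]

open Classical in
/-- class of `x` as a finset -/
noncomputable def hcls (π : Setoid α) (x : α) : Finset α := Finset.univ.filter (fun z => π x z)

/-- the set of classes -/
noncomputable def hblocks (π : Setoid α) : Finset (Finset α) := Finset.univ.image (hcls π)

/-- join the classes of `x` and `y` -/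
def hjn (π : Setoid α) (x y : α) : Setoid α where
  r a b := π a b ∨ ((π a x ∨ π a y) ∧ (π b x ∨ π b y))
  iseqv := by
    have hs : ∀ {a b}, π a b → π b a := fun h => π.symm' h
    have ht : ∀ {a b c}, π a b → π b c → π a c := fun h h' => π.trans' h h'
    refine ⟨fun a => Or.inl (π.refl' a), ?_, ?_⟩
    · rintro a b (h | ⟨h, h'⟩)
      · exact Or.inl (hs h)
      · exact Or.inr ⟨h', h⟩
    · rintro a b c (h | ⟨h1, h2⟩) (h' | ⟨h3, h4⟩)
      · exact Or.inl (ht h h')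
      · exact Or.inr ⟨h3.imp (ht h) (ht h), h4⟩
      · exact Or.inr ⟨h1, h2.imp (ht (hs h')) (ht (hs h'))⟩
      · exact Or.inr ⟨h1, h4⟩

theorem hjn_iff (π : Setoid α) (x y a b : α) :
    hjn π x y a b ↔ (π a b ∨ ((π a x ∨ π a y) ∧ (π b x ∨ π b y))) := Iff.rfl

theorem hmem_cls (π : Setoid α) (x z : α) : z ∈ hcls π x ↔ π x z := by simp [hcls]

theorem hself_cls (π : Setoid α) (x : α) : x ∈ hcls π x := by
  rw [hmem_cls]

theorem hcls_eq_iff (π : Setoid α) (x z : α) : hcls π x = hcls π z ↔ π x z := by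
  constructor
  · intro h
    rw [← hmem_cls, h]; exact hself_cls π z
  · intro h
    ext w
    simp only [hmem_cls]
    exact ⟨fun h' => π.trans' (π.symm' h) h', fun h' => π.trans' h h'⟩

theorem hcls_mem (π : Setoid α) (x : α) : hcls π x ∈ hblocks π := by simp [hblocks]

theorem hmem_blocks (π : Setoid α) (c : Finset α) : c ∈ hblocks π ↔ ∃ x, hcls π x = c := by
  simp [hblocks]

theorem hblock_eq (π : Setoid α) {c : Finset α} (hc : c ∈ hblocks π) {x : α} (hx : x ∈ c) :
    hcls π x = c := by
  obtain ⟨z, rfl⟩ := (hmem_blocks π c).1 hc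
  rw [hmem_cls] at hx
  exact (hcls_eq_iff π x z).2 (π.symm' hx)

theorem hblock_nonempty (π : Setoid α) {c : Finset α} (hc : c ∈ hblocks π) : c.Nonempty := by
  obtain ⟨z, rfl⟩ := (hmem_blocks π c).1 hc
  exact ⟨z, hself_cls π z⟩

theorem hcls_sub {ρ π : Setoid α} (h : ρ ≤ π) (x : α) : hcls ρ x ⊆ hcls π x := by
  intro z hz
  rw [hmem_cls] at *
  exact h hz

theorem hle_jn (π : Setoid α) (x y : α) : π ≤ hjn π x y := fun {_ _} h => Or.inl h

theorem hjn_xy (π : Setoid α) (x y : α) : hjn π x y x y :=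
  Or.inr ⟨Or.inl (π.refl' x), Or.inr (π.refl' y)⟩

theorem hjn_le {ρ π : Setoid α} (h : ρ ≤ π) {x y : α} (hxy : π x y) : hjn ρ x y ≤ π := by
  intro a b hab
  rcases hab with hab | ⟨h1, h2⟩
  · exact h hab
  · have h1' : π a x := h1.elim (fun h' => h h') (fun h' => π.trans' (h h') (π.symm' hxy))
    have h2' : π b x := h2.elim (fun h' => h h') (fun h' => π.trans' (h h') (π.symm' hxy))
    exact π.trans' h1' (π.symm' h2')

theorem hjn_eq_self {π : Setoid α} {x y : α} (hxy : π x y) : hjn π x y = π :=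
  le_antisymm (hjn_le le_rfl hxy) (hle_jn π x y)

theorem hjn_mono {ρ π : Setoid α} (h : ρ ≤ π) (x y : α) : hjn ρ x y ≤ hjn π x y :=
  hjn_le (h.trans (hle_jn π x y)) (hjn_xy π x y)

theorem hjn_cls_x (ρ : Setoid α) (x y : α) : hcls (hjn ρ x y) x = hcls ρ x ∪ hcls ρ y := by
  ext z
  simp only [Finset.mem_union, hmem_cls, hjn_iff]
  have hs : ∀ {a b}, ρ a b → ρ b a := fun h => ρ.symm' h
  have hr := ρ.refl' x
  constructor
  · rintro (h | ⟨-, h | h⟩)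
    · exact Or.inl h
    · exact Or.inl (hs h)
    · exact Or.inr (hs h)
  · rintro (h | h)
    · exact Or.inl h
    · exact Or.inr ⟨Or.inl hr, Or.inr (hs h)⟩

theorem hjn_cls_ne (ρ : Setoid α) (x y a : α) (hx : ¬ ρ a x) (hy : ¬ ρ a y) :
    hcls (hjn ρ x y) a = hcls ρ a := by
  ext z
  simp only [hmem_cls, hjn_iff]
  tauto

theorem hblocks_jn (ρ : Setoid α) (x y : α) :
    hblocks (hjn ρ x y) =
      insert (hcls ρ x ∪ hcls ρ y) (((hblocks ρ).erase (hcls ρ x)).erase (hcls ρ y)) := by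
  ext c
  simp only [Finset.mem_insert, Finset.mem_erase, hmem_blocks]
  have hs : ∀ {a b}, ρ a b → ρ b a := fun h => ρ.symm' h
  constructor
  · rintro ⟨a, rfl⟩
    by_cases h : ρ a x ∨ ρ a y
    · left
      rw [← hjn_cls_x, hcls_eq_iff]
      exact Or.inr ⟨h, Or.inl (ρ.refl' x)⟩
    · push Not at h
      right
      rw [hjn_cls_ne ρ x y a h.1 h.2]
      simp only [ne_eq, hcls_eq_iff]
      exact ⟨h.2, h.1, a, ρ.refl' a⟩
  · rintro (rfl | ⟨h1, h2, a, rfl⟩)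
    · exact ⟨x, hjn_cls_x ρ x y⟩
    · simp only [ne_eq, hcls_eq_iff] at h1 h2
      exact ⟨a, hjn_cls_ne ρ x y a h2 h1⟩

theorem hunion_notMem (ρ : Setoid α) (x y : α) (h : ¬ ρ x y) :
    hcls ρ x ∪ hcls ρ y ∉ hblocks ρ := by
  intro hc
  have h1 := hblock_eq ρ hc (Finset.mem_union_left _ (hself_cls ρ x))
  have h2 := hblock_eq ρ hc (Finset.mem_union_right _ (hself_cls ρ y))
  exact h ((hcls_eq_iff ρ x y).1 (h1.trans h2.symm))

theorem hprod_jn (ρ : Setoid α) (x y : α) (h : ¬ ρ x y) (f : Finset α → ℚ) :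
    (∏ c ∈ hblocks (hjn ρ x y), f c) * (f (hcls ρ x) * f (hcls ρ y)) =
      (∏ c ∈ hblocks ρ, f c) * f (hcls ρ x ∪ hcls ρ y) := by
  have hne : hcls ρ y ≠ hcls ρ x := fun h' => h (ρ.symm' ((hcls_eq_iff ρ y x).1 h'))
  rw [hblocks_jn, Finset.prod_insert, ← Finset.mul_prod_erase (hblocks ρ) f (hcls_mem ρ x),
    ← Finset.mul_prod_erase ((hblocks ρ).erase (hcls ρ x)) f
      (Finset.mem_erase.2 ⟨hne, hcls_mem ρ y⟩)]
  · ring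
  · simp only [Finset.mem_erase, not_and]
    intro _ _ h'
    exact hunion_notMem ρ x y h h'

theorem hcard_jn (ρ : Setoid α) (x y : α) (h : ¬ ρ x y) :
    (hblocks (hjn ρ x y)).card + 1 = (hblocks ρ).card := by
  have hne : hcls ρ y ≠ hcls ρ x := fun h' => h (ρ.symm' ((hcls_eq_iff ρ y x).1 h'))
  rw [hblocks_jn, Finset.card_insert_of_notMem, Finset.card_erase_of_mem,
    Finset.card_erase_of_mem (hcls_mem ρ x)]
  · have h2 : 1 < (hblocks ρ).card := Finset.one_lt_card.2 ⟨_, hcls_mem ρ y, _, hcls_mem ρ x, hne⟩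
    omega
  · exact Finset.mem_erase.2 ⟨hne, hcls_mem ρ y⟩
  · simp only [Finset.mem_erase, not_and]
    intro _ _ h'
    exact hunion_notMem ρ x y h h'

theorem hcls_disj (ρ : Setoid α) (x y : α) (h : ¬ ρ x y) : Disjoint (hcls ρ x) (hcls ρ y) := by
  rw [Finset.disjoint_left]
  intro a ha hb
  rw [hmem_cls] at ha hb
  exact h (ρ.trans' ha (ρ.symm' hb))

theorem hblocks_disj (ρ : Setoid α) : (hblocks ρ : Set (Finset α)).PairwiseDisjoint id := by
  intro c hc d hd hcd
  rw [Finset.mem_coe, hmem_blocks] at hc hd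
  obtain ⟨x, rfl⟩ := hc
  obtain ⟨y, rfl⟩ := hd
  exact hcls_disj ρ x y (fun h => hcd ((hcls_eq_iff ρ x y).2 h))

/-- blocks inside `B` -/
noncomputable def hbl (ρ : Setoid α) (B : Finset α) : Finset (Finset α) :=
  (hblocks ρ).filter (fun c => c ⊆ B)

theorem hmem_bl (ρ : Setoid α) (B c : Finset α) : c ∈ hbl ρ B ↔ c ∈ hblocks ρ ∧ c ⊆ B := by
  simp [hbl]

/-- `B` is a union of `ρ`-classes -/
def hsat (ρ : Setoid α) (B : Finset α) : Prop := ∀ a b, ρ a b → a ∈ B → b ∈ B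

theorem hsat_cls {ρ π : Setoid α} (h : ρ ≤ π) (x : α) : hsat ρ (hcls π x) := by
  intro a b hab ha
  rw [hmem_cls] at *
  exact π.trans' ha (h hab)

theorem hsat_block {ρ π : Setoid α} (h : ρ ≤ π) {B : Finset α} (hB : B ∈ hblocks π) : hsat ρ B := by
  obtain ⟨x, rfl⟩ := (hmem_blocks π B).1 hB
  exact hsat_cls h x

theorem hsat_sub {ρ : Setoid α} {B : Finset α} (h : hsat ρ B) {x : α} (hx : x ∈ B) :
    hcls ρ x ⊆ B := by
  intro z hz
  rw [hmem_cls] at hz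
  exact h x z hz hx

theorem hcls_mem_bl {ρ : Setoid α} {B : Finset α} (h : hsat ρ B) {x : α} (hx : x ∈ B) :
    hcls ρ x ∈ hbl ρ B := (hmem_bl ρ B _).2 ⟨hcls_mem ρ x, hsat_sub h hx⟩

theorem hsum_bl {ρ : Setoid α} {B : Finset α} (h : hsat ρ B) (f : α → ℚ) :
    ∑ c ∈ hbl ρ B, ∑ x ∈ c, f x = ∑ x ∈ B, f x := by
  have hB : B = (hbl ρ B).biUnion id := by
    ext z
    simp only [Finset.mem_biUnion, id]
    constructor
    · intro hz
      exact ⟨hcls ρ z, hcls_mem_bl h hz, hself_cls ρ z⟩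
    · rintro ⟨c, hc, hz⟩
      exact ((hmem_bl ρ B c).1 hc).2 hz
  conv_rhs => rw [hB]
  rw [Finset.sum_biUnion]
  · rfl
  · intro c hc d hd hcd
    exact hblocks_disj ρ ((hmem_bl ρ B c).1 hc).1 ((hmem_bl ρ B d).1 hd).1 hcd

theorem hbl_univ (ρ : Setoid α) : hbl ρ Finset.univ = hblocks ρ := by simp [hbl]

theorem hsum_blocks (ρ : Setoid α) (f : α → ℚ) :
    ∑ c ∈ hblocks ρ, ∑ x ∈ c, f x = ∑ x, f x := by
  rw [← hbl_univ, hsum_bl]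
  intro a b _ _; simp

theorem hcard_bl {ρ : Setoid α} {B : Finset α} (h : hsat ρ B) :
    ((B.card : ℕ) : ℚ) = ∑ c ∈ hbl ρ B, ((c.card : ℕ) : ℚ) := by
  have := hsum_bl h (fun _ => 1)
  simp only [Finset.sum_const, nsmul_eq_mul, mul_one] at this
  exact this.symm

theorem hsum_card_blocks (π : Setoid α) : ∑ B ∈ hblocks π, ((B.card : ℕ) : ℚ) = Fintype.card α := by
  have := hsum_blocks π (fun _ => 1)
  simpa using this

/-- the blocks of `ρ` are distributed among the blocks of `π` -/
theorem hsum_ell {ρ π : Setoid α} (h : ρ ≤ π) :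
    ∑ B ∈ hblocks π, (hbl ρ B).card = (hblocks ρ).card := by
  rw [← Finset.card_biUnion]
  · congr 1
    ext c
    simp only [Finset.mem_biUnion, hmem_bl]
    constructor
    · rintro ⟨B, _, hc, _⟩; exact hc
    · intro hc
      obtain ⟨x, rfl⟩ := (hmem_blocks ρ c).1 hc
      exact ⟨hcls π x, hcls_mem π x, hc, hcls_sub h x⟩
  · intro B hB B' hB' hne
    simp only [Function.onFun]
    rw [Finset.disjoint_left]
    intro c hc hc'
    rw [hmem_bl] at hc hc'
    obtain ⟨z, hz⟩ := hblock_nonempty ρ hc.1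
    exact hne ((hblock_eq π hB (hc.2 hz)).symm.trans (hblock_eq π hB' (hc'.2 hz)))

theorem hbl_pos {ρ π : Setoid α} (h : ρ ≤ π) {B : Finset α} (hB : B ∈ hblocks π) :
    0 < (hbl ρ B).card := by
  obtain ⟨x, hx⟩ := hblock_nonempty π hB
  exact Finset.card_pos.2 ⟨_, hcls_mem_bl (hsat_block h hB) hx⟩

theorem hcard_le {ρ π : Setoid α} (h : ρ ≤ π) : (hblocks π).card ≤ (hblocks ρ).card := by
  rw [← hsum_ell h, Finset.card_eq_sum_ones]
  exact Finset.sum_le_sum (fun B hB => hbl_pos h hB)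

theorem hcls_bot (x : α) : hcls (⊥ : Setoid α) x = {x} := by
  ext z; simp [hmem_cls, Setoid.bot_def, eq_comm]

theorem hblocks_bot : hblocks (⊥ : Setoid α) = Finset.univ.image (fun x => {x}) := by
  rw [hblocks]; congr 1; ext x : 1; exact hcls_bot x

theorem hcard_bot : (hblocks (⊥ : Setoid α)).card = Fintype.card α := by
  rw [hblocks_bot, Finset.card_image_of_injective _ Finset.singleton_injective, Finset.card_univ]

theorem heq_bot {π : Setoid α} (h : Fintype.card α ≤ (hblocks π).card) : π = ⊥ := by
  rw [eq_bot_iff]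
  intro a b hab
  have hinj : Set.InjOn (hcls π) (Finset.univ : Finset α) := by
    apply Finset.injOn_of_card_image_eq
    apply le_antisymm Finset.card_image_le
    simpa [hblocks] using h
  have := hinj (by simp) (by simp) ((hcls_eq_iff π a b).2 hab)
  simpa [Setoid.bot_def] using this

theorem hcls_top (x : α) : hcls (⊤ : Setoid α) x = Finset.univ := by
  ext z; simp [hmem_cls, Setoid.top_def]

theorem hblocks_top [Nonempty α] : hblocks (⊤ : Setoid α) = {Finset.univ} := by
  ext c
  rw [hmem_blocks]
  simp only [hcls_top, exists_const, Finset.mem_singleton, eq_comm]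

end setoids


section weights
variable {α : Type*} [Fintype α] [DecidableEq α]

noncomputable instance hsetoidFintype : Fintype (Setoid α) :=
  @Fintype.ofFinite _ (Finite.of_injective (fun s : Setoid α => s.r) (by
    intro s t h
    exact Setoid.ext (fun a b => by
      have := congrFun (congrFun h a) b
      exact iff_of_eq this)))

/-- weight of a block -/
noncomputable def hw (ρ : Setoid α) (B : Finset α) : ℚ := (B.card : ℚ) ^ (((hbl ρ B).card : ℤ) - 3)

noncomputable def hW (ρ π : Setoid α) : ℚ := ∏ B ∈ hblocks π, hw ρ B

noncomputable def hPhi (ρ : Setoid α) : ℚ := ∏ c ∈ hblocks ρ, hzphi c.card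

theorem hw_pos {ρ π : Setoid α} {B : Finset α} (hB : B ∈ hblocks π) : 0 < hw ρ B := by
  have : 0 < B.card := Finset.card_pos.2 (hblock_nonempty π hB)
  unfold hw
  positivity

/-- split a class along `B` -/
def hsplit (π : Setoid α) (B : Finset α) : Setoid α where
  r a b := π a b ∧ (a ∈ B ↔ b ∈ B)
  iseqv := ⟨fun a => ⟨π.refl' a, Iff.rfl⟩, fun h => ⟨π.symm' h.1, h.2.symm⟩,
    fun h h' => ⟨π.trans' h.1 h'.1, h.2.trans h'.2⟩⟩

theorem hsplit_iff (π : Setoid α) (B : Finset α) (a b : α) :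
    hsplit π B a b ↔ (π a b ∧ (a ∈ B ↔ b ∈ B)) := Iff.rfl

theorem hsplit_le (π : Setoid α) (B : Finset α) : hsplit π B ≤ π := fun {_ _} h => h.1

theorem hsplit_jn {π : Setoid α} {B : Finset α} {x y : α} (hxy : π x y) (hB : B ⊆ hcls π x)
    (hx : x ∈ B) (hy : y ∉ B) : hjn (hsplit π B) x y = π := by
  apply le_antisymm (hjn_le (hsplit_le π B) hxy)
  intro a b hab
  have key : ∀ a, π a x → hsplit π B a x ∨ hsplit π B a y := by
    intro a ha
    by_cases h : a ∈ B
    · exact Or.inl ⟨ha, by simp [h, hx]⟩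
    · exact Or.inr ⟨π.trans' ha hxy, by simp [h, hy]⟩
  by_cases h : a ∈ B ↔ b ∈ B
  · exact Or.inl ⟨hab, h⟩
  · have : π a x := by
      by_cases ha : a ∈ B
      · exact π.symm' ((hmem_cls π x a).1 (hB ha))
      · have hb : b ∈ B := by tauto
        exact π.trans' hab (π.symm' ((hmem_cls π x b).1 (hB hb)))
    exact Or.inr ⟨key a this, key b (π.trans' (π.symm' hab) this)⟩

theorem hsplit_cls {π π' : Setoid α} {x y : α} (h : hjn π' x y = π) (hn : ¬ π' x y) :
    hsplit π (hcls π' x) = π' := by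
  ext a b
  change (hsplit π (hcls π' x)) a b ↔ π' a b
  have hs : ∀ {a b}, π' a b → π' b a := fun h => π'.symm' h
  have ht : ∀ {a b c}, π' a b → π' b c → π' a c := fun h h' => π'.trans' h h'
  rw [hsplit_iff, ← h, hjn_iff, hmem_cls, hmem_cls]
  constructor
  · rintro ⟨h1 | ⟨h1 | h1, h2 | h2⟩, h3⟩
    · exact h1
    · exact ht h1 (hs h2)
    · exact absurd (ht (h3.1 (hs h1)) h2) hn
    · exact absurd (ht (h3.2 (hs h2)) h1) hn
    · exact ht h1 (hs h2)
  · intro h1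
    exact ⟨Or.inl h1, fun h2 => ht h2 h1, fun h2 => ht h2 (hs h1)⟩

theorem hsplit_cls_x {π : Setoid α} {B : Finset α} {x : α} (hB : B ⊆ hcls π x)
    (hx : x ∈ B) : hcls (hsplit π B) x = B := by
  ext z
  rw [hmem_cls, hsplit_iff]
  constructor
  · rintro ⟨_, h⟩; exact h.1 hx
  · intro h; exact ⟨(hmem_cls π x z).1 (hB h), by simp [h, hx]⟩

theorem hsplit_cls_y {π : Setoid α} {B : Finset α} {x y : α} (hxy : π x y) (hy : y ∉ B) :
    hcls (hsplit π B) y = hcls π x \ B := by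
  ext z
  rw [hmem_cls, hsplit_iff, Finset.mem_sdiff, hmem_cls]
  constructor
  · rintro ⟨h1, h⟩; exact ⟨π.trans' hxy h1, fun h' => hy (h.2 h')⟩
  · rintro ⟨h1, h⟩; exact ⟨π.trans' (π.symm' hxy) h1, by simp [h, hy]⟩

/-- union of blocks -/
theorem hsat_biUnion {ρ : Setoid α} {T : Finset (Finset α)} (hT : T ⊆ hblocks ρ) :
    hsat ρ (T.biUnion id) := by
  intro a b hab ha
  simp only [Finset.mem_biUnion, id] at *
  obtain ⟨c, hc, hac⟩ := ha
  refine ⟨c, hc, ?_⟩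
  rw [← hblock_eq ρ (hT hc) hac, hmem_cls]; exact hab

theorem hbl_biUnion {ρ : Setoid α} {T : Finset (Finset α)} (hT : T ⊆ hblocks ρ) :
    hbl ρ (T.biUnion id) = T := by
  ext c
  rw [hmem_bl]
  constructor
  · rintro ⟨hc, hs⟩
    obtain ⟨z, hz⟩ := hblock_nonempty ρ hc
    have := hs hz
    simp only [Finset.mem_biUnion, id] at this
    obtain ⟨d, hd, hzd⟩ := this
    rw [← hblock_eq ρ hc hz, hblock_eq ρ (hT hd) hzd]; exact hd
  · intro hc
    exact ⟨hT hc, Finset.subset_biUnion_of_mem id hc⟩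

theorem hbiUnion_bl {ρ : Setoid α} {B : Finset α} (hB : hsat ρ B) :
    (hbl ρ B).biUnion id = B := by
  ext z
  simp only [Finset.mem_biUnion, id]
  constructor
  · rintro ⟨c, hc, hz⟩; exact ((hmem_bl ρ B c).1 hc).2 hz
  · intro hz; exact ⟨hcls ρ z, hcls_mem_bl hB hz, hself_cls ρ z⟩

theorem hw_biUnion {ρ : Setoid α} {T : Finset (Finset α)} (hT : T ⊆ hblocks ρ) :
    hw ρ (T.biUnion id) = (∑ c ∈ T, (c.card : ℚ)) ^ ((T.card : ℤ) - 3) := by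
  unfold hw
  rw [hcard_bl (hsat_biUnion hT), hbl_biUnion hT]

open Classical in
theorem hsplit_sum_g (g : ℚ → ℚ) {ρ π : Setoid α} (hρ : ρ ≤ π) {x y : α} (hxy : π x y) (hn : ¬ ρ x y) :
    ∑ π' : Setoid α, (if hjn π' x y = π ∧ ¬ π' x y ∧ ρ ≤ π' then
        hW ρ π' * g (hcls π' x).card else 0) =
      (∏ B ∈ (hblocks π).erase (hcls π x), hw ρ B) *
        ∑ S ∈ (((hbl ρ (hcls π x)).erase (hcls ρ x)).erase (hcls ρ y)).powerset,
          ((hcls ρ x).card + ∑ c ∈ S, (c.card : ℚ)) ^ ((S.card : ℤ) - 2) *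
          ((hcls ρ y).card + ∑ c ∈ (((hbl ρ (hcls π x)).erase (hcls ρ x)).erase (hcls ρ y)) \ S,
            (c.card : ℚ)) ^
            ((((((hbl ρ (hcls π x)).erase (hcls ρ x)).erase (hcls ρ y)) \ S).card : ℤ) - 2) *
          g ((hcls ρ x).card + ∑ c ∈ S, (c.card : ℚ)) := by
  set B0 := hcls π x with hB0
  set c' := hcls ρ x with hc'
  set c'' := hcls ρ y with hc''
  set C := ((hbl ρ B0).erase c').erase c'' with hC
  have hxB : x ∈ B0 := hself_cls π x
  have hyB : y ∈ B0 := (hmem_cls π x y).2 hxy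
  have hsatB : hsat ρ B0 := hsat_cls hρ x
  have hc'b : c' ∈ hbl ρ B0 := hcls_mem_bl hsatB hxB
  have hc''b : c'' ∈ hbl ρ B0 := hcls_mem_bl hsatB hyB
  have hne : c' ≠ c'' := fun h => hn ((hcls_eq_iff ρ x y).1 h)
  have hblsub : hbl ρ B0 ⊆ hblocks ρ := Finset.filter_subset _ _
  have hCsub : C ⊆ hbl ρ B0 := (Finset.erase_subset _ _).trans (Finset.erase_subset _ _)
  have hc'C : c' ∉ C := by simp [hC]
  have hc''C : c'' ∉ C := by simp [hC]
  have hblC : hbl ρ B0 = insert c' (insert c'' C) := by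
    rw [hC, Finset.insert_erase (Finset.mem_erase.2 ⟨hne.symm, hc''b⟩), Finset.insert_erase hc'b]
  have hT : ∀ S ⊆ C, insert c' S ⊆ hbl ρ B0 := by
    intro S hS
    exact Finset.insert_subset hc'b (hS.trans hCsub)
  have hUB : ∀ S ⊆ C, (insert c' S).biUnion id ⊆ B0 := by
    intro S hS z hz
    simp only [Finset.mem_biUnion, id] at hz
    obtain ⟨d, hd, hz⟩ := hz
    exact ((hmem_bl ρ B0 d).1 (hT S hS hd)).2 hz
  have hxU : ∀ S ⊆ C, x ∈ (insert c' S).biUnion id := by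
    intro S hS
    simp only [Finset.mem_biUnion, id]
    exact ⟨c', Finset.mem_insert_self _ _, hself_cls ρ x⟩
  have hyU : ∀ S ⊆ C, y ∉ (insert c' S).biUnion id := by
    intro S hS hy
    simp only [Finset.mem_biUnion, id] at hy
    obtain ⟨d, hd, hy⟩ := hy
    have h1 := hblock_eq ρ (hblsub (hT S hS hd)) hy
    rw [← hc''] at h1
    rw [← h1, Finset.mem_insert] at hd
    rcases hd with hd | hd
    · exact hne hd.symm
    · exact hc''C (hS hd)
  have hco : ∀ S ⊆ C, B0 \ (insert c' S).biUnion id = (insert c'' (C \ S)).biUnion id := by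
    intro S hS
    ext z
    have hz1 : z ∈ B0 ↔ hcls ρ z ∈ hbl ρ B0 := by
      constructor
      · exact fun h => hcls_mem_bl hsatB h
      · intro h; exact ((hmem_bl ρ B0 _).1 h).2 (hself_cls ρ z)
    have hz2 : ∀ T ⊆ hbl ρ B0, (z ∈ T.biUnion id ↔ hcls ρ z ∈ T) := by
      intro T hT
      simp only [Finset.mem_biUnion, id]
      constructor
      · rintro ⟨d, hd, hz⟩
        rw [hblock_eq ρ (hblsub (hT hd)) hz]; exact hd
      · intro h; exact ⟨_, h, hself_cls ρ z⟩
    rw [Finset.mem_sdiff, hz1, hz2 _ (hT S hS), hz2, hblC]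
    · simp only [Finset.mem_insert, Finset.mem_sdiff]
      constructor
      · tauto
      · rintro (h | ⟨h1, h2⟩)
        · rw [h]
          exact ⟨by tauto, by rintro (h | h); exact hne h.symm; exact hc''C (hS h)⟩
        · exact ⟨by tauto, by rintro (h | h); exact hc'C (h ▸ h1); exact h2 h⟩
    · exact Finset.insert_subset hc''b (Finset.sdiff_subset.trans hCsub)
  rw [← Finset.sum_filter, Finset.mul_sum]
  symm
  refine Finset.sum_bij' (fun S _ => hsplit π ((insert c' S).biUnion id))
    (fun π' _ => C.filter (fun d => d ⊆ hcls π' x)) ?_ ?_ ?_ ?_ ?_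
  · intro S hS
    rw [Finset.mem_powerset] at hS
    rw [Finset.mem_filter]
    refine ⟨Finset.mem_univ _, hsplit_jn hxy (hUB S hS) (hxU S hS) (hyU S hS), ?_, ?_⟩
    · rw [hsplit_iff]
      rintro ⟨_, h⟩
      exact hyU S hS (h.1 (hxU S hS))
    · intro a b hab
      have hsat := hsat_biUnion ((hT S hS).trans hblsub)
      exact ⟨hρ hab, hsat a b hab, hsat b a (ρ.symm' hab)⟩
  · intro π' _
    simp
  · intro S hS
    rw [Finset.mem_powerset] at hS
    rw [hsplit_cls_x (hUB S hS) (hxU S hS)]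
    have h1 := hbl_biUnion ((hT S hS).trans hblsub)
    ext d
    rw [Finset.mem_filter]
    constructor
    · rintro ⟨h2, h3⟩
      have : d ∈ insert c' S := by
        rw [← h1, hmem_bl]; exact ⟨hblsub (hCsub h2), h3⟩
      rcases Finset.mem_insert.1 this with h | h
      · exact absurd (h ▸ h2) hc'C
      · exact h
    · intro h
      exact ⟨hS h, Finset.subset_biUnion_of_mem id (Finset.mem_insert_of_mem h)⟩
  · intro π' hπ'
    rw [Finset.mem_filter] at hπ'
    obtain ⟨-, h1, h2, h3⟩ := hπ'
    have : insert c' (C.filter (fun d => d ⊆ hcls π' x)) = hbl ρ (hcls π' x) := by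
      ext d
      rw [Finset.mem_insert, Finset.mem_filter, hmem_bl]
      constructor
      · rintro (h | ⟨h, h'⟩)
        · rw [h]; exact ⟨hcls_mem ρ x, hcls_sub h3 x⟩
        · exact ⟨hblsub (hCsub h), h'⟩
      · rintro ⟨h, h'⟩
        by_cases hd : d = c'
        · exact Or.inl hd
        · right
          refine ⟨?_, h'⟩
          rw [hC, Finset.mem_erase, Finset.mem_erase, hmem_bl]
          refine ⟨?_, hd, h, h'.trans (hcls_sub (h1 ▸ hle_jn π' x y) x)⟩
          rintro rfl
          exact h2 ((hmem_cls π' x y).1 (h' (hself_cls ρ y)))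
    beta_reduce
    rw [this, hbiUnion_bl (hsat_cls h3 x), hsplit_cls h1 h2]
  · intro S hS
    rw [Finset.mem_powerset] at hS
    set π' := hsplit π ((insert c' S).biUnion id) with hπ'
    have h1 : hjn π' x y = π := hsplit_jn hxy (hUB S hS) (hxU S hS) (hyU S hS)
    have h2 : ¬ π' x y := by
      rw [hsplit_iff]
      rintro ⟨_, h⟩
      exact hyU S hS (h.1 (hxU S hS))
    have hp := hprod_jn π' x y h2 (hw ρ)
    rw [h1, hsplit_cls_x (hUB S hS) (hxU S hS), hsplit_cls_y hxy (hyU S hS), ← hB0,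
      Finset.union_sdiff_of_subset (hUB S hS), ← Finset.mul_prod_erase (hblocks π) _ (hcls_mem π x),
      ← hB0, hco S hS, hw_biUnion ((hT S hS).trans hblsub),
      hw_biUnion ((Finset.insert_subset hc''b (Finset.sdiff_subset.trans hCsub)).trans hblsub)] at hp
    have hpos : 0 < hw ρ B0 := hw_pos (hcls_mem π x)
    have hi1 : c' ∉ S := fun h => hc'C (hS h)
    have hi2 : c'' ∉ C \ S := fun h => hc''C (Finset.sdiff_subset h)
    rw [Finset.sum_insert hi1, Finset.sum_insert hi2, Finset.card_insert_of_notMem hi1,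
      Finset.card_insert_of_notMem hi2] at hp
    have e1 : (((S.card + 1 : ℕ) : ℤ) - 3) = (S.card : ℤ) - 2 := by push_cast; ring
    have e2 : ((((C \ S).card + 1 : ℕ) : ℤ) - 3) = ((C \ S).card : ℤ) - 2 := by push_cast; ring
    rw [e1, e2] at hp
    have hfin := mul_left_cancel₀ hpos.ne' (b := (∏ B ∈ (hblocks π).erase B0, hw ρ B) *
      (((c'.card : ℚ) + ∑ c ∈ S, (c.card : ℚ)) ^ ((S.card : ℤ) - 2) *
      ((c''.card : ℚ) + ∑ c ∈ C \ S, (c.card : ℚ)) ^ (((C \ S).card : ℤ) - 2)))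
      (c := hW ρ π') (by
        unfold hW
        linear_combination hp)
    have hcardx : ((hcls π' x).card : ℚ) = (c'.card : ℚ) + ∑ c ∈ S, (c.card : ℚ) := by
      rw [hsplit_cls_x (hUB S hS) (hxU S hS), hcard_bl (hsat_biUnion ((hT S hS).trans hblsub)),
        hbl_biUnion ((hT S hS).trans hblsub), Finset.sum_insert hi1]
    rw [hcardx, ← hfin]
    ring

open Classical in
theorem hsplit_sum {ρ π : Setoid α} (hρ : ρ ≤ π) {x y : α} (hxy : π x y) (hn : ¬ ρ x y) :
    ∑ π' : Setoid α, (if hjn π' x y = π ∧ ¬ π' x y ∧ ρ ≤ π' then hW ρ π' else 0) =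
      (∏ B ∈ (hblocks π).erase (hcls π x), hw ρ B) *
        hzZ (fun c : Finset α => (c.card : ℚ)) 2 2
          (((hbl ρ (hcls π x)).erase (hcls ρ x)).erase (hcls ρ y))
          (hcls ρ x).card (hcls ρ y).card := by
  have h := hsplit_sum_g (fun _ => 1) hρ hxy hn
  simp only [mul_one] at h
  exact h

end weights


section cycles
variable {α : Type*} [Fintype α] [DecidableEq α]

/-- the partition into cycles -/
def hcyc (σ : Perm α) : Setoid α := Perm.SameCycle.setoid σ

theorem hcyc_iff (σ : Perm α) (a b : α) : hcyc σ a b ↔ σ.SameCycle a b := Iff.rfl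

theorem hcyc_iterate (σ : Perm α) (a b : α) : hcyc σ a b ↔ ∃ i : ℕ, σ^[i] a = b := by
  rw [hcyc_iff]
  constructor
  · intro h
    obtain ⟨i, hi⟩ := h.exists_nat_pow_eq
    exact ⟨i, by rw [Perm.iterate_eq_pow]; exact hi⟩
  · rintro ⟨i, hi⟩
    refine ⟨i, ?_⟩
    rw [Perm.iterate_eq_pow] at hi
    simpa using hi

theorem hcyc_le_iff (σ : Perm α) (π : Setoid α) : hcyc σ ≤ π ↔ ∀ a, π a (σ a) := by
  constructor
  · intro h a
    exact h ((hcyc_iterate σ a (σ a)).2 ⟨1, rfl⟩)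
  · intro h a b hab
    obtain ⟨i, rfl⟩ := (hcyc_iterate σ a b).1 hab
    clear hab
    induction i with
    | zero => exact π.refl' _
    | succ i ih =>
      rw [Function.iterate_succ_apply']
      exact π.trans' ih (h _)

theorem hcyc_apply (σ : Perm α) (a : α) : hcyc σ a (σ a) := (hcyc_iterate σ a (σ a)).2 ⟨1, rfl⟩

theorem hcyc_one : hcyc (1 : Perm α) = ⊥ := by
  rw [eq_bot_iff, hcyc_le_iff]
  intro a
  exact (⊥ : Setoid α).refl' a

theorem hcyc_eq_bot {σ : Perm α} (h : hcyc σ = ⊥) : σ = 1 := by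
  ext a
  have h1 := hcyc_apply σ a
  rw [h] at h1
  have h2 : a = σ a := by simpa [Setoid.bot_def] using h1
  simpa using h2.symm

theorem hcyc_inv (σ : Perm α) : hcyc σ⁻¹ = hcyc σ := by
  ext a b
  exact Perm.sameCycle_inv

theorem hcyc_mul_le (σ : Perm α) (x y : α) : hcyc (swap x y * σ) ≤ hjn (hcyc σ) x y := by
  rw [hcyc_le_iff]
  intro a
  have h1 : hjn (hcyc σ) x y a (σ a) := Or.inl (hcyc_apply σ a)
  refine (hjn (hcyc σ) x y).trans' h1 ?_
  rw [Perm.mul_apply]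
  by_cases h : σ a = x
  · rw [h, swap_apply_left]; exact hjn_xy _ x y
  · by_cases h' : σ a = y
    · rw [h', swap_apply_right]; exact (hjn _ x y).symm' (hjn_xy _ x y)
    · rw [swap_apply_of_ne_of_ne h h']

theorem hcyc_jn (σ : Perm α) (x y : α) :
    hjn (hcyc (swap x y * σ)) x y = hjn (hcyc σ) x y := by
  apply le_antisymm
  · exact hjn_le (hcyc_mul_le σ x y) (hjn_xy _ x y)
  · have := hcyc_mul_le (swap x y * σ) x y
    rw [swap_mul_self_mul] at this
    exact hjn_le this (hjn_xy _ x y)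

theorem hwalk (σ : Perm α) (x y : α) (p : ℕ)
    (h : ∀ i, 0 < i → i < p → σ^[i] x ≠ x ∧ σ^[i] x ≠ y) :
    ∀ i, i < p → (swap x y * σ)^[i] x = σ^[i] x := by
  intro i
  induction i with
  | zero => intro _; rfl
  | succ i ih =>
    intro hi
    rw [Function.iterate_succ_apply', ih (by omega), Perm.mul_apply]
    have := h (i + 1) (by omega) hi
    rw [Function.iterate_succ_apply'] at this ⊢
    exact swap_apply_of_ne_of_ne this.1 this.2

theorem hper_pos (σ : Perm α) (x : α) : 0 < Function.minimalPeriod σ x := by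
  refine Function.IsPeriodicPt.minimalPeriod_pos (orderOf_pos σ) ?_
  change σ^[orderOf σ] x = x
  rw [Perm.iterate_eq_pow, pow_orderOf_eq_one]; rfl

theorem hper_ne (σ : Perm α) (x : α) (i : ℕ) (h : 0 < i) (hi : i < Function.minimalPeriod σ x) :
    σ^[i] x ≠ x := by
  intro h'
  have := Function.IsPeriodicPt.minimalPeriod_le h (show Function.IsPeriodicPt σ i x from h')
  omega

theorem hcyc_join (σ : Perm α) (x y : α) (h : ¬ hcyc σ x y) : hcyc (swap x y * σ) x y := by
  have hp := hper_pos σ x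
  obtain ⟨q, hq⟩ : ∃ q, Function.minimalPeriod σ x = q + 1 := ⟨_, (Nat.succ_pred_eq_of_pos hp).symm⟩
  have hw := hwalk σ x y (q + 1) (by
    intro i h0 hi
    refine ⟨hper_ne σ x i h0 (by omega), ?_⟩
    intro h'
    exact h ((hcyc_iterate σ x y).2 ⟨i, h'⟩)) q (by omega)
  rw [hcyc_iterate]
  refine ⟨q + 1, ?_⟩
  rw [Function.iterate_succ_apply', hw, Perm.mul_apply, ← Function.iterate_succ_apply' σ, Nat.succ_eq_add_one, ← hq,
    Function.iterate_minimalPeriod, swap_apply_left]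

theorem hcyc_join_eq (σ : Perm α) (x y : α) (h : ¬ hcyc σ x y) :
    hcyc (swap x y * σ) = hjn (hcyc σ) x y := by
  rw [← hcyc_jn, hjn_eq_self (hcyc_join σ x y h)]

theorem hcyc_cls (σ : Perm α) (x : α) :
    hcls (hcyc σ) x = (Finset.range (Function.minimalPeriod σ x)).image (fun i => σ^[i] x) := by
  ext z
  rw [hmem_cls, hcyc_iterate, Finset.mem_image]
  constructor
  · rintro ⟨i, rfl⟩
    exact ⟨i % Function.minimalPeriod σ x, Finset.mem_range.2 (Nat.mod_lt _ (hper_pos σ x)),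
      Function.iterate_mod_minimalPeriod_eq⟩
  · rintro ⟨i, _, hi⟩; exact ⟨i, hi⟩

theorem hcyc_inj (σ : Perm α) (x : α) :
    Set.InjOn (fun i => σ^[i] x) (Finset.range (Function.minimalPeriod σ x) : Set ℕ) := by
  rw [Finset.coe_range]
  exact Function.iterate_injOn_Iio_minimalPeriod

theorem hcyc_cls_card (σ : Perm α) (x : α) :
    (hcls (hcyc σ) x).card = Function.minimalPeriod σ x := by
  rw [hcyc_cls, Finset.card_image_of_injOn (hcyc_inj σ x), Finset.card_range]

theorem hcyc_cut (σ : Perm α) (x : α) (a : ℕ) (h0 : 0 < a) (ha : a < Function.minimalPeriod σ x) :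
    (hcls (hcyc (swap x (σ^[a] x) * σ)) x).card = a ∧ ¬ hcyc (swap x (σ^[a] x) * σ) x (σ^[a] x) := by
  have hne : ∀ i, i < a → σ^[i] x ≠ σ^[a] x := by
    intro i hi h
    have := hcyc_inj σ x (by simp; omega) (by simp; omega) h
    omega
  have hw := hwalk σ x (σ^[a] x) a (by
    intro i hi0 hi
    exact ⟨hper_ne σ x i hi0 (by omega), hne i hi⟩)
  have hper : (swap x (σ^[a] x) * σ)^[a] x = x := by
    obtain ⟨q, rfl⟩ : ∃ q, a = q + 1 := ⟨a - 1, by omega⟩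
    rw [Function.iterate_succ_apply', hw q (by omega), Perm.mul_apply,
      ← Function.iterate_succ_apply' σ, swap_apply_right]
  have hmin : Function.minimalPeriod (swap x (σ^[a] x) * σ : Perm α) x = a := by
    apply le_antisymm
    · exact Function.IsPeriodicPt.minimalPeriod_le h0 hper
    · by_contra hlt
      push Not at hlt
      have h1 := hper_pos (swap x (σ^[a] x) * σ) x
      have h2 : (swap x (σ^[a] x) * σ)^[Function.minimalPeriod (swap x (σ^[a] x) * σ : Perm α) x] x = x :=
        Function.iterate_minimalPeriod
      rw [hw _ hlt] at h2
      exact hper_ne σ x _ h1 (by omega) h2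
  refine ⟨by rw [hcyc_cls_card, hmin], ?_⟩
  intro h
  rw [← hmem_cls, hcyc_cls, hmin, Finset.mem_image] at h
  obtain ⟨i, hi, h⟩ := h
  rw [Finset.mem_range] at hi
  rw [hw i hi] at h
  exact hne i hi h

theorem hcyc_cut' (σ : Perm α) (x y : α) (h : hcyc σ x y) (hxy : x ≠ y) :
    ¬ hcyc (swap x y * σ) x y := by
  rw [← hmem_cls, hcyc_cls, Finset.mem_image] at h
  obtain ⟨a, ha, rfl⟩ := h
  rw [Finset.mem_range] at ha
  have h0 : 0 < a := by
    rcases Nat.eq_zero_or_pos a with rfl | h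
    · exact absurd rfl hxy
    · exact h
  exact (hcyc_cut σ x a h0 ha).2

theorem hcyc_sum (σ : Perm α) (x : α) (g : ℕ → ℚ) (hg : g 0 = 0) :
    ∑ y ∈ (hcls (hcyc σ) x).erase x, g ((hcls (hcyc (swap x y * σ)) x).card) =
      ∑ a ∈ Finset.range ((hcls (hcyc σ) x).card), g a := by
  have hx : x = (fun i => σ^[i] x) 0 := rfl
  have himg : (hcls (hcyc σ) x).erase x =
      ((Finset.range (Function.minimalPeriod σ x)).erase 0).image (fun i => σ^[i] x) := by
    rw [hcyc_cls]
    ext z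
    simp only [Finset.mem_erase, Finset.mem_image, Finset.mem_range]
    constructor
    · rintro ⟨hz, i, hi, rfl⟩
      refine ⟨i, ⟨?_, hi⟩, rfl⟩
      rintro rfl; exact hz rfl
    · rintro ⟨i, ⟨h0, hi⟩, rfl⟩
      exact ⟨hper_ne σ x i (by omega) hi, i, hi, rfl⟩
  rw [himg, Finset.sum_image, hcyc_cls_card]
  · rw [← Finset.add_sum_erase (Finset.range (Function.minimalPeriod σ x)) g
      (Finset.mem_range.2 (hper_pos σ x)), hg, zero_add]
    apply Finset.sum_congr rfl
    intro a ha
    rw [Finset.mem_erase, Finset.mem_range] at ha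
    rw [(hcyc_cut σ x a (by omega) ha.2).1]
  · intro i hi j hj hij
    have hi' := Finset.mem_of_mem_erase hi
    have hj' := Finset.mem_of_mem_erase hj
    exact hcyc_inj σ x hi' hj' hij

end cycles


section hzcongr
variable {ι : Type*} [DecidableEq ι]

theorem hzZ_congr {x x' : ι → ℚ} (p q : ℤ) (C : Finset ι) (a b : ℚ) (h : ∀ i ∈ C, x i = x' i) :
    hzZ x p q C a b = hzZ x' p q C a b := by
  unfold hzZ
  apply Finset.sum_congr rfl
  intro S hS
  rw [Finset.mem_powerset] at hS
  rw [Finset.sum_congr rfl (fun i hi => h i (hS hi)),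
    Finset.sum_congr rfl (fun i hi => h i (Finset.sdiff_subset hi))]

theorem hz_cutjoin' (lam : ι → ℕ) (C : Finset ι) (hlam : ∀ i ∈ C, lam i ≠ 0) (hC : C.Nonempty)
    (n : ℚ) (hn : n = ∑ i ∈ C, (lam i : ℚ)) :
    ∑ c ∈ C, ∑ d ∈ C.erase c, (lam c : ℚ) * lam d *
        (hzphi (lam c + lam d) / (hzphi (lam c) * hzphi (lam d)) * n ^ ((C.card : ℤ) - 4)) +
      ∑ c ∈ C, (lam c : ℚ) * ∑ ab ∈ Finset.HasAntidiagonal.antidiagonal (lam c),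
        hzphi ab.1 * hzphi ab.2 / hzphi (lam c) *
          hzZ (fun i => (lam i : ℚ)) 2 2 (C.erase c) ab.1 ab.2 =
      2 * (n + C.card - 2) * n ^ ((C.card : ℤ) - 3) := by
  set l' : ι → ℕ := fun i => if lam i = 0 then 1 else lam i with hl'
  have h1 : ∀ i ∈ C, lam i = l' i := by
    intro i hi
    simp [hl', hlam i hi]
  have h2 : ∀ i, l' i ≠ 0 := by
    intro i
    simp only [hl']
    split_ifs with h
    · exact one_ne_zero
    · exact h
  rw [← hz_cutjoin l' h2 C hC n (by rw [hn]; exact Finset.sum_congr rfl (fun i hi => by rw [h1 i hi]))]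
  congr 1
  · apply Finset.sum_congr rfl
    intro c hc
    apply Finset.sum_congr rfl
    intro d hd
    rw [h1 c hc, h1 d (Finset.mem_of_mem_erase hd)]
  · apply Finset.sum_congr rfl
    intro c hc
    rw [← h1 c hc]
    congr 1
    apply Finset.sum_congr rfl
    intro ab _
    rw [hzZ_congr]
    intro i hi
    rw [h1 i (Finset.mem_of_mem_erase hi)]
end hzcongr

section mainform
variable {α : Type*} [Fintype α] [DecidableEq α]

theorem hbl_jn_mem {ρ : Setoid α} {x y : α} {B : Finset α} (hs : hsat ρ B)
    (hx : x ∈ B) (hy : y ∈ B) :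
    hbl (hjn ρ x y) B = insert (hcls ρ x ∪ hcls ρ y) (((hbl ρ B).erase (hcls ρ x)).erase (hcls ρ y)) := by
  ext c
  rw [hmem_bl, hblocks_jn]
  simp only [Finset.mem_insert, Finset.mem_erase, hmem_bl]
  have : hcls ρ x ∪ hcls ρ y ⊆ B := Finset.union_subset (hsat_sub hs hx) (hsat_sub hs hy)
  constructor
  · rintro ⟨h | h, h'⟩ <;> tauto
  · rintro (h | h)
    · rw [h]; tauto
    · tauto

theorem hbl_jn_ne {ρ : Setoid α} {x y : α} {B : Finset α} 
    (hx : x ∉ B) (hy : y ∉ B) :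
    hbl (hjn ρ x y) B = hbl ρ B := by
  ext c
  rw [hmem_bl, hblocks_jn]
  simp only [Finset.mem_insert, Finset.mem_erase, hmem_bl]
  constructor
  · rintro ⟨h | h, h'⟩
    · rw [h] at h'
      exact absurd (h' (Finset.mem_union_left _ (hself_cls ρ x))) hx
    · tauto
  · rintro ⟨h, h'⟩
    refine ⟨Or.inr ⟨?_, ?_, h⟩, h'⟩
    · rintro rfl; exact hy (h' (hself_cls ρ y))
    · rintro rfl; exact hx (h' (hself_cls ρ x))

theorem hcard_bl_jn {ρ : Setoid α} {x y : α} {B : Finset α} (hs : hsat ρ B)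
    (hx : x ∈ B) (hy : y ∈ B) (h : ¬ ρ x y) : (hbl (hjn ρ x y) B).card + 1 = (hbl ρ B).card := by
  have hne : hcls ρ y ≠ hcls ρ x := fun h' => h (ρ.symm' ((hcls_eq_iff ρ y x).1 h'))
  have hxb := hcls_mem_bl hs hx
  have hyb := hcls_mem_bl hs hy
  rw [hbl_jn_mem hs hx hy, Finset.card_insert_of_notMem, Finset.card_erase_of_mem,
    Finset.card_erase_of_mem hxb]
  · have h2 : 1 < (hbl ρ B).card := Finset.one_lt_card.2 ⟨_, hyb, _, hxb, hne⟩
    omega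
  · exact Finset.mem_erase.2 ⟨hne, hyb⟩
  · simp only [Finset.mem_erase, not_and]
    intro _ _ h'
    exact hunion_notMem ρ x y h ((hmem_bl _ _ _).1 h').1

theorem hw_jn_ne {ρ π : Setoid α} {x y : α} (hxy : π x y) {B : Finset α}
    (hB : B ∈ (hblocks π).erase (hcls π x)) : hw (hjn ρ x y) B = hw ρ B := by
  rw [Finset.mem_erase] at hB
  unfold hw
  rw [hbl_jn_ne]
  · intro h; exact hB.1 (hblock_eq π hB.2 h).symm
  · intro h
    exact hB.1 ((hblock_eq π hB.2 h).symm.trans ((hcls_eq_iff π y x).2 (π.symm' hxy)))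

open Classical in
/-- weighted number of transposition factorizations of `σ` with orbit partition `π` -/
noncomputable def hN : ℕ → Perm α → Setoid α → ℚ
  | 0, σ, π => if σ = 1 ∧ π = ⊥ then 1 else 0
  | m + 1, σ, π => (1 / 2) * ∑ x, ∑ y ∈ Finset.univ.erase x, ∑ π' : Setoid α,
      if hjn π' x y = π then hN m (swap x y * σ) π' else 0

theorem hN_ne (m : ℕ) : ∀ (σ : Perm α) (π : Setoid α), hN m σ π ≠ 0 →
    hcyc σ ≤ π ∧ Fintype.card α + (hblocks (hcyc σ)).card ≤ m + 2 * (hblocks π).card := by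
  induction m with
  | zero =>
    intro σ π h
    rw [hN] at h
    split_ifs at h with h'
    · obtain ⟨rfl, rfl⟩ := h'
      rw [hcyc_one, hcard_bot]
      exact ⟨le_rfl, by omega⟩
    · exact absurd rfl h
  | succ m ih =>
    intro σ π h
    rw [hN] at h
    have h1 := right_ne_zero_of_mul h
    obtain ⟨x, -, hx⟩ := Finset.exists_ne_zero_of_sum_ne_zero h1
    obtain ⟨y, hy, hxy⟩ := Finset.exists_ne_zero_of_sum_ne_zero hx
    obtain ⟨π', -, h2⟩ := Finset.exists_ne_zero_of_sum_ne_zero hxy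
    have hne : x ≠ y := (Finset.mem_erase.1 hy).1.symm
    split_ifs at h2 with h3
    · obtain ⟨h4, h5⟩ := ih _ _ h2
      have h6 : hcyc σ ≤ π := by
        rw [← h3]
        exact (hle_jn (hcyc σ) x y).trans ((hcyc_jn σ x y) ▸ hjn_mono h4 x y)
      refine ⟨h6, ?_⟩
      by_cases h7 : π' x y
      · rw [hjn_eq_self h7] at h3
        subst h3
        by_cases h8 : hcyc σ x y
        · have h9 := hcard_jn _ x y (hcyc_cut' σ x y h8 hne)
          rw [hcyc_jn, hjn_eq_self h8] at h9
          omega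
        · have h9 := hcard_jn _ x y h8
          rw [← hcyc_join_eq σ x y h8] at h9
          omega
      · have h8 : ¬ hcyc (swap x y * σ) x y := fun h => h7 (h4 h)
        have h9 := hcard_jn _ x y h8
        have h10 := hcyc_join_eq _ x y h8
        rw [swap_mul_self_mul] at h10
        rw [← h10] at h9
        have h11 := hcard_jn _ x y h7
        rw [h3] at h11
        omega
    · exact absurd rfl h2

open Classical in
/-- the contribution of one ordered pair -/
noncomputable def hT (m : ℕ) (σ : Perm α) (π : Setoid α) (x y : α) : ℚ :=
  ∑ π' : Setoid α, if hjn π' x y = π then hN m (swap x y * σ) π' else 0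

theorem hT_off {m : ℕ} {σ : Perm α} {π : Setoid α} {x y : α} (h : ¬ π x y) : hT m σ π x y = 0 := by
  apply Finset.sum_eq_zero
  intro π' _
  rw [if_neg]
  rintro rfl
  exact h (hjn_xy _ x y)

theorem hT_join {m : ℕ} {σ : Perm α} {π : Setoid α} {x y : α} (h : ¬ hcyc σ x y) (hπ : π x y) :
    hT m σ π x y = hN m (swap x y * σ) π := by
  unfold hT
  rw [Finset.sum_eq_single π]
  · rw [if_pos (hjn_eq_self hπ)]
  · intro π' _ hne
    by_contra h1
    split_ifs at h1 with h2
    · have h3 := (hN_ne m _ _ h1).1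
      have h4 := h3 (hcyc_join σ x y h)
      rw [hjn_eq_self h4] at h2
      exact hne h2
    · exact h1 rfl
  · simp

open Classical in
theorem hT_cut {m : ℕ} {σ : Perm α} {π : Setoid α} {x y : α} (h : hcyc σ x y) (hne : x ≠ y)
    (hdim : Fintype.card α + (hblocks (hcyc σ)).card = m + 1 + 2 * (hblocks π).card)
    (ih : ∀ (σ : Perm α) (π : Setoid α), hcyc σ ≤ π →
      Fintype.card α + (hblocks (hcyc σ)).card = m + 2 * (hblocks π).card →
      hN m σ π = m.factorial * (hPhi (hcyc σ) * hW (hcyc σ) π)) :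
    hT m σ π x y = m.factorial * hPhi (hcyc (swap x y * σ)) *
      ∑ π' : Setoid α, (if hjn π' x y = π ∧ ¬ π' x y ∧ hcyc (swap x y * σ) ≤ π'
        then hW (hcyc (swap x y * σ)) π' else 0) := by
  unfold hT
  rw [Finset.mul_sum]
  apply Finset.sum_congr rfl
  intro π' _
  have h9 := hcard_jn _ x y (hcyc_cut' σ x y h hne)
  rw [hcyc_jn, hjn_eq_self h] at h9
  by_cases h1 : hjn π' x y = π
  · rw [if_pos h1]
    by_cases h2 : ¬ π' x y ∧ hcyc (swap x y * σ) ≤ π'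
    · rw [if_pos ⟨h1, h2⟩, ih _ _ h2.2]
      · ring
      · have h10 := hcard_jn _ x y h2.1
        rw [h1] at h10
        omega
    · rw [if_neg (fun h' => h2 h'.2), mul_zero]
      by_contra h3
      obtain ⟨h4, h5⟩ := hN_ne m _ _ h3
      have h6 : π' x y := by
        by_contra h7
        exact h2 ⟨h7, h4⟩
      rw [hjn_eq_self h6] at h1
      subst h1
      omega
  · rw [if_neg h1, if_neg (fun h' => h1 h'.1), mul_zero]

theorem hcard_union_cls {ρ : Setoid α} {x y : α} (h : ¬ ρ x y) :
    (hcls ρ x ∪ hcls ρ y).card = (hcls ρ x).card + (hcls ρ y).card :=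
  Finset.card_union_of_disjoint (hcls_disj ρ x y h)

theorem hcls_card_pos (ρ : Setoid α) (x : α) : 0 < (hcls ρ x).card :=
  Finset.card_pos.2 ⟨x, hself_cls ρ x⟩

theorem hphi_cls_pos (ρ : Setoid α) (x : α) : 0 < hzphi (hcls ρ x).card :=
  hzphi_pos _ (hcls_card_pos ρ x).ne'

theorem hPhi_jn {ρ : Setoid α} {x y : α} (h : ¬ ρ x y) :
    hPhi (hjn ρ x y) = hPhi ρ * (hzphi ((hcls ρ x).card + (hcls ρ y).card) /
      (hzphi (hcls ρ x).card * hzphi (hcls ρ y).card)) := by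
  have h1 := hprod_jn ρ x y h (fun c => hzphi c.card)
  beta_reduce at h1
  rw [hcard_union_cls h] at h1
  have h2 := hphi_cls_pos ρ x
  have h3 := hphi_cls_pos ρ y
  unfold hPhi
  field_simp
  linear_combination h1

theorem hW_jn {ρ π : Setoid α} (hρ : ρ ≤ π) {x y : α} (hxy : π x y) (h : ¬ ρ x y) :
    hW (hjn ρ x y) π = (∏ B ∈ (hblocks π).erase (hcls π x), hw ρ B) *
      ((hcls π x).card : ℚ) ^ (((hbl ρ (hcls π x)).card : ℤ) - 4) := by
  unfold hW
  rw [← Finset.mul_prod_erase (hblocks π) _ (hcls_mem π x),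
    Finset.prod_congr rfl (fun B hB => hw_jn_ne hxy hB), mul_comm]
  congr 1
  unfold hw
  have := hcard_bl_jn (hsat_cls hρ x) (hself_cls π x) ((hmem_cls π x y).2 hxy) h
  congr 1
  rw [← this]; push_cast; ring

theorem hbl_cut {ρ π : Setoid α} (hρ : ρ ≤ π) {x y : α} (hxy : π x y) (h : ¬ ρ x y) :
    ((hbl ρ (hcls π x)).erase (hcls ρ x)).erase (hcls ρ y) =
      (hbl (hjn ρ x y) (hcls π x)).erase (hcls (hjn ρ x y) x) := by
  rw [hbl_jn_mem (hsat_cls hρ x) (hself_cls π x) ((hmem_cls π x y).2 hxy), hjn_cls_x,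
    Finset.erase_insert]
  simp only [Finset.mem_erase, not_and]
  intro _ _ h'
  exact hunion_notMem ρ x y h ((hmem_bl _ _ _).1 h').1

end mainform


theorem hzphi_one : hzphi 1 = 1 := by
  norm_num [hzphi, hze]

section mainform2
variable {α : Type*} [Fintype α] [DecidableEq α]

/-- the row sum attached to a cycle `c` in a block `B` -/
noncomputable def hrowv (ρ : Setoid α) (B c : Finset α) : ℚ :=
  ∑ d ∈ (hbl ρ B).erase c, (d.card : ℚ) *
    (hzphi (c.card + d.card) / (hzphi c.card * hzphi d.card) *
      (B.card : ℚ) ^ (((hbl ρ B).card : ℤ) - 4)) +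
  ∑ ab ∈ Finset.HasAntidiagonal.antidiagonal c.card,
    hzphi ab.1 * hzphi ab.2 / hzphi c.card *
      hzZ (fun d : Finset α => (d.card : ℚ)) 2 2 ((hbl ρ B).erase c) ab.1 ab.2

theorem hrow {m : ℕ} {σ : Perm α} {π : Setoid α} (hσ : hcyc σ ≤ π)
    (hdim : Fintype.card α + (hblocks (hcyc σ)).card = m + 1 + 2 * (hblocks π).card)
    (ih : ∀ (σ : Perm α) (π : Setoid α), hcyc σ ≤ π →
      Fintype.card α + (hblocks (hcyc σ)).card = m + 2 * (hblocks π).card →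
      hN m σ π = m.factorial * (hPhi (hcyc σ) * hW (hcyc σ) π)) (x : α) :
    ∑ y ∈ Finset.univ.erase x, hT m σ π x y =
      m.factorial * hPhi (hcyc σ) * (∏ B ∈ (hblocks π).erase (hcls π x), hw (hcyc σ) B) *
        hrowv (hcyc σ) (hcls π x) (hcls (hcyc σ) x) := by
  set ρ := hcyc σ with hρ
  set B := hcls π x with hB
  set c := hcls ρ x with hc
  have hsatB : hsat ρ B := hsat_cls hσ x
  have hxB : x ∈ B := hself_cls π x
  have hcB : c ∈ hbl ρ B := hcls_mem_bl hsatB hxB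
  -- restrict to the block
  have e1 : ∑ y ∈ Finset.univ.erase x, hT m σ π x y =
      ∑ y ∈ B, (if y = x then 0 else hT m σ π x y) := by
    have : ∑ y ∈ Finset.univ.erase x, hT m σ π x y = ∑ y, (if y = x then 0 else hT m σ π x y) := by
      rw [← Finset.add_sum_erase Finset.univ (fun y => if y = x then 0 else hT m σ π x y)
        (Finset.mem_univ x), if_pos rfl, zero_add]
      apply Finset.sum_congr rfl
      intro y hy
      rw [if_neg (Finset.mem_erase.1 hy).1]
    rw [this]
    symm
    apply Finset.sum_subset (Finset.subset_univ _)
    intro y _ hy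
    rw [hB, hmem_cls] at hy
    rw [hT_off hy, ite_self]
  rw [e1, ← hsum_bl hsatB, ← Finset.add_sum_erase _ _ hcB]
  have e2 : ∑ y ∈ c, (if y = x then 0 else hT m σ π x y) = ∑ y ∈ c.erase x, hT m σ π x y := by
    rw [← Finset.add_sum_erase c (fun y => if y = x then 0 else hT m σ π x y)
      (hself_cls ρ x), if_pos rfl, zero_add]
    apply Finset.sum_congr rfl
    intro y hy
    rw [if_neg (Finset.mem_erase.1 hy).1]
  rw [e2, hrowv, mul_add, add_comm]
  congr 1
  · -- joins
    rw [Finset.mul_sum]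
    apply Finset.sum_congr rfl
    intro d hd
    rw [Finset.mem_erase] at hd
    have hdb := (hmem_bl _ _ _).1 hd.2
    rw [Finset.sum_congr rfl (g := fun _ => m.factorial * hPhi (hcyc σ) *
      (∏ B ∈ (hblocks π).erase (hcls π x), hw (hcyc σ) B) *
      (hzphi (c.card + d.card) / (hzphi c.card * hzphi d.card) *
      (B.card : ℚ) ^ (((hbl ρ B).card : ℤ) - 4)))]
    · rw [Finset.sum_const, nsmul_eq_mul]; ring
    · intro y hy
      have hdy := hblock_eq ρ hdb.1 hy
      have hny : ¬ ρ x y := by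
        intro h
        exact hd.1 (by rw [← hdy]; exact (hcls_eq_iff ρ y x).2 (ρ.symm' h))
      have hyx : y ≠ x := by
        rintro rfl
        exact hny (ρ.refl' _)
      have hπ : π x y := (hmem_cls π x y).1 (hdb.2 hy)
      have hcj := hcard_jn _ x y hny
      rw [if_neg hyx, hT_join hny hπ, ih]
      · rw [hcyc_join_eq σ x y hny, hPhi_jn hny, hW_jn hσ hπ hny, ← hρ, hdy]
        ring
      · rw [hcyc_join_eq σ x y hny]
        exact hjn_le hσ hπ
      · rw [hcyc_join_eq σ x y hny, ← hρ]
        omega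
  · -- cuts
    rw [Finset.Nat.sum_antidiagonal_eq_sum_range_succ_mk, Finset.sum_range_succ]
    simp only [Nat.sub_self, hzphi_zero, mul_zero, zero_div, zero_mul, add_zero]
    rw [← hcyc_sum σ x (fun a => hzphi a * hzphi (c.card - a) / hzphi c.card *
      hzZ (fun d : Finset α => (d.card : ℚ)) 2 2 ((hbl ρ B).erase c) (a : ℚ)
        ((c.card - a : ℕ) : ℚ)) (by simp [hzphi_zero]), Finset.mul_sum]
    apply Finset.sum_congr rfl
    intro y hy
    rw [Finset.mem_erase] at hy
    have hxy : ρ x y := (hmem_cls ρ x y).1 hy.2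
    have hπ : π x y := hσ hxy
    have hn := hcyc_cut' σ x y hxy hy.1.symm
    set ρ' := hcyc (swap x y * σ) with hρ'
    have hj : hjn ρ' x y = ρ := by rw [hρ', hcyc_jn, hjn_eq_self hxy]
    have hle : ρ' ≤ π := (hle_jn ρ' x y).trans (hj ▸ hσ)
    have hcu : c = hcls ρ' x ∪ hcls ρ' y := by rw [hc, ← hj, hjn_cls_x]
    have hcc : c.card = (hcls ρ' x).card + (hcls ρ' y).card := by rw [hcu, hcard_union_cls hn]
    have hsub : c.card - (hcls ρ' x).card = (hcls ρ' y).card := by omega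
    have hP := hPhi_jn hn
    rw [hj, ← hcc] at hP
    have hbc := hbl_cut hle hπ hn
    rw [hj] at hbc
    rw [hT_cut hxy hy.1.symm hdim ih, hsplit_sum hle hπ hn, hsub, ← hρ', hbc]
    have hww : ∏ B ∈ (hblocks π).erase (hcls π x), hw ρ' B =
        ∏ B ∈ (hblocks π).erase (hcls π x), hw ρ B := by
      apply Finset.prod_congr rfl
      intro B' hB'
      rw [← hj, hw_jn_ne hπ hB']
    rw [hww, hP]
    have h1 := (hphi_cls_pos ρ' x).ne'
    have h2 := (hphi_cls_pos ρ' y).ne'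
    have h3 := (hphi_cls_pos ρ x).ne'
    rw [← hc] at h3
    rw [← hc, ← hB]
    field_simp

theorem hN_form (m : ℕ) : ∀ (σ : Perm α) (π : Setoid α), hcyc σ ≤ π →
      Fintype.card α + (hblocks (hcyc σ)).card = m + 2 * (hblocks π).card →
      hN m σ π = m.factorial * (hPhi (hcyc σ) * hW (hcyc σ) π) := by
  induction m with
  | zero =>
    intro σ π hσ hdim
    have h1 := hcard_le hσ
    have h2 := hcard_le (bot_le : (⊥ : Setoid α) ≤ hcyc σ)
    rw [hcard_bot] at h2
    have h3 : π = ⊥ := heq_bot (by omega)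
    have h4 : hcyc σ = ⊥ := heq_bot (by omega)
    have h5 : σ = 1 := hcyc_eq_bot h4
    rw [hN, if_pos ⟨h5, h3⟩, h4, h3]
    have h6 : hPhi (⊥ : Setoid α) = 1 := by
      apply Finset.prod_eq_one
      intro c hc
      obtain ⟨x, rfl⟩ := (hmem_blocks _ _).1 hc
      rw [hcls_bot, Finset.card_singleton, hzphi_one]
    have h7 : hW (⊥ : Setoid α) ⊥ = 1 := by
      apply Finset.prod_eq_one
      intro c hc
      obtain ⟨x, rfl⟩ := (hmem_blocks _ _).1 hc
      rw [hw, hcls_bot, Finset.card_singleton]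
      simp
    rw [h6, h7]; simp
  | succ m ih =>
    intro σ π hσ hdim
    set ρ := hcyc σ with hρ
    have h0 : hN (m + 1) σ π = (1 / 2) * ∑ x, ∑ y ∈ Finset.univ.erase x, hT m σ π x y := by
      rw [hN]; rfl
    rw [h0, Finset.sum_congr rfl (fun x _ => hrow hσ hdim ih x), ← hρ, ← hsum_blocks π]
    have hblk : ∀ B ∈ hblocks π, ∑ x ∈ B, (m.factorial * hPhi ρ *
        (∏ B ∈ (hblocks π).erase (hcls π x), hw ρ B) * hrowv ρ (hcls π x) (hcls ρ x)) =
        2 * (m.factorial * (hPhi ρ * hW ρ π)) * ((B.card : ℚ) + ((hbl ρ B).card : ℚ) - 2) := by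
      intro B hB
      have hsatB := hsat_block hσ hB
      have e1 : ∑ x ∈ B, (m.factorial * hPhi ρ *
        (∏ B ∈ (hblocks π).erase (hcls π x), hw ρ B) * hrowv ρ (hcls π x) (hcls ρ x)) =
          m.factorial * hPhi ρ * (∏ B ∈ (hblocks π).erase B, hw ρ B) *
            ∑ c ∈ hbl ρ B, (c.card : ℚ) * hrowv ρ B c := by
        rw [← hsum_bl hsatB, Finset.mul_sum]
        apply Finset.sum_congr rfl
        intro c hc
        rw [hmem_bl] at hc
        rw [Finset.sum_congr rfl (g := fun _ => m.factorial * hPhi ρ *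
          (∏ B ∈ (hblocks π).erase B, hw ρ B) * hrowv ρ B c)]
        · rw [Finset.sum_const, nsmul_eq_mul]; ring
        · intro x hx
          rw [hblock_eq π hB (hc.2 hx), hblock_eq ρ hc.1 hx]
      have e2 : ∑ c ∈ hbl ρ B, (c.card : ℚ) * hrowv ρ B c =
          2 * ((B.card : ℚ) + ((hbl ρ B).card : ℚ) - 2) * (B.card : ℚ) ^ (((hbl ρ B).card : ℤ) - 3) := by
        rw [← hz_cutjoin' (fun c : Finset α => c.card) (hbl ρ B) ?_ ?_ (B.card : ℚ) (hcard_bl hsatB)]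
        · rw [← Finset.sum_add_distrib]
          apply Finset.sum_congr rfl
          intro c _
          rw [hrowv, mul_add, Finset.mul_sum]
          congr 1
          apply Finset.sum_congr rfl
          intro d _
          ring
        · intro c hc
          exact (Finset.card_pos.2 (hblock_nonempty ρ ((hmem_bl _ _ _).1 hc).1)).ne'
        · exact Finset.card_pos.1 (hbl_pos hσ hB)
      rw [e1, e2]
      have e3 : hW ρ π = (B.card : ℚ) ^ (((hbl ρ B).card : ℤ) - 3) *
          ∏ B ∈ (hblocks π).erase B, hw ρ B := by
        rw [hW, ← Finset.mul_prod_erase _ _ hB]; rfl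
      rw [e3]
      ring
    rw [Finset.sum_congr rfl hblk, ← Finset.mul_sum]
    have hs : ∑ B ∈ hblocks π, ((B.card : ℚ) + ((hbl ρ B).card : ℚ) - 2) = m + 1 := by
      rw [Finset.sum_sub_distrib, Finset.sum_add_distrib, hsum_card_blocks]
      have h1 := hsum_ell hσ
      have h2 : ∑ B ∈ hblocks π, ((hbl ρ B).card : ℚ) = ((hblocks ρ).card : ℚ) := by
        rw [← h1]; push_cast; rfl
      rw [h2, Finset.sum_const, nsmul_eq_mul]
      have h3 : (Fintype.card α : ℚ) + ((hblocks ρ).card : ℚ) = m + 1 + 2 * ((hblocks π).card : ℚ) := by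
        exact_mod_cast hdim
      linear_combination h3
    rw [hs, Nat.factorial_succ]
    push_cast
    ring

end mainform2


section counting
variable {α : Type*} [Fintype α] [DecidableEq α]

/-- the partition generated by a list of permutations -/
def hgen (l : List (Perm α)) : Setoid α := l.foldr (fun τ π => π ⊔ hcyc τ) ⊥

theorem hgen_le (l : List (Perm α)) (r : Setoid α) : hgen l ≤ r ↔ ∀ τ ∈ l, hcyc τ ≤ r := by
  induction l with
  | nil => simp [hgen]
  | cons τ l ih =>
    have : hgen (τ :: l) = hgen l ⊔ hcyc τ := rfl
    rw [this, sup_le_iff, ih]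
    simp only [List.mem_cons, forall_eq_or_imp]
    tauto

theorem hcyc_swap_le (x y : α) (r : Setoid α) : hcyc (swap x y) ≤ r ↔ r x y := by
  rw [hcyc_le_iff]
  constructor
  · intro h
    have := h x
    rwa [swap_apply_left] at this
  · intro h a
    by_cases h1 : a = x
    · rw [h1, swap_apply_left]; exact h
    · by_cases h2 : a = y
      · rw [h2, swap_apply_right]; exact r.symm' h
      · rw [swap_apply_of_ne_of_ne h1 h2]

theorem hsup_swap (π : Setoid α) (x y : α) : π ⊔ hcyc (swap x y) = hjn π x y := by
  apply le_antisymm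
  · refine sup_le (hle_jn π x y) ((hcyc_swap_le x y _).2 (hjn_xy π x y))
  · exact hjn_le le_sup_left ((hcyc_swap_le x y _).1 le_sup_right)

open Classical in
theorem hswap_sum (G : Perm α → ℚ) :
    2 * ∑ τ : Perm α, (if τ.IsSwap then G τ else 0) =
      ∑ x, ∑ y ∈ Finset.univ.erase x, G (swap x y) := by
  have h1 : 2 * ∑ τ : Perm α, (if τ.IsSwap then G τ else 0) =
      ∑ τ ∈ Finset.univ.filter (fun τ : Perm α => τ.IsSwap), ∑ x ∈ τ.support, G τ := by
    rw [← Finset.sum_filter, Finset.mul_sum]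
    apply Finset.sum_congr rfl
    intro τ hτ
    rw [Finset.mem_filter] at hτ
    obtain ⟨x, y, hxy, rfl⟩ := hτ.2
    rw [Finset.sum_const, Perm.card_support_swap hxy, nsmul_eq_mul]
    norm_num
  rw [h1, Finset.sum_sigma', Finset.sum_sigma']
  refine Finset.sum_bij' (fun q _ => ⟨q.2, q.1 q.2⟩) (fun p _ => ⟨swap p.1 p.2, p.1⟩) ?_ ?_ ?_ ?_ ?_
  · rintro ⟨τ, x⟩ h
    simp only [Finset.mem_sigma, Finset.mem_filter, Finset.mem_univ, true_and, Perm.mem_support,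
      Finset.mem_erase, and_true] at h ⊢
    exact h.2
  · rintro ⟨x, y⟩ h
    simp only [Finset.mem_sigma, Finset.mem_filter, Finset.mem_univ, true_and, Perm.mem_support,
      Finset.mem_erase, and_true] at h ⊢
    exact ⟨⟨x, y, h.symm, rfl⟩, by rw [swap_apply_left]; exact h⟩
  · rintro ⟨τ, x⟩ h
    simp only [Finset.mem_sigma, Finset.mem_filter, Finset.mem_univ, true_and, Perm.mem_support] at h
    obtain ⟨⟨a, b, hab, rfl⟩, h2⟩ := h
    have : swap x (swap a b x) = swap a b := by
      by_cases h3 : x = a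
      · rw [h3, swap_apply_left]
      · by_cases h4 : x = b
        · rw [h4, swap_apply_right, swap_comm]
        · exact absurd (swap_apply_of_ne_of_ne h3 h4) h2
    simp [this]
  · rintro ⟨x, y⟩ h
    simp
  · rintro ⟨τ, x⟩ h
    simp only [Finset.mem_sigma, Finset.mem_filter, Finset.mem_univ, true_and, Perm.mem_support] at h
    obtain ⟨⟨a, b, hab, rfl⟩, h2⟩ := h
    have : swap x (swap a b x) = swap a b := by
      by_cases h3 : x = a
      · rw [h3, swap_apply_left]
      · by_cases h4 : x = b
        · rw [h4, swap_apply_right, swap_comm]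
        · exact absurd (swap_apply_of_ne_of_ne h3 h4) h2
    simp [this]

open Classical in
theorem hcnt_eq (m : ℕ) : ∀ (σ : Perm α) (π : Setoid α),
    ∑ t : Fin m → Perm α, (if (∀ i, (t i).IsSwap) ∧ (List.ofFn t).prod = σ ∧
      hgen (List.ofFn t) = π then (1 : ℚ) else 0) = hN m σ π := by
  induction m with
  | zero =>
    intro σ π
    rw [Fintype.sum_unique, hN]
    simp only [List.ofFn_zero, List.prod_nil, IsEmpty.forall_iff, true_and]
    have : hgen ([] : List (Perm α)) = ⊥ := rfl
    rw [this]
    simp only [eq_comm]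
  | succ m ih =>
    intro σ π
    have h0 : hN (m + 1) σ π = (1 / 2) * ∑ x, ∑ y ∈ Finset.univ.erase x, hT m σ π x y := by
      rw [hN]; rfl
    have h1 : ∀ x y : α, hT m σ π x y = (fun τ : Perm α => ∑ π' : Setoid α,
        if π' ⊔ hcyc τ = π then hN m (τ * σ) π' else 0) (swap x y) := by
      intro x y
      simp only [hT, hsup_swap]
    rw [h0]
    simp only [h1]
    rw [← hswap_sum (fun τ : Perm α => ∑ π' : Setoid α,
        if π' ⊔ hcyc τ = π then hN m (τ * σ) π' else 0), ← mul_assoc, show (1 / 2 : ℚ) * 2 = 1 by norm_num, one_mul,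
      ← (Fin.consEquiv (fun _ : Fin (m + 1) => Perm α)).sum_comp, Fintype.sum_prod_type]
    apply Finset.sum_congr rfl
    intro τ _
    by_cases hτ : τ.IsSwap
    · rw [if_pos hτ]
      have hττ : τ * τ = 1 := by
        obtain ⟨x, y, _, rfl⟩ := hτ
        exact swap_mul_self x y
      simp only [← ih]
      have h2 : ∀ π' : Setoid α, (if π' ⊔ hcyc τ = π then
          ∑ t : Fin m → Perm α, (if (∀ i, (t i).IsSwap) ∧ (List.ofFn t).prod = τ * σ ∧
            hgen (List.ofFn t) = π' then (1 : ℚ) else 0) else 0) =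
          ∑ t : Fin m → Perm α, (if hgen (List.ofFn t) = π' then 
            (if (∀ i, (t i).IsSwap) ∧ (List.ofFn t).prod = τ * σ ∧
             hgen (List.ofFn t) ⊔ hcyc τ = π then (1 : ℚ) else 0) else 0) := by
        intro π'
        by_cases h3 : π' ⊔ hcyc τ = π
        · rw [if_pos h3]
          apply Finset.sum_congr rfl
          intro t _
          by_cases h4 : hgen (List.ofFn t) = π'
          · subst h4; simp [h3]
          · simp [h4]
        · rw [if_neg h3]
          symm
          apply Finset.sum_eq_zero
          intro t _
          by_cases h4 : hgen (List.ofFn t) = π'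
          · subst h4; simp [h3]
          · simp [h4]
      rw [Finset.sum_congr rfl (fun π' _ => h2 π'), Finset.sum_comm]
      apply Finset.sum_congr rfl
      intro t _
      rw [Finset.sum_ite_eq]
      simp only [Finset.mem_univ, if_true]
      congr 1
      simp only [Fin.consEquiv_apply, List.ofFn_succ, Fin.cons_zero, Fin.cons_succ, List.prod_cons,
        Fin.forall_fin_succ, hτ, true_and]
      have h5 : hgen (τ :: List.ofFn t) = hgen (List.ofFn t) ⊔ hcyc τ := rfl
      have h6 : τ * (List.ofFn t).prod = σ ↔ (List.ofFn t).prod = τ * σ := by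
        constructor
        · intro h; rw [← h, ← mul_assoc, hττ, one_mul]
        · intro h; rw [h, ← mul_assoc, hττ, one_mul]
      rw [h5, h6]
    · rw [if_neg hτ]
      apply Finset.sum_eq_zero
      intro t _
      rw [if_neg]
      rintro ⟨h, -⟩
      exact hτ (h 0)

/-- the three-cycle `a → b → c → a` -/
def hc3 (a b c : α) : Perm α := swap a b * swap b c

theorem hc3_type {a b c : α} (hab : a ≠ b) (hac : a ≠ c) (hbc : b ≠ c) :
    (hc3 a b c).cycleType = {3} := by
  have := Perm.isThreeCycle_swap_mul_swap_same hab.symm hbc hac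
  rw [swap_comm] at this
  exact this

theorem hc3_a {a b c : α} (hab : a ≠ b) (hac : a ≠ c) : hc3 a b c a = b := by
  rw [hc3, Perm.mul_apply, swap_apply_of_ne_of_ne hab hac, swap_apply_left]

theorem hc3_b {a b c : α} (hac : a ≠ c) (hbc : b ≠ c) : hc3 a b c b = c := by
  rw [hc3, Perm.mul_apply, swap_apply_left, swap_apply_of_ne_of_ne hac.symm hbc.symm]

theorem hc3_c {a b c : α} : hc3 a b c c = a := by
  rw [hc3, Perm.mul_apply, swap_apply_right, swap_apply_right]

theorem hc3_ne {a b c z : α} (ha : z ≠ a) (hb : z ≠ b) (hc : z ≠ c) : hc3 a b c z = z := by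
  rw [hc3, Perm.mul_apply, swap_apply_of_ne_of_ne hb hc, swap_apply_of_ne_of_ne ha hb]

theorem hc3_spec {σ : Perm α} (h : σ.cycleType = {3}) {a : α} (ha : σ a ≠ a) :
    a ≠ σ a ∧ a ≠ σ (σ a) ∧ σ a ≠ σ (σ a) ∧ hc3 a (σ a) (σ (σ a)) = σ := by
  have h3 : Perm.IsThreeCycle σ := h
  have hcube : ∀ z, σ (σ (σ z)) = z := by
    intro z
    have h4 := pow_orderOf_eq_one σ
    rw [h3.orderOf] at h4
    have := congrArg (fun f : Perm α => f z) h4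
    simpa [pow_succ, Perm.mul_apply] using this
  have h1 : a ≠ σ a := ha.symm
  have h2 : a ≠ σ (σ a) := by
    intro h5
    have h6 := hcube a
    rw [← h5] at h6
    exact ha h6
  have h4 : σ a ≠ σ (σ a) := fun h5 => h1 (σ.injective h5)
  refine ⟨h1, h2, h4, ?_⟩
  have hsupp : σ.support = {a, σ a, σ (σ a)} := by
    symm
    apply Finset.eq_of_subset_of_card_le
    · intro z hz
      simp only [Finset.mem_insert, Finset.mem_singleton] at hz
      rw [Perm.mem_support]
      rcases hz with rfl | rfl | rfl
      · exact ha
      · exact h4.symm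
      · rw [hcube]; exact h2
    · rw [h3.card_support, Finset.card_insert_of_notMem, Finset.card_pair h4]
      simp [h1, h2]
  ext z
  by_cases hz : z ∈ σ.support
  · rw [hsupp] at hz
    simp only [Finset.mem_insert, Finset.mem_singleton] at hz
    rcases hz with h | h | h
    · rw [h, hc3_a h1 h2]
    · rw [h, hc3_b h2 h4]
    · rw [h, hc3_c, hcube]
  · have hz' : σ z = z := by simpa using hz
    rw [hsupp] at hz
    simp only [Finset.mem_insert, Finset.mem_singleton, not_or] at hz
    rw [hc3_ne hz.1 hz.2.1 hz.2.2, hz']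

/-- distinctness of triples -/
def hdist (a b c : α) : Prop := a ≠ b ∧ a ≠ c ∧ b ≠ c

open Classical in
theorem h3sum (G : Perm α → ℚ) :
    3 * ∑ σ : Perm α, (if σ.cycleType = {3} then G σ else 0) =
      ∑ a, ∑ b, ∑ c, (if hdist a b c then G (hc3 a b c) else 0) := by
  have h1 : 3 * ∑ τ : Perm α, (if τ.cycleType = {3} then G τ else 0) =
      ∑ τ ∈ Finset.univ.filter (fun τ : Perm α => τ.cycleType = {3}), ∑ x ∈ τ.support, G τ := by
    rw [← Finset.sum_filter, Finset.mul_sum]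
    apply Finset.sum_congr rfl
    intro τ hτ
    rw [Finset.mem_filter] at hτ
    have h3 : Perm.IsThreeCycle τ := hτ.2
    rw [Finset.sum_const, h3.card_support, nsmul_eq_mul]
    norm_num
  have h2 : ∑ a, ∑ b, ∑ c, (if hdist a b c then G (hc3 a b c) else 0) =
      ∑ p : α × α × α, (if hdist p.1 p.2.1 p.2.2 then G (hc3 p.1 p.2.1 p.2.2) else 0) := by
    rw [Fintype.sum_prod_type]
    apply Finset.sum_congr rfl
    intro a _
    rw [Fintype.sum_prod_type]
  rw [h1, h2, ← Finset.sum_filter, Finset.sum_sigma']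
  refine Finset.sum_bij' (fun q _ => (q.2, q.1 q.2, q.1 (q.1 q.2)))
    (fun p _ => ⟨hc3 p.1 p.2.1 p.2.2, p.1⟩) ?_ ?_ ?_ ?_ ?_
  · rintro ⟨τ, x⟩ h
    simp only [Finset.mem_sigma, Finset.mem_filter, Finset.mem_univ, true_and, Perm.mem_support] at h ⊢
    obtain ⟨h1, h2, h3, -⟩ := hc3_spec h.1 h.2
    exact ⟨h1, h2, h3⟩
  · rintro ⟨a, b, c⟩ h
    simp only [Finset.mem_sigma, Finset.mem_filter, Finset.mem_univ, true_and, Perm.mem_support] at h ⊢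
    obtain ⟨h1, h2, h3⟩ := h
    exact ⟨hc3_type h1 h2 h3, by rw [hc3_a h1 h2]; exact h1.symm⟩
  · rintro ⟨τ, x⟩ h
    simp only [Finset.mem_sigma, Finset.mem_filter, Finset.mem_univ, true_and, Perm.mem_support] at h ⊢
    rw [(hc3_spec h.1 h.2).2.2.2]
  · rintro ⟨a, b, c⟩ h
    simp only [Finset.mem_filter, Finset.mem_univ, true_and] at h ⊢
    obtain ⟨h1, h2, h3⟩ := h
    rw [hc3_a h1 h2, hc3_b h2 h3]
  · rintro ⟨τ, x⟩ h
    simp only [Finset.mem_sigma, Finset.mem_filter, Finset.mem_univ, true_and, Perm.mem_support] at h ⊢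
    rw [(hc3_spec h.1 h.2).2.2.2]

theorem htrans_iff {m : ℕ} (s1 s2 : Perm α) (t : Fin m → Perm α) :
    (∀ x y : α, ∃ g ∈ Subgroup.closure ({s1, s2} ∪ Set.range t), g x = y) ↔
      hgen (List.ofFn t) ⊔ hcyc s1 ⊔ hcyc s2 = ⊤ := by
  constructor
  · intro h
    rw [eq_top_iff]
    intro x y hdummy
    clear hdummy
    obtain ⟨g, hg, rfl⟩ := h x y
    clear h
    set R := hgen (List.ofFn t) ⊔ hcyc s1 ⊔ hcyc s2 with hR
    have hgenR : ∀ τ ∈ ({s1, s2} ∪ Set.range t : Set (Perm α)), hcyc τ ≤ R := by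
      rintro τ ((rfl | rfl) | ⟨i, rfl⟩)
      · exact le_sup_right.trans le_sup_left
      · exact le_sup_right
      · exact ((hgen_le (List.ofFn t) _).1 le_rfl (t i) (by simp [List.mem_ofFn])).trans
          (le_sup_left.trans le_sup_left)
    suffices H : ∀ x, R x (g x) from H x
    induction hg using Subgroup.closure_induction with
    | mem τ hτ => exact (hcyc_le_iff τ R).1 (hgenR τ hτ)
    | one => intro x; exact R.refl' x
    | mul a b _ _ ha hb => intro x; exact R.trans' (hb x) (ha (b x))
    | inv a _ ha =>
      intro x
      have := ha (a⁻¹ x)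
      rw [← Perm.mul_apply, mul_inv_cancel, Perm.one_apply] at this
      exact R.symm' this
  · intro h
    let O : Setoid α :=
      { r := fun x y => ∃ g ∈ Subgroup.closure ({s1, s2} ∪ Set.range t), g x = y
        iseqv := ⟨fun x => ⟨1, Subgroup.one_mem _, rfl⟩,
          fun {x y} ⟨g, hg, hxy⟩ => ⟨g⁻¹, Subgroup.inv_mem _ hg, by
            rw [← hxy, ← Perm.mul_apply, inv_mul_cancel, Perm.one_apply]⟩,
          fun {x y z} ⟨g, hg, hxy⟩ ⟨g', hg', hyz⟩ =>
            ⟨g' * g, Subgroup.mul_mem _ hg' hg, by rw [Perm.mul_apply, hxy, hyz]⟩⟩ }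
    have hO : ∀ τ ∈ ({s1, s2} ∪ Set.range t : Set (Perm α)), hcyc τ ≤ O := by
      intro τ hτ
      rw [hcyc_le_iff]
      intro a
      exact ⟨τ, Subgroup.subset_closure hτ, rfl⟩
    have : hgen (List.ofFn t) ⊔ hcyc s1 ⊔ hcyc s2 ≤ O := by
      refine sup_le (sup_le ?_ (hO _ (by simp))) (hO _ (by simp))
      rw [hgen_le]
      intro τ hτ
      rw [List.mem_ofFn] at hτ
      obtain ⟨i, rfl⟩ := hτ
      exact hO _ (Or.inr ⟨i, rfl⟩)
    rw [h] at this
    intro x y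
    exact this (show (⊤ : Setoid α) x y by simp [Setoid.top_def])

open Classical in
noncomputable def hF (m : ℕ) (s1 s2 : Perm α) : ℚ :=
  ∑ π : Setoid α, if π ⊔ hcyc s1 ⊔ hcyc s2 = ⊤ then hN m (s1 * s2)⁻¹ π else 0

open Classical in
theorem hF_eq (m : ℕ) (s1 s2 : Perm α) :
    ∑ t : Fin m → Perm α, (if (∀ i, (t i).IsSwap) ∧ s1 * s2 * (List.ofFn t).prod = 1 ∧
      (∀ x y : α, ∃ g ∈ Subgroup.closure ({s1, s2} ∪ Set.range t), g x = y)
      then (1 : ℚ) else 0) = hF m s1 s2 := by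
  unfold hF
  simp only [← hcnt_eq, htrans_iff]
  have h2 : ∀ π' : Setoid α, (if π' ⊔ hcyc s1 ⊔ hcyc s2 = ⊤ then
      ∑ t : Fin m → Perm α, (if (∀ i, (t i).IsSwap) ∧ (List.ofFn t).prod = (s1 * s2)⁻¹ ∧
        hgen (List.ofFn t) = π' then (1 : ℚ) else 0) else 0) =
      ∑ t : Fin m → Perm α, (if hgen (List.ofFn t) = π' then 
        (if (∀ i, (t i).IsSwap) ∧ (List.ofFn t).prod = (s1 * s2)⁻¹ ∧
         hgen (List.ofFn t) ⊔ hcyc s1 ⊔ hcyc s2 = ⊤ then (1 : ℚ) else 0) else 0) := by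
    intro π'
    by_cases h3 : π' ⊔ hcyc s1 ⊔ hcyc s2 = ⊤
    · rw [if_pos h3]
      apply Finset.sum_congr rfl
      intro t _
      by_cases h4 : hgen (List.ofFn t) = π'
      · subst h4; simp [h3]
      · simp [h4]
    · rw [if_neg h3]
      symm
      apply Finset.sum_eq_zero
      intro t _
      by_cases h4 : hgen (List.ofFn t) = π'
      · subst h4; simp [h3]
      · simp [h4]
  rw [Finset.sum_congr rfl (fun π' _ => h2 π'), Finset.sum_comm]
  apply Finset.sum_congr rfl
  intro t _
  rw [Finset.sum_ite_eq]
  simp only [Finset.mem_univ, if_true]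
  have h7 : s1 * s2 * (List.ofFn t).prod = 1 ↔ (List.ofFn t).prod = (s1 * s2)⁻¹ := by
    rw [mul_eq_one_iff_inv_eq, eq_comm]
  simp only [h7]

open Classical in
theorem hcount (m : ℕ) :
    9 * (Nat.card {p : Perm α × Perm α × (Fin m → Perm α) //
      p.1.cycleType = {3} ∧ p.2.1.cycleType = {3} ∧ (∀ i, (p.2.2 i).IsSwap) ∧
      p.1 * p.2.1 * (List.ofFn p.2.2).prod = 1 ∧
      (∀ x y : α, ∃ g ∈ Subgroup.closure ({p.1, p.2.1} ∪ Set.range p.2.2), g x = y)} : ℚ) =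
    ∑ a, ∑ b, ∑ c, (if hdist a b c then
      ∑ x : α, ∑ y : α, ∑ z : α, (if hdist x y z then hF m (hc3 a b c) (hc3 x y z) else 0) else 0) := by
  have h1 := h3sum (α := α) (fun s1 => ∑ x : α, ∑ y : α, ∑ z : α,
    (if hdist x y z then hF m s1 (hc3 x y z) else 0))
  rw [← h1]
  have h2 : ∀ s1 : Perm α, ∑ x : α, ∑ y : α, ∑ z : α, (if hdist x y z then hF m s1 (hc3 x y z) else 0) =
      3 * ∑ s2 : Perm α, (if s2.cycleType = {3} then hF m s1 s2 else 0) :=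
    fun s1 => (h3sum (fun s2 => hF m s1 s2)).symm
  simp only [h2]
  rw [Nat.card_eq_fintype_card, Fintype.card_subtype, Finset.card_filter]
  push_cast
  rw [Fintype.sum_prod_type, Finset.mul_sum, Finset.mul_sum]
  apply Finset.sum_congr rfl
  intro s1 _
  rw [Fintype.sum_prod_type]
  by_cases hs1 : s1.cycleType = {3}
  · rw [if_pos hs1, ← mul_assoc, show (3 : ℚ) * 3 = 9 by norm_num]
    congr 1
    apply Finset.sum_congr rfl
    intro s2 _
    by_cases hs2 : s2.cycleType = {3}
    · rw [if_pos hs2, ← hF_eq]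
      simp [hs1, hs2]
    · simp [hs2]
  · simp [hs1]

end counting


section values
variable {α : Type*} [Fintype α] [DecidableEq α]

theorem hc3_le {a b c : α} (h : hdist a b c) (r : Setoid α) :
    hcyc (hc3 a b c) ≤ r ↔ r a b ∧ r b c := by
  obtain ⟨hab, hac, hbc⟩ := h
  rw [hcyc_le_iff]
  constructor
  · intro h
    have h1 := h a
    have h2 := h b
    rw [hc3_a hab hac] at h1
    rw [hc3_b hac hbc] at h2
    exact ⟨h1, h2⟩
  · rintro ⟨h1, h2⟩ z
    by_cases ha : z = a
    · rw [ha, hc3_a hab hac]; exact h1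
    · by_cases hb : z = b
      · rw [hb, hc3_b hac hbc]; exact h2
      · by_cases hc : z = c
        · rw [hc, hc3_c]; exact r.symm' (r.trans' h1 h2)
        · rw [hc3_ne ha hb hc]

theorem hsup_c3 {a b c : α} (h : hdist a b c) (π : Setoid α) :
    π ⊔ hcyc (hc3 a b c) = hjn (hjn π a b) b c := by
  apply le_antisymm
  · refine sup_le ((hle_jn π a b).trans (hle_jn _ b c)) ((hc3_le h _).2 ⟨?_, hjn_xy _ b c⟩)
    exact hle_jn _ b c (hjn_xy π a b)
  · have h1 := (hc3_le h (π ⊔ hcyc (hc3 a b c))).1 le_sup_right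
    exact hjn_le (hjn_le le_sup_left h1.1) h1.2

theorem hc3_rot {a b c : α} (h : hdist a b c) : hc3 a b c = hc3 b c a := by
  obtain ⟨hab, hac, hbc⟩ := h
  ext z
  by_cases ha : z = a
  · rw [ha, hc3_a hab hac, hc3_c]
  · by_cases hb : z = b
    · rw [hb, hc3_b hac hbc, hc3_a hbc hab.symm]
    · by_cases hc : z = c
      · rw [hc, hc3_c, hc3_b hab.symm hac.symm]
      · rw [hc3_ne ha hb hc, hc3_ne hb hc ha]

theorem hdist_rot {a b c : α} (h : hdist a b c) : hdist b c a :=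
  ⟨h.2.2, h.1.symm, h.2.1.symm⟩

theorem hPhi_bot : hPhi (⊥ : Setoid α) = 1 := by
  unfold hPhi
  apply Finset.prod_eq_one
  intro c hc
  obtain ⟨x, rfl⟩ := (hmem_blocks _ _).1 hc
  rw [hcls_bot, Finset.card_singleton, hzphi_one]

/-- attaching a singleton block -/
theorem hattach {ρ : Setoid α} {x y : α} (hx : hcls ρ x = {x}) (hxy : x ≠ y) :
    ¬ ρ x y ∧ (hblocks (hjn ρ x y)).card + 1 = (hblocks ρ).card ∧
    (hcls (hjn ρ x y) x).card = (hcls ρ y).card + 1 ∧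
    hPhi (hjn ρ x y) = hPhi ρ * (hzphi ((hcls ρ y).card + 1) / hzphi (hcls ρ y).card) ∧
    ∀ w, w ≠ x → w ≠ y → hcls ρ w = {w} → hcls (hjn ρ x y) w = {w} := by
  have hn : ¬ ρ x y := by
    rw [← hmem_cls, hx, Finset.mem_singleton]; exact hxy.symm
  refine ⟨hn, hcard_jn ρ x y hn, ?_, ?_, ?_⟩
  · rw [hjn_cls_x, hcard_union_cls hn, hx, Finset.card_singleton, add_comm]
  · rw [hPhi_jn hn, hx, Finset.card_singleton, hzphi_one, one_mul, add_comm]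
  · intro w h1 h2 hw
    rw [hjn_cls_ne, hw]
    · rw [← hmem_cls, hw, Finset.mem_singleton]; exact h1.symm
    · rw [← hmem_cls, hw, Finset.mem_singleton]; exact h2.symm

theorem hW_top [Nonempty α] (ρ : Setoid α) :
    hW ρ ⊤ = (Fintype.card α : ℚ) ^ (((hblocks ρ).card : ℤ) - 3) := by
  unfold hW
  rw [hblocks_top, Finset.prod_singleton, hw, hbl_univ, Finset.card_univ]

theorem hF_top [Nonempty α] (m : ℕ) (s1 s2 : Perm α) (h1 : hcyc s1 ≤ hcyc (s1 * s2))
    (h2 : hcyc s2 ≤ hcyc (s1 * s2))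
    (hd : Fintype.card α + (hblocks (hcyc (s1 * s2))).card = m + 2) :
    hF m s1 s2 = m.factorial * (hPhi (hcyc (s1 * s2)) *
      (Fintype.card α : ℚ) ^ (((hblocks (hcyc (s1 * s2))).card : ℤ) - 3)) := by
  unfold hF
  rw [Finset.sum_eq_single (⊤ : Setoid α)]
  · rw [if_pos (by simp), hN_form, hcyc_inv, hW_top]
    · exact le_top
    · rw [hcyc_inv, hblocks_top, Finset.card_singleton, hd]
  · intro π _ hπ
    split_ifs with h
    · by_contra hne
      have h3 := (hN_ne _ _ _ hne).1
      rw [hcyc_inv] at h3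
      apply hπ
      rw [← h, sup_eq_left.2 (h1.trans h3), sup_eq_left.2 (h2.trans h3)]
    · rfl
  · intro h; exact absurd (Finset.mem_univ _) h

theorem hcyc_swap_one {x y : α} (h : x ≠ y) : hcyc (swap x y) = hjn ⊥ x y := by
  have := hcyc_join_eq (1 : Perm α) x y (by rw [hcyc_one, Setoid.bot_def]; exact h)
  rwa [mul_one, hcyc_one] at this

/-- disjoint supports -/
theorem hF_v0 [Nonempty α] (m : ℕ) (hm : m + 6 = 2 * Fintype.card α) {a b c x y z : α}
    (h1 : hdist a b c) (h2 : hdist x y z)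
    (h3 : ∀ w, (w = a ∨ w = b ∨ w = c) → w ≠ x ∧ w ≠ y ∧ w ≠ z) :
    hF m (hc3 a b c) (hc3 x y z) = m.factorial * (hzphi 3 ^ 2 *
      (Fintype.card α : ℚ) ^ ((Fintype.card α : ℤ) - 7)) := by
  obtain ⟨hax, hay, haz⟩ := h3 a (by simp)
  obtain ⟨hbx, hby, hbz⟩ := h3 b (by simp)
  obtain ⟨hcx, hcy, hcz⟩ := h3 c (by simp)
  have d1 := h1
  have d2 := h2
  obtain ⟨hab, hac, hbc⟩ := h1
  obtain ⟨hxy, hxz, hyz⟩ := h2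
  obtain ⟨n1, l1, k1, p1, s1⟩ := hattach (hcls_bot y) hyz
  have e1 : hcyc (swap y z) = hjn ⊥ y z := hcyc_swap_one hyz
  rw [← e1] at l1 k1 p1 s1
  rw [hcls_bot, Finset.card_singleton] at k1 p1
  obtain ⟨n2, l2, k2, p2, s2⟩ := hattach (s1 x hxy hxz (hcls_bot x)) hxy
  rw [← hcyc_join_eq _ _ _ n2] at l2 k2 p2 s2
  have r2 := hcyc_join_eq _ _ _ n2
  obtain ⟨n3, l3, k3, p3, s3⟩ := hattach (s2 b hbx hby (s1 b hby hbz (hcls_bot b))) hbc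
  rw [← hcyc_join_eq _ _ _ n3] at l3 k3 p3 s3
  have r3 := hcyc_join_eq _ _ _ n3
  obtain ⟨n4, l4, k4, p4, s4⟩ := hattach (s3 a hab hac (s2 a hax hay (s1 a hay haz (hcls_bot a)))) hab
  rw [← hcyc_join_eq _ _ _ n4] at l4 k4 p4 s4
  have r4 := hcyc_join_eq _ _ _ n4
  rw [s2 c hcx hcy (s1 c hcy hcz (hcls_bot c)), Finset.card_singleton] at k3 p3
  rw [k3] at k4 p4
  rw [k1] at k2 p2
  have hs : hc3 a b c * hc3 x y z = swap a b * (swap b c * (swap x y * swap y z)) := by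
    simp only [hc3, mul_assoc]
  rw [hcard_bot] at l1
  rw [hF_top, hs]
  · rw [p4, p3, p2, p1, hPhi_bot, hzphi_one]
    have hp2 := (hzphi_pos 2 (by norm_num)).ne'
    have : (((hblocks (hcyc (swap a b * (swap b c * (swap x y * swap y z))))).card : ℤ) - 3) =
      (Fintype.card α : ℤ) - 7 := by omega
    rw [this]
    congr 2
    norm_num
    field_simp
  · rw [hs, hc3_le d1, r4]
    refine ⟨hjn_xy _ _ _, hle_jn _ _ _ ?_⟩
    rw [r3]; exact hjn_xy _ _ _
  · rw [hs, hc3_le d2, r4, r3, r2, e1]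
    refine ⟨hle_jn _ _ _ (hle_jn _ _ _ (hjn_xy _ _ _)), hle_jn _ _ _ (hle_jn _ _ _ (hle_jn _ _ _ (hjn_xy _ _ _)))⟩
  · rw [hs]; omega

/-- one common point -/
theorem hF_v1 [Nonempty α] (m : ℕ) (hm : m + 6 = 2 * Fintype.card α) {p q r y z : α}
    (h1 : hdist p q r) (h2 : hdist r y z)
    (h3 : ∀ w, (w = p ∨ w = q) → w ≠ y ∧ w ≠ z) :
    hF m (hc3 p q r) (hc3 r y z) = m.factorial * (hzphi 5 *
      (Fintype.card α : ℚ) ^ ((Fintype.card α : ℤ) - 7)) := by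
  obtain ⟨hpy, hpz⟩ := h3 p (by simp)
  obtain ⟨hqy, hqz⟩ := h3 q (by simp)
  have d1 := h1
  have d2 := h2
  obtain ⟨hpq, hpr, hqr⟩ := h1
  obtain ⟨hry, hrz, hyz⟩ := h2
  obtain ⟨n1, l1, k1, p1, s1⟩ := hattach (hcls_bot y) hyz
  have e1 : hcyc (swap y z) = hjn ⊥ y z := hcyc_swap_one hyz
  rw [← e1] at l1 k1 p1 s1
  rw [hcls_bot, Finset.card_singleton] at k1 p1
  obtain ⟨n2, l2, k2, p2, s2⟩ := hattach (s1 r hry hrz (hcls_bot r)) hry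
  rw [← hcyc_join_eq _ _ _ n2] at l2 k2 p2 s2
  have r2 := hcyc_join_eq _ _ _ n2
  obtain ⟨n3, l3, k3, p3, s3⟩ := hattach (s2 q hqr hqy (s1 q hqy hqz (hcls_bot q))) hqr
  rw [← hcyc_join_eq _ _ _ n3] at l3 k3 p3 s3
  have r3 := hcyc_join_eq _ _ _ n3
  obtain ⟨n4, l4, k4, p4, s4⟩ := hattach (s3 p hpq hpr (s2 p hpr hpy (s1 p hpy hpz (hcls_bot p)))) hpq
  rw [← hcyc_join_eq _ _ _ n4] at l4 k4 p4 s4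
  have r4 := hcyc_join_eq _ _ _ n4
  rw [k1] at k2 p2
  rw [k2] at k3 p3
  rw [k3] at k4 p4
  have hs : hc3 p q r * hc3 r y z = swap p q * (swap q r * (swap r y * swap y z)) := by
    simp only [hc3, mul_assoc]
  rw [hcard_bot] at l1
  rw [hF_top, hs]
  · rw [p4, p3, p2, p1, hPhi_bot, hzphi_one]
    have hp2 := (hzphi_pos 2 (by norm_num)).ne'
    have hp3 := (hzphi_pos 3 (by norm_num)).ne'
    have hp4 := (hzphi_pos 4 (by norm_num)).ne'
    have : (((hblocks (hcyc (swap p q * (swap q r * (swap r y * swap y z))))).card : ℤ) - 3) =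
      (Fintype.card α : ℤ) - 7 := by omega
    rw [this]
    congr 2
    norm_num
    field_simp
  · rw [hs, hc3_le d1, r4]
    refine ⟨hjn_xy _ _ _, hle_jn _ _ _ ?_⟩
    rw [r3]; exact hjn_xy _ _ _
  · rw [hs, hc3_le d2, r4, r3, r2, e1]
    refine ⟨hle_jn _ _ _ (hle_jn _ _ _ (hjn_xy _ _ _)), hle_jn _ _ _ (hle_jn _ _ _ (hle_jn _ _ _ (hjn_xy _ _ _)))⟩
  · rw [hs]; omega

end values


section values2

/-- closed form of the two-part convolution with unit weights -/
noncomputable def hQ (K : ℕ) (a b : ℚ) : ℚ :=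
  (a + b) / (a ^ 2 * b) * (a + b + K) ^ ((K : ℤ) - 1) -
    K * ((a + b + 1) / (a * b * (a + 1))) * (a + b + K) ^ ((K : ℤ) - 2)

noncomputable def hP (K : ℕ) (a b : ℚ) : ℚ := (hQ K a b + hQ K b a) / (a + b + K)

theorem hz_one {ι : Type*} [DecidableEq ι] (C : Finset ι) (a b : ℚ) (ha : 0 < a) (hb : 0 < b) :
    hzZ (fun _ : ι => (1 : ℚ)) 2 2 C a b = hP C.card a b := by
  have h := hzZ_total (fun _ : ι => (1 : ℚ)) (fun _ => one_pos) 1 1 C a b ha hb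
  norm_num at h
  rw [hzZ_symm _ 1 2, hz_Q _ (fun _ => one_pos) C a b ha hb, hz_Q _ (fun _ => one_pos) C b a hb ha] at h
  simp only [Finset.sum_const, nsmul_eq_mul, mul_one, one_mul] at h
  have hpos : a + b + (C.card : ℚ) ≠ 0 := by positivity
  rw [hP, eq_div_iff hpos, mul_comm, h, hQ, hQ]
  ring

variable {α : Type*} [Fintype α] [DecidableEq α]

theorem hF_split [Nonempty α] (m : ℕ) (s1 s2 : Perm α) (x y : α)
    (hs : ∀ π, hcyc (s1 * s2) ≤ π → π ⊔ hcyc s1 ⊔ hcyc s2 = hjn π x y)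
    (hn : ¬ hcyc (s1 * s2) x y)
    (hd : Fintype.card α + (hblocks (hcyc (s1 * s2))).card = m + 4) :
    hF m s1 s2 = m.factorial * (hPhi (hcyc (s1 * s2)) *
      hzZ (fun c : Finset α => (c.card : ℚ)) 2 2
          (((hblocks (hcyc (s1 * s2))).erase (hcls (hcyc (s1 * s2)) x)).erase
            (hcls (hcyc (s1 * s2)) y))
          (hcls (hcyc (s1 * s2)) x).card (hcls (hcyc (s1 * s2)) y).card) := by
  classical
  set ρ := hcyc (s1 * s2) with hρ
  have h := hsplit_sum (ρ := ρ) (π := ⊤) le_top (x := x) (y := y) (by rw [Setoid.top_def]; trivial) hn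
  rw [hcls_top, hblocks_top, hbl_univ] at h
  simp only [Finset.erase_singleton, Finset.prod_empty, one_mul] at h
  rw [← h, Finset.mul_sum, Finset.mul_sum, hF]
  apply Finset.sum_congr rfl
  intro π _
  by_cases h1 : ρ ≤ π
  · rw [hs π h1]
    by_cases h2 : hjn π x y = ⊤
    · by_cases h3 : π x y
      · rw [if_pos h2, if_neg (by tauto), mul_zero, mul_zero]
        rw [hjn_eq_self h3] at h2
        by_contra hne
        have h4 := (hN_ne _ _ _ hne).2
        rw [hcyc_inv, h2, hblocks_top, Finset.card_singleton, ← hρ] at h4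
        omega
      · rw [if_pos h2, if_pos ⟨h2, h3, h1⟩, hN_form, hcyc_inv]
        · rw [hcyc_inv]; exact h1
        · have := hcard_jn π x y h3
          rw [h2, hblocks_top, Finset.card_singleton] at this
          rw [hcyc_inv, ← hρ]; omega
    · rw [if_neg h2, if_neg (by tauto)]; simp
  · have h0 : ¬ (hjn π x y = ⊤ ∧ ¬ π x y ∧ ρ ≤ π) := fun h => h1 h.2.2
    simp only [h0, if_false, mul_zero]
    split_ifs
    · by_contra hne
      have h4 := (hN_ne _ _ _ hne).1
      rw [hcyc_inv] at h4
      exact h1 h4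
    · rfl

theorem hC_card {ρ : Setoid α} {x y : α} (hn : ¬ ρ x y) :
    (((hblocks ρ).erase (hcls ρ x)).erase (hcls ρ y)).card + 2 = (hblocks ρ).card := by
  have h1 : hcls ρ y ∈ (hblocks ρ).erase (hcls ρ x) := by
    rw [Finset.mem_erase]
    refine ⟨fun h => hn ?_, hcls_mem ρ y⟩
    rw [← hmem_cls, ← h]; exact hself_cls ρ y
  have h2 := Finset.card_erase_add_one h1
  have h3 := Finset.card_erase_add_one (hcls_mem ρ x)
  omega

theorem hC_one {ρ : Setoid α} {x y : α} (h : ∀ w, ¬ ρ w x → ¬ ρ w y → hcls ρ w = {w}) :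
    ∀ c ∈ ((hblocks ρ).erase (hcls ρ x)).erase (hcls ρ y), ((c.card : ℚ)) = 1 := by
  intro c hc
  rw [Finset.mem_erase, Finset.mem_erase] at hc
  obtain ⟨h1, h2, h3⟩ := hc
  obtain ⟨w, rfl⟩ := (hmem_blocks _ _).1 h3
  rw [h w, Finset.card_singleton, Nat.cast_one]
  · intro h4; exact h2 ((hcls_eq_iff _ _ _).2 h4)
  · intro h4; exact h1 ((hcls_eq_iff _ _ _).2 h4)

theorem hF_split1 [Nonempty α] (m : ℕ) (s1 s2 : Perm α) (x y : α)
    (hs : ∀ π, hcyc (s1 * s2) ≤ π → π ⊔ hcyc s1 ⊔ hcyc s2 = hjn π x y)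
    (hn : ¬ hcyc (s1 * s2) x y)
    (hd : Fintype.card α + (hblocks (hcyc (s1 * s2))).card = m + 4)
    (h1 : ∀ w, ¬ hcyc (s1 * s2) w x → ¬ hcyc (s1 * s2) w y → hcls (hcyc (s1 * s2)) w = {w}) :
    hF m s1 s2 = m.factorial * (hPhi (hcyc (s1 * s2)) *
      hP ((hblocks (hcyc (s1 * s2))).card - 2)
          (hcls (hcyc (s1 * s2)) x).card (hcls (hcyc (s1 * s2)) y).card) := by
  rw [hF_split m s1 s2 x y hs hn hd, hzZ_congr (x' := fun _ => 1) _ _ _ _ _ (hC_one h1), hz_one,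
    ← hC_card hn, Nat.add_sub_cancel]
  · exact_mod_cast hcls_card_pos _ _
  · exact_mod_cast hcls_card_pos _ _

theorem hF_v2 [Nonempty α] (m : ℕ) (hm : m + 6 = 2 * Fintype.card α) {a b c d : α}
    (h1 : hdist a b c) (hda : d ≠ a) (hdb : d ≠ b) (hdc : d ≠ c) :
    hF m (hc3 a b c) (hc3 a b d) = m.factorial * (hzphi 2 ^ 2 * hP (Fintype.card α - 4) 2 2) := by
  have d1 := h1
  obtain ⟨hab, hac, hbc⟩ := h1
  have d2 : hdist a b d := ⟨hab, hda.symm, hdb.symm⟩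
  have hs : hc3 a b c * hc3 a b d = swap a c * swap b d := by
    ext z
    rw [Perm.mul_apply, Perm.mul_apply]
    by_cases za : z = a
    · rw [za, hc3_a hab hda.symm, hc3_b hac hbc, swap_apply_of_ne_of_ne hab hda.symm, swap_apply_left]
    by_cases zb : z = b
    · rw [zb, hc3_b hda.symm hdb.symm, hc3_ne hda hdb hdc, swap_apply_left, swap_apply_of_ne_of_ne hda hdc]
    by_cases zd : z = d
    · rw [zd, hc3_c, hc3_a hab hac, swap_apply_right, swap_apply_of_ne_of_ne hab.symm hbc]
    rw [hc3_ne za zb zd, swap_apply_of_ne_of_ne zb zd]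
    by_cases zc : z = c
    · rw [zc, hc3_c, swap_apply_right]
    · rw [hc3_ne za zb zc, swap_apply_of_ne_of_ne za zc]
  obtain ⟨n1, l1, k1, p1, s1⟩ := hattach (hcls_bot b) hdb.symm
  have e1 : hcyc (swap b d) = hjn ⊥ b d := hcyc_swap_one hdb.symm
  rw [← e1] at l1 k1 p1 s1
  rw [hcls_bot, Finset.card_singleton] at k1 p1
  obtain ⟨n2, l2, k2, p2, s2⟩ := hattach (s1 a hab hda.symm (hcls_bot a)) hac
  have r2 := hcyc_join_eq _ _ _ n2
  have sc := s1 c hbc.symm hdc.symm (hcls_bot c)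
  rw [sc, Finset.card_singleton] at k2 p2
  have hrel : ∀ u v, hcyc (swap a c * swap b d) u v ↔
      u = v ∨ ((u = b ∨ u = d) ∧ (v = b ∨ v = d)) ∨ ((u = a ∨ u = c) ∧ (v = a ∨ v = c)) := by
    intro u v
    rw [r2, e1]
    simp only [hjn_iff, Setoid.bot_def]
    grind
  have ca : hcls (hcyc (swap a c * swap b d)) a = {a, c} := by
    ext z; rw [hmem_cls, hrel]; simp only [Finset.mem_insert, Finset.mem_singleton]; grind
  have cb : hcls (hcyc (swap a c * swap b d)) b = {b, d} := by
    ext z; rw [hmem_cls, hrel]; simp only [Finset.mem_insert, Finset.mem_singleton]; grind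
  rw [← r2] at l2 p2
  rw [hcard_bot] at l1
  rw [hF_split1 m _ _ a b, hs, ca, cb, Finset.card_pair hac, Finset.card_pair hdb.symm, p2, p1, hPhi_bot,
    hzphi_one]
  · have : (hblocks (hcyc (swap a c * swap b d))).card - 2 = Fintype.card α - 4 := by omega
    rw [this]
    norm_num
    left
    left
    ring
  · intro π hπ
    rw [hs] at hπ
    have g1 : π a c := hπ ((hrel _ _).2 (by grind))
    have g2 : π b d := hπ ((hrel _ _).2 (by grind))
    apply le_antisymm
    · refine sup_le (sup_le (hle_jn _ _ _) ?_) ?_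
      · rw [hc3_le d1]
        refine ⟨hjn_xy _ _ _, ?_⟩
        exact (hjn π a b).trans' ((hjn π a b).symm' (hjn_xy _ _ _)) (hle_jn _ _ _ g1)
      · rw [hc3_le d2]
        exact ⟨hjn_xy _ _ _, hle_jn _ _ _ g2⟩
    · refine hjn_le (le_sup_left.trans le_sup_left) ?_
      exact ((hc3_le d1 (π ⊔ hcyc (hc3 a b c) ⊔ hcyc (hc3 a b d))).1 (le_sup_right.trans le_sup_left)).1
  · rw [hs, hrel]; grind
  · rw [hs]; omega
  · intro w
    rw [hs, hrel, hrel]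
    intro g1 g2
    ext z; rw [hmem_cls, hrel]; simp only [Finset.mem_singleton]; grind

theorem hF_v2r [Nonempty α] (m : ℕ) (hm : m + 6 = 2 * Fintype.card α) {p q r d : α}
    (h1 : hdist p q r) (hdp : d ≠ p) (hdq : d ≠ q) (hdr : d ≠ r) :
    hF m (hc3 p q r) (hc3 r q d) = m.factorial * (hzphi 3 * hP (Fintype.card α - 4) 3 1) := by
  have d1 := h1
  obtain ⟨hpq, hpr, hqr⟩ := h1
  have d2 : hdist r q d := ⟨hqr.symm, hdr.symm, hdq.symm⟩
  have hs : hc3 p q r * hc3 r q d = swap p q * swap q d := by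
    change _ = hc3 p q d
    ext z
    rw [Perm.mul_apply]
    by_cases zr : z = r
    · rw [zr, hc3_a hqr.symm hdr.symm, hc3_b hpr hqr, hc3_ne hpr.symm hqr.symm hdr.symm]
    by_cases zq : z = q
    · rw [zq, hc3_b hdr.symm hdq.symm, hc3_ne hdp hdq hdr, hc3_b hdp.symm hdq.symm]
    by_cases zd : z = d
    · rw [zd, hc3_c, hc3_c, hc3_c]
    rw [hc3_ne zr zq zd]
    by_cases zp : z = p
    · rw [zp, hc3_a hpq hpr, hc3_a hpq hdp.symm]
    · rw [hc3_ne zp zq zr, hc3_ne zp zq zd]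
  obtain ⟨n1, l1, k1, p1, s1⟩ := hattach (hcls_bot q) hdq.symm
  have e1 : hcyc (swap q d) = hjn ⊥ q d := hcyc_swap_one hdq.symm
  rw [← e1] at l1 k1 p1 s1
  rw [hcls_bot, Finset.card_singleton] at k1 p1
  obtain ⟨n2, l2, k2, p2, s2⟩ := hattach (s1 p hpq hdp.symm (hcls_bot p)) hpq
  have r2 := hcyc_join_eq _ _ _ n2
  rw [k1] at k2 p2
  have hrel : ∀ u v, hcyc (swap p q * swap q d) u v ↔
      u = v ∨ ((u = p ∨ u = q ∨ u = d) ∧ (v = p ∨ v = q ∨ v = d)) := by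
    intro u v
    rw [r2, e1]
    simp only [hjn_iff, Setoid.bot_def]
    grind
  have ca : hcls (hcyc (swap p q * swap q d)) q = {p, q, d} := by
    ext z; rw [hmem_cls, hrel]; simp only [Finset.mem_insert, Finset.mem_singleton]; grind
  have cb : hcls (hcyc (swap p q * swap q d)) r = {r} := by
    ext z; rw [hmem_cls, hrel]; simp only [Finset.mem_insert, Finset.mem_singleton]; grind
  have c3 : ({p, q, d} : Finset α).card = 3 := Finset.card_eq_three.2 ⟨p, q, d, hpq, hdp.symm, hdq.symm, rfl⟩
  rw [← r2] at l2 p2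
  rw [hcard_bot] at l1
  rw [hF_split1 m _ _ q r, hs, ca, cb, Finset.card_singleton, c3, p2, p1, hPhi_bot,
    hzphi_one]
  · have : (hblocks (hcyc (swap p q * swap q d))).card - 2 = Fintype.card α - 4 := by omega
    rw [this]
    have hp2 := (hzphi_pos 2 (by norm_num)).ne'
    norm_num
    left
    left
    field_simp
  · intro π hπ
    rw [hs] at hπ
    have g1 : π p q := hπ ((hrel _ _).2 (by grind))
    have g2 : π q d := hπ ((hrel _ _).2 (by grind))
    apply le_antisymm
    · refine sup_le (sup_le (hle_jn _ _ _) ?_) ?_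
      · rw [hc3_le d1]
        exact ⟨hle_jn _ _ _ g1, hjn_xy _ _ _⟩
      · rw [hc3_le d2]
        exact ⟨(hjn π q r).symm' (hjn_xy _ _ _), hle_jn _ _ _ g2⟩
    · refine hjn_le (le_sup_left.trans le_sup_left) ?_
      exact ((hc3_le d1 (π ⊔ hcyc (hc3 p q r) ⊔ hcyc (hc3 r q d))).1 (le_sup_right.trans le_sup_left)).2
  · rw [hs, hrel]; grind
  · rw [hs]; omega
  · intro w
    rw [hs, hrel, hrel]
    intro g1 g2
    ext z; rw [hmem_cls, hrel]; simp only [Finset.mem_singleton]; grind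

/-- equal three-cycles do not contribute -/
theorem hF_zero [Nonempty α] (m : ℕ) (hm : m + 6 = 2 * Fintype.card α) {a b c : α}
    (h1 : hdist a b c) : hF m (hc3 a b c) (hc3 a b c) = 0 := by
  have d1 := h1
  obtain ⟨hab, hac, hbc⟩ := h1
  have hs : hc3 a b c * hc3 a b c = swap c b * swap b a := by
    change _ = hc3 c b a
    ext z
    rw [Perm.mul_apply]
    by_cases za : z = a
    · rw [za, hc3_a hab hac, hc3_b hac hbc, hc3_c]
    by_cases zb : z = b
    · rw [zb, hc3_b hac hbc, hc3_c, hc3_b hac.symm hab.symm]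
    by_cases zc : z = c
    · rw [zc, hc3_c, hc3_a hab hac, hc3_a hbc.symm hac.symm]
    rw [hc3_ne za zb zc, hc3_ne za zb zc, hc3_ne zc zb za]
  obtain ⟨n1, l1, k1, p1, s1⟩ := hattach (hcls_bot b) hab.symm
  have e1 : hcyc (swap b a) = hjn ⊥ b a := hcyc_swap_one hab.symm
  rw [← e1] at l1 k1 p1 s1
  obtain ⟨n2, l2, k2, p2, s2⟩ := hattach (s1 c hbc.symm hac.symm (hcls_bot c)) hbc.symm
  have r2 := hcyc_join_eq _ _ _ n2
  rw [← r2] at l2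
  rw [hcard_bot] at l1
  have hle : hcyc (hc3 a b c) ≤ hcyc (hc3 a b c * hc3 a b c) := by
    rw [hs, r2, e1, hc3_le d1]
    simp only [hjn_iff, Setoid.bot_def]
    grind
  unfold hF
  apply Finset.sum_eq_zero
  intro π _
  split_ifs with h
  · by_contra hne
    have h4 := hN_ne _ _ _ hne
    rw [hcyc_inv] at h4
    rw [sup_eq_left.2 (hle.trans h4.1), sup_eq_left.2 (hle.trans h4.1)] at h
    rw [h, hblocks_top, Finset.card_singleton, hs] at h4
    omega
  · rfl

end values2


section values3
variable {α : Type*} [Fintype α] [DecidableEq α]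

theorem hbl_bot_one {B c : Finset α} (h : c ∈ hbl (⊥ : Setoid α) B) : (c.card : ℚ) = 1 := by
  rw [hmem_bl] at h
  obtain ⟨w, rfl⟩ := (hmem_blocks _ _).1 h.1
  rw [hcls_bot, Finset.card_singleton, Nat.cast_one]

theorem hbl_bot_card {π : Setoid α} (x : α) :
    (hbl (⊥ : Setoid α) (hcls π x)).card = (hcls π x).card := by
  have h := hcard_bl (hsat_cls (bot_le : (⊥ : Setoid α) ≤ π) x)
  rw [Finset.sum_congr rfl (fun c hc => hbl_bot_one hc)] at h
  simp only [Finset.sum_const, nsmul_eq_mul, mul_one] at h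
  exact_mod_cast h.symm

theorem hP_one_one (k : ℕ) (hk : 2 ≤ k) :
    hP (k - 2) 1 1 = (k : ℚ) ^ ((k : ℤ) - 4) * (1 + 6 / (k : ℚ)) := by
  have h0 : (k : ℚ) ≠ 0 := by positivity
  have h1 : ((k - 2 : ℕ) : ℚ) = (k : ℚ) - 2 := by rw [Nat.cast_sub hk]; norm_num
  have h2 : ((k - 2 : ℕ) : ℤ) = (k : ℤ) - 2 := by rw [Nat.cast_sub hk]; norm_num
  unfold hP hQ
  rw [h1, h2]
  have e1 : (1 : ℚ) + 1 + ((k : ℚ) - 2) = k := by ring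
  rw [e1, show (k : ℤ) - 2 - 1 = ((k : ℤ) - 4) + 1 by ring, show (k : ℤ) - 2 - 2 = (k : ℤ) - 4 by ring,
    zpow_add_one₀ h0]
  field_simp
  ring

open Classical in
theorem hinner {a b : α} (hab : a ≠ b) {π' : Setoid α} (h : π' a b) :
    ∑ π : Setoid α, (if hjn π a b = π' ∧ ¬ π a b then hW ⊥ π else 0) =
      hW (hjn ⊥ a b) π' * (1 + 6 / ((hcls π' b).card : ℚ)) := by
  have hn : ¬ (⊥ : Setoid α) a b := by rw [Setoid.bot_def]; exact hab
  have h1 := hsplit_sum (ρ := (⊥ : Setoid α)) bot_le h hn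
  simp only [bot_le, and_true] at h1
  rw [h1, hW_jn bot_le h hn, mul_assoc, hzZ_congr (x' := fun _ => 1), hz_one]
  · have ha : hcls (⊥ : Setoid α) a ∈ hbl ⊥ (hcls π' a) := (hmem_bl _ _ _).2 ⟨hcls_mem _ _, hcls_sub bot_le a⟩
    have hb : hcls (⊥ : Setoid α) b ∈ (hbl ⊥ (hcls π' a)).erase (hcls ⊥ a) := by
      rw [Finset.mem_erase, hmem_bl]
      refine ⟨?_, hcls_mem _ _, ?_⟩
      · rw [hcls_bot, hcls_bot]; simpa using hab.symm
      · rw [(hcls_eq_iff _ _ _).2 h]; exact hcls_sub bot_le b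
    have c1 := Finset.card_erase_add_one ha
    have c2 := Finset.card_erase_add_one hb
    have c3 := hbl_bot_card (π := π') a
    have c4 : hcls π' b = hcls π' a := ((hcls_eq_iff _ _ _).2 h).symm
    rw [c4, c3]
    have c5 : (((hbl ⊥ (hcls π' a)).erase (hcls ⊥ a)).erase (hcls ⊥ b)).card = (hcls π' a).card - 2 := by omega
    rw [c5, hcls_bot, hcls_bot, Finset.card_singleton, Finset.card_singleton, Nat.cast_one, hP_one_one _ (by omega)]
  · rw [hcls_bot]; simp
  · rw [hcls_bot]; simp
  · intro c hc
    exact hbl_bot_one (Finset.mem_of_mem_erase (Finset.mem_of_mem_erase hc))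

theorem hg_sum (C : Finset (Finset α)) :
    ∑ S ∈ C.powerset, (((2 : ℕ) : ℚ) + ∑ c ∈ S, (c.card : ℚ)) ^ ((S.card : ℤ) - 2) *
      (((1 : ℕ) : ℚ) + ∑ c ∈ C \ S, (c.card : ℚ)) ^ (((C \ S).card : ℤ) - 2) *
        (1 + 6 / (((2 : ℕ) : ℚ) + ∑ c ∈ S, (c.card : ℚ))) =
      hzZ (fun c : Finset α => (c.card : ℚ)) 2 2 C 2 1 +
        6 * hzZ (fun c : Finset α => (c.card : ℚ)) 3 2 C 2 1 := by
  unfold hzZ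
  rw [Finset.mul_sum, ← Finset.sum_add_distrib]
  apply Finset.sum_congr rfl
  intro S _
  have hp : ((2 : ℚ) + ∑ c ∈ S, (c.card : ℚ)) ≠ 0 := by positivity
  have he : (S.card : ℤ) - 2 = ((S.card : ℤ) - 3) + 1 := by omega
  rw [he, Nat.cast_ofNat, Nat.cast_one, zpow_add_one₀ hp]
  generalize (2 + ∑ c ∈ S, (c.card : ℚ)) = A at *
  generalize (1 + ∑ c ∈ C \ S, (c.card : ℚ)) ^ (((C \ S).card : ℤ) - 2) = B at *
  generalize A ^ ((S.card : ℤ) - 3) = D at *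
  field_simp

set_option maxHeartbeats 1000000 in
theorem hF_v3 [Nonempty α] (m : ℕ) (hm : m + 6 = 2 * Fintype.card α) {a b c : α}
    (h1 : hdist a b c) : hF m (hc3 a b c) (hc3 c b a) =
      m.factorial * (4 * hP (Fintype.card α - 3) 2 1 -
        3 * ((Fintype.card α : ℚ) - 3) * hP (Fintype.card α - 4) 3 1) := by
  classical
  have d1 := h1
  obtain ⟨hab, hac, hbc⟩ := h1
  have d2 : hdist c b a := ⟨hbc.symm, hac.symm, hab.symm⟩
  have hs : hc3 a b c * hc3 c b a = 1 := by
    simp only [hc3, swap_comm c b, swap_comm b a]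
    rw [mul_assoc, ← mul_assoc (swap b c), swap_mul_self, one_mul, swap_mul_self]
  have hsup : ∀ π : Setoid α, π ⊔ hcyc (hc3 a b c) ⊔ hcyc (hc3 c b a) = hjn (hjn π a b) b c := by
    intro π
    rw [← hsup_c3 d1, sup_eq_left]
    have := (hc3_le d1 (π ⊔ hcyc (hc3 a b c))).1 le_sup_right
    rw [hc3_le d2]
    exact ⟨Setoid.symm' _ this.2, Setoid.symm' _ this.1⟩
  have hterm : ∀ π : Setoid α, (if π ⊔ hcyc (hc3 a b c) ⊔ hcyc (hc3 c b a) = ⊤ then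
      hN m (hc3 a b c * hc3 c b a)⁻¹ π else 0) = m.factorial *
      ∑ π' : Setoid α, (if hjn π' b c = ⊤ ∧ ¬ π' b c ∧ hjn ⊥ a b ≤ π' then
        (if hjn π a b = π' ∧ ¬ π a b then hW ⊥ π else 0) else 0) := by
    intro π
    rw [hsup, hs, inv_one, Finset.sum_eq_single (hjn π a b)]
    · have hle : hjn ⊥ a b ≤ hjn π a b := hjn_mono bot_le a b
      by_cases h2 : hjn (hjn π a b) b c = ⊤
      · by_cases h3 : ¬ (hjn π a b) b c ∧ ¬ π a b
        · rw [if_pos h2, if_pos ⟨h2, h3.1, hle⟩, if_pos ⟨rfl, h3.2⟩]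
          have k1 := hcard_jn _ _ _ h3.1
          have k2 := hcard_jn _ _ _ h3.2
          rw [h2, hblocks_top, Finset.card_singleton] at k1
          rw [hN_form, hcyc_one, hPhi_bot, one_mul]
          · rw [hcyc_one]; exact bot_le
          · rw [hcyc_one, hcard_bot]; omega
        · have : (if hjn (hjn π a b) b c = ⊤ ∧ ¬ (hjn π a b) b c ∧ hjn ⊥ a b ≤ hjn π a b then
              (if hjn π a b = hjn π a b ∧ ¬ π a b then hW ⊥ π else 0) else 0) = 0 := by
            split_ifs <;> tauto
          rw [this, if_pos h2, mul_zero]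
          by_contra hne
          have h4 := (hN_ne _ _ _ hne).2
          rw [hcyc_one, hcard_bot] at h4
          have k1 : 1 + 1 ≥ (hblocks (hjn π a b)).card := by
            by_cases h5 : (hjn π a b) b c
            · rw [hjn_eq_self h5] at h2
              rw [h2, hblocks_top, Finset.card_singleton]; norm_num
            · have k1 := hcard_jn _ _ _ h5
              rw [h2, hblocks_top, Finset.card_singleton] at k1
              omega
          by_cases h6 : π a b
          · rw [hjn_eq_self h6] at k1; omega
          · have k2 := hcard_jn _ _ _ h6
            have h5 : (hjn π a b) b c := by
              by_contra h7; exact h3 ⟨h7, h6⟩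
            rw [hjn_eq_self h5] at h2
            rw [h2, hblocks_top, Finset.card_singleton] at k2
            omega
      · rw [if_neg h2, if_neg (by tauto), mul_zero]
    · intro π' _ hne
      split_ifs <;> tauto
    · intro h; exact absurd (Finset.mem_univ _) h
  unfold hF
  rw [Finset.sum_congr rfl (fun π _ => hterm π), ← Finset.mul_sum, Finset.sum_comm]
  congr 1
  have hin : ∀ π' : Setoid α, (∑ π : Setoid α, (if hjn π' b c = ⊤ ∧ ¬ π' b c ∧ hjn ⊥ a b ≤ π' then
        (if hjn π a b = π' ∧ ¬ π a b then hW ⊥ π else 0) else 0)) =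
      (if hjn π' b c = ⊤ ∧ ¬ π' b c ∧ hjn ⊥ a b ≤ π' then
        hW (hjn ⊥ a b) π' * (fun t : ℚ => 1 + 6 / t) ((hcls π' b).card : ℚ) else 0) := by
    intro π'
    by_cases h2 : hjn π' b c = ⊤ ∧ ¬ π' b c ∧ hjn ⊥ a b ≤ π'
    · simp only [if_pos h2]
      exact hinner hab (h2.2.2 (hjn_xy _ _ _))
    · simp only [if_neg h2, Finset.sum_const_zero]
  rw [Finset.sum_congr rfl (fun π' _ => hin π')]
  set ρ : Setoid α := hjn ⊥ a b with hρ
  have hrel : ∀ u v, ρ u v ↔ u = v ∨ ((u = a ∨ u = b) ∧ (v = a ∨ v = b)) := by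
    intro u v
    rw [hρ]
    simp only [hjn_iff, Setoid.bot_def]
  have hn : ¬ ρ b c := by rw [hrel]; grind
  have h := hsplit_sum_g (fun t : ℚ => 1 + 6 / t) (ρ := ρ) (π := ⊤) le_top (x := b) (y := c)
    (by rw [Setoid.top_def]; trivial) hn
  rw [h]
  simp only [hcls_top, hblocks_top, hbl_univ]
  have cb : hcls ρ b = {a, b} := by
    ext z; rw [hmem_cls, hrel]; simp only [Finset.mem_insert, Finset.mem_singleton]; grind
  have cc : hcls ρ c = {c} := by
    ext z; rw [hmem_cls, hrel]; simp only [Finset.mem_insert, Finset.mem_singleton]; grind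
  have hone : ∀ e ∈ ((hblocks ρ).erase (hcls ρ b)).erase (hcls ρ c), ((e.card : ℚ)) = 1 := by
    apply hC_one
    intro w
    rw [hrel, hrel]
    intro g1 g2
    ext z; rw [hmem_cls, hrel]; simp only [Finset.mem_singleton]; grind
  have hcard := hC_card hn
  have hl := (hattach (hcls_bot a) hab).2.1
  rw [← hρ, hcard_bot] at hl
  set C := ((hblocks ρ).erase (hcls ρ b)).erase (hcls ρ c) with hC
  rw [cb, cc, Finset.card_singleton, Finset.card_pair hab]
  simp only [Finset.erase_singleton, Finset.prod_empty, one_mul]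
  have hcK : C.card = Fintype.card α - 3 := by omega
  have hn3 : 3 ≤ Fintype.card α := by omega
  rw [hg_sum, hzZ_congr (x' := fun _ => 1) _ _ _ _ _ hone, hzZ_congr (x' := fun _ => 1) _ _ _ _ _ hone]
  have hrec := hzZ_rec (fun _ : Finset α => (1 : ℚ)) (fun _ => one_pos) 2 2 C 2 1 (by norm_num)
  norm_num at hrec
  rw [hz_one _ _ _ (by norm_num) (by norm_num), Finset.sum_congr rfl (g := fun _ => hP (Fintype.card α - 4) 3 1)
    (fun j hj => by
      rw [hz_one _ _ _ (by norm_num) (by norm_num), Finset.card_erase_of_mem hj, hcK, Nat.sub_sub]),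
    Finset.sum_const, nsmul_eq_mul, hcK, Nat.cast_sub hn3] at hrec
  rw [hz_one _ _ _ (by norm_num) (by norm_num), hcK]
  push_cast at hrec
  linear_combination 3 * hrec

end values3


section assembly
variable {α : Type*} [Fintype α] [DecidableEq α]

theorem hsum_two (O : Finset α) (F : α → α → ℚ) (v : ℚ) (h0 : ∀ y ∈ O, F y y = 0)
    (h1 : ∀ y ∈ O, ∀ z ∈ O, y ≠ z → F y z = v) :
    ∑ y ∈ O, ∑ z ∈ O, F y z = (O.card : ℚ) * ((O.card : ℚ) - 1) * v := by
  have h : ∀ y ∈ O, ∑ z ∈ O, F y z = ((O.card : ℚ) - 1) * v := by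
    intro y hy
    rw [← Finset.add_sum_erase O _ hy, h0 y hy, zero_add,
      Finset.sum_congr rfl (g := fun _ => v) (fun z hz => h1 y hy z (Finset.mem_of_mem_erase hz)
        (Finset.ne_of_mem_erase hz).symm), Finset.sum_const, nsmul_eq_mul,
      ← Finset.card_erase_add_one hy]
    push_cast; ring
  rw [Finset.sum_congr rfl h, Finset.sum_const, nsmul_eq_mul]
  ring

theorem hsum_three (O : Finset α) (G : α → α → α → ℚ) (v : ℚ) (h0 : ∀ x z, G x x z = 0)
    (h0' : ∀ x z, G x z x = 0) (h0'' : ∀ x z, G x z z = 0)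
    (h1 : ∀ x ∈ O, ∀ y ∈ O, ∀ z ∈ O, hdist x y z → G x y z = v) :
    ∑ x ∈ O, ∑ y ∈ O, ∑ z ∈ O, G x y z =
      (O.card : ℚ) * ((O.card : ℚ) - 1) * ((O.card : ℚ) - 2) * v := by
  have h : ∀ x ∈ O, ∑ y ∈ O, ∑ z ∈ O, G x y z =
      ((O.card : ℚ) - 1) * ((O.card : ℚ) - 2) * v := by
    intro x hx
    rw [← Finset.add_sum_erase O _ hx]
    have e : ∀ y ∈ O.erase x, ∑ z ∈ O, G x y z = ∑ z ∈ O.erase x, G x y z := by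
      intro y _
      rw [← Finset.add_sum_erase O _ hx, h0', zero_add]
    rw [Finset.sum_congr rfl e, hsum_two (O.erase x) (fun y z => G x y z) v,
      ← Finset.card_erase_add_one hx]
    · simp only [h0, Finset.sum_const_zero]
      push_cast; ring
    · intro y _; exact h0'' _ _
    · intro y hy z hz hyz
      exact h1 x hx y (Finset.mem_of_mem_erase hy) z (Finset.mem_of_mem_erase hz)
        ⟨(Finset.ne_of_mem_erase hy).symm, (Finset.ne_of_mem_erase hz).symm, hyz⟩
  rw [Finset.sum_congr rfl h, Finset.sum_const, nsmul_eq_mul]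
  ring

theorem hsum_triples {a b c : α} (hd : hdist a b c) (G : α → α → α → ℚ) (v0 v1 v2 v2r v3 : ℚ)
    (hrot : ∀ x y z, G x y z = G y z x) (h0 : ∀ x z, G x x z = 0)
    (g0 : ∀ x y z, hdist x y z → (∀ w, (w = a ∨ w = b ∨ w = c) → w ≠ x ∧ w ≠ y ∧ w ≠ z) → G x y z = v0)
    (g1 : ∀ r, (r = a ∨ r = b ∨ r = c) → ∀ y z, y ≠ z →
      (∀ w, (w = a ∨ w = b ∨ w = c) → w ≠ y ∧ w ≠ z) → G r y z = v1)
    (g2 : ∀ d, d ≠ a → d ≠ b → d ≠ c → G a b d = v2 ∧ G b c d = v2 ∧ G c a d = v2)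
    (g2r : ∀ d, d ≠ a → d ≠ b → d ≠ c → G b a d = v2r ∧ G c b d = v2r ∧ G a c d = v2r)
    (ge : G a b c = 0) (g3 : G c b a = v3) :
    ∑ x, ∑ y, ∑ z, G x y z =
      ((Fintype.card α : ℚ) - 3) * ((Fintype.card α : ℚ) - 4) * ((Fintype.card α : ℚ) - 5) * v0 +
      9 * ((Fintype.card α : ℚ) - 3) * ((Fintype.card α : ℚ) - 4) * v1 +
      9 * ((Fintype.card α : ℚ) - 3) * (v2 + v2r) + 3 * v3 := by
  obtain ⟨hab, hac, hbc⟩ := hd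
  set O : Finset α := ((Finset.univ.erase a).erase b).erase c with hO
  have mb : b ∈ (Finset.univ.erase a : Finset α) := by simp [hab.symm]
  have mc : c ∈ ((Finset.univ.erase a).erase b : Finset α) := by simp [hac.symm, hbc.symm]
  have hmem : ∀ d, d ∈ O → d ≠ a ∧ d ≠ b ∧ d ≠ c := by
    intro d; rw [hO]; simp only [Finset.mem_erase, Finset.mem_univ, and_true]; tauto
  have hsum : ∀ f : α → ℚ, ∑ x, f x = f a + (f b + (f c + ∑ x ∈ O, f x)) := by
    intro f
    rw [hO, Finset.add_sum_erase _ f mc, Finset.add_sum_erase _ f mb,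
      Finset.add_sum_erase _ f (Finset.mem_univ a)]
  have hcard : (O.card : ℚ) = (Fintype.card α : ℚ) - 3 := by
    have c1 := Finset.card_erase_add_one mc
    have c2 := Finset.card_erase_add_one mb
    have c3 := Finset.card_erase_add_one (Finset.mem_univ a)
    rw [Finset.card_univ] at c3
    rw [← hO] at c1
    have : (O.card : ℚ) + 3 = Fintype.card α := by
      have : O.card + 3 = Fintype.card α := by omega
      exact_mod_cast this
    linarith
  have h0' : ∀ x z, G x z x = 0 := fun x z => by rw [hrot, hrot, h0]
  have h0'' : ∀ x z, G x z z = 0 := fun x z => by rw [hrot, h0]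
  have s3 : ∀ p q v, (∀ d ∈ O, G p q d = v) → ∑ z ∈ O, G p q z = (O.card : ℚ) * v := by
    intro p q v h
    rw [Finset.sum_congr rfl h, Finset.sum_const, nsmul_eq_mul]
  have s1 : ∀ p q v, (∀ d ∈ O, G p q d = v) → ∑ z ∈ O, G z p q = (O.card : ℚ) * v := by
    intro p q v h
    rw [Finset.sum_congr rfl (fun d _ => hrot d p q)]
    exact s3 p q v h
  have s2 : ∀ p q v, (∀ d ∈ O, G p q d = v) → ∑ z ∈ O, G q z p = (O.card : ℚ) * v := by
    intro p q v h
    rw [Finset.sum_congr rfl (fun d _ => hrot q d p)]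
    exact s1 p q v h
  have kab : ∀ d ∈ O, G a b d = v2 := fun d hd => (g2 d (hmem d hd).1 (hmem d hd).2.1 (hmem d hd).2.2).1
  have kbc : ∀ d ∈ O, G b c d = v2 := fun d hd => (g2 d (hmem d hd).1 (hmem d hd).2.1 (hmem d hd).2.2).2.1
  have kca : ∀ d ∈ O, G c a d = v2 := fun d hd => (g2 d (hmem d hd).1 (hmem d hd).2.1 (hmem d hd).2.2).2.2
  have kba : ∀ d ∈ O, G b a d = v2r := fun d hd => (g2r d (hmem d hd).1 (hmem d hd).2.1 (hmem d hd).2.2).1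
  have kcb : ∀ d ∈ O, G c b d = v2r := fun d hd => (g2r d (hmem d hd).1 (hmem d hd).2.1 (hmem d hd).2.2).2.1
  have kac : ∀ d ∈ O, G a c d = v2r := fun d hd => (g2r d (hmem d hd).1 (hmem d hd).2.1 (hmem d hd).2.2).2.2
  have hT : ∀ y ∈ O, ∀ z ∈ O, ∀ w, (w = a ∨ w = b ∨ w = c) → w ≠ y ∧ w ≠ z := by
    intro y hy z hz w hw
    have := hmem y hy
    have := hmem z hz
    grind
  have t1 : ∀ r, (r = a ∨ r = b ∨ r = c) → ∑ y ∈ O, ∑ z ∈ O, G r y z =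
      (O.card : ℚ) * ((O.card : ℚ) - 1) * v1 := by
    intro r hr
    refine hsum_two O _ v1 (fun y _ => h0'' _ _) ?_
    intro y hy z hz hyz
    exact g1 r hr y z hyz (hT y hy z hz)
  have t2 : ∀ r, (r = a ∨ r = b ∨ r = c) → ∑ y ∈ O, ∑ z ∈ O, G y r z =
      (O.card : ℚ) * ((O.card : ℚ) - 1) * v1 := by
    intro r hr
    refine hsum_two O _ v1 (fun y _ => h0' _ _) ?_
    intro y hy z hz hyz
    rw [hrot]
    exact g1 r hr z y hyz.symm (hT z hz y hy)
  have t3 : ∀ r, (r = a ∨ r = b ∨ r = c) → ∑ y ∈ O, ∑ z ∈ O, G y z r =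
      (O.card : ℚ) * ((O.card : ℚ) - 1) * v1 := by
    intro r hr
    refine hsum_two O _ v1 (fun y _ => h0 _ _) ?_
    intro y hy z hz hyz
    rw [hrot, hrot]
    exact g1 r hr y z hyz (hT y hy z hz)
  have u := hsum_three O G v0 h0 h0' h0'' (by
    intro x hx y hy z hz hd
    refine g0 x y z hd ?_
    intro w hw
    exact ⟨(hT x hx y hy w hw).1, (hT y hy z hz w hw)⟩)
  have ge1 : G b c a = 0 := by rw [← hrot, ge]
  have ge2 : G c a b = 0 := by rw [← hrot, ge1]
  have g31 : G b a c = v3 := by rw [← hrot, g3]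
  have g32 : G a c b = v3 := by rw [← hrot, g31]
  simp only [hsum, Finset.sum_add_distrib, h0, h0', h0'', Finset.sum_const_zero, ge, ge1, ge2, g3, g31, g32]
  rw [s3 a b _ kab, s3 b c _ kbc, s3 c a _ kca, s3 b a _ kba, s3 c b _ kcb, s3 a c _ kac,
    s1 a b _ kab, s1 b c _ kbc, s1 c a _ kca, s1 b a _ kba, s1 c b _ kcb, s1 a c _ kac,
    s2 a b _ kab, s2 b c _ kbc, s2 c a _ kca, s2 b a _ kba, s2 c b _ kcb, s2 a c _ kac,
    t1 a (by simp), t1 b (by simp), t1 c (by simp), t2 a (by simp), t2 b (by simp), t2 c (by simp),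
    t3 a (by simp), t3 b (by simp), t3 c (by simp), u, hcard]
  ring

open Classical in
theorem hinner_total [Nonempty α] (m : ℕ) (hm : m + 6 = 2 * Fintype.card α) {a b c : α} (hd : hdist a b c) :
    ∑ x : α, ∑ y : α, ∑ z : α, (if hdist x y z then hF m (hc3 a b c) (hc3 x y z) else 0) =
      ((Fintype.card α : ℚ) - 3) * ((Fintype.card α : ℚ) - 4) * ((Fintype.card α : ℚ) - 5) *
        (m.factorial * (hzphi 3 ^ 2 * (Fintype.card α : ℚ) ^ ((Fintype.card α : ℤ) - 7))) +
      9 * ((Fintype.card α : ℚ) - 3) * ((Fintype.card α : ℚ) - 4) *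
        (m.factorial * (hzphi 5 * (Fintype.card α : ℚ) ^ ((Fintype.card α : ℤ) - 7))) +
      9 * ((Fintype.card α : ℚ) - 3) * (m.factorial * (hzphi 2 ^ 2 * hP (Fintype.card α - 4) 2 2) +
        m.factorial * (hzphi 3 * hP (Fintype.card α - 4) 3 1)) +
      3 * (m.factorial * (4 * hP (Fintype.card α - 3) 2 1 -
        3 * ((Fintype.card α : ℚ) - 3) * hP (Fintype.card α - 4) 3 1)) := by
  have hd1 := hdist_rot hd
  have hd2 := hdist_rot hd1
  have r1 := hc3_rot hd
  have r2 := hc3_rot hd1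
  refine hsum_triples hd (fun x y z => if hdist x y z then hF m (hc3 a b c) (hc3 x y z) else 0)
    _ _ _ _ _ ?_ ?_ ?_ ?_ ?_ ?_ ?_ ?_
  · intro x y z
    by_cases h : hdist x y z
    · simp only [if_pos h, if_pos (hdist_rot h)]
      rw [hc3_rot h]
    · have : ¬ hdist y z x := fun h' => h (hdist_rot (hdist_rot h'))
      simp only [if_neg h, if_neg this]
  · intro x z
    exact if_neg (fun h => h.1 rfl)
  · intro x y z h hT
    simp only [if_pos h]
    exact hF_v0 m hm hd h hT
  · intro r hr y z hyz hT
    have hxr : hdist r y z := ⟨(hT r hr).1, (hT r hr).2, hyz⟩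
    simp only [if_pos hxr]
    have ha := hT a (by simp)
    have hb := hT b (by simp)
    have hc := hT c (by simp)
    rcases hr with rfl | rfl | rfl
    · rw [r1]; exact hF_v1 m hm hd1 hxr (by rintro w (rfl | rfl) <;> assumption)
    · rw [r1, r2]; exact hF_v1 m hm hd2 hxr (by rintro w (rfl | rfl) <;> assumption)
    · exact hF_v1 m hm hd hxr (by rintro w (rfl | rfl) <;> assumption)
  · intro d ha hb hc
    have e1 : hdist a b d := ⟨hd.1, ha.symm, hb.symm⟩
    have e2 : hdist b c d := ⟨hd.2.2, hb.symm, hc.symm⟩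
    have e3 : hdist c a d := ⟨hd.2.1.symm, hc.symm, ha.symm⟩
    simp only [if_pos e1, if_pos e2, if_pos e3]
    refine ⟨hF_v2 m hm hd ha hb hc, ?_, ?_⟩
    · rw [r1]; exact hF_v2 m hm hd1 hb hc ha
    · rw [r1, r2]; exact hF_v2 m hm hd2 hc ha hb
  · intro d ha hb hc
    have e1 : hdist b a d := ⟨hd.1.symm, hb.symm, ha.symm⟩
    have e2 : hdist c b d := ⟨hd.2.2.symm, hc.symm, hb.symm⟩
    have e3 : hdist a c d := ⟨hd.2.1, ha.symm, hc.symm⟩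
    simp only [if_pos e1, if_pos e2, if_pos e3]
    refine ⟨?_, hF_v2r m hm hd ha hb hc, ?_⟩
    · rw [r1, r2]; exact hF_v2r m hm hd2 hc ha hb
    · rw [r1]; exact hF_v2r m hm hd1 hb hc ha
  · simp only [if_pos hd]
    exact hF_zero m hm hd
  · have e : hdist c b a := ⟨hd.2.2.symm, hd.2.1.symm, hd.1.symm⟩
    simp only [if_pos e]
    exact hF_v3 m hm hd

open Classical in
theorem hsum_dist (v : ℚ) : ∑ a : α, ∑ b : α, ∑ c : α, (if hdist a b c then v else 0) =
    (Fintype.card α : ℚ) * ((Fintype.card α : ℚ) - 1) * ((Fintype.card α : ℚ) - 2) * v := by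
  have := hsum_three (Finset.univ : Finset α) (fun a b c => if hdist a b c then v else 0) v
    (fun x z => if_neg (fun h => h.1 rfl)) (fun x z => if_neg (fun h => h.2.1 rfl))
    (fun x z => if_neg (fun h => h.2.2 rfl)) (fun x _ y _ z _ h => if_pos h)
  rw [Finset.card_univ] at this
  exact this

end assembly

theorem hfinal_id (n : ℕ) (hn : 3 ≤ n) (M : ℚ) :
    (n : ℚ) * ((n : ℚ) - 1) * ((n : ℚ) - 2) *
     (((n : ℚ) - 3) * ((n : ℚ) - 4) * ((n : ℚ) - 5) *
        (M * (hzphi 3 ^ 2 * (n : ℚ) ^ ((n : ℤ) - 7))) +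
      9 * ((n : ℚ) - 3) * ((n : ℚ) - 4) *
        (M * (hzphi 5 * (n : ℚ) ^ ((n : ℤ) - 7))) +
      9 * ((n : ℚ) - 3) * (M * (hzphi 2 ^ 2 * hP (n - 4) 2 2) +
        M * (hzphi 3 * hP (n - 4) 3 1)) +
      3 * (M * (4 * hP (n - 3) 2 1 -
        3 * ((n : ℚ) - 3) * hP (n - 4) 3 1))) =
    9 * ((n : ℚ) * ((n : ℚ) - 1) * ((n : ℚ) - 2) * ((3/4)*(27*(n:ℚ)^2-137*(n:ℚ)+180)) * M *
      (n : ℚ) ^ ((n : ℤ) - 6)) := by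
  have h0 : (n : ℚ) ≠ 0 := by positivity
  have f2 : hzphi 2 = 4 := by norm_num [hzphi, Nat.factorial]
  have f3 : hzphi 3 = 27 / 2 := by norm_num [hzphi, Nat.factorial]
  have f5 : hzphi 5 = 3125 / 24 := by norm_num [hzphi, Nat.factorial]
  have e3 : ((n - 3 : ℕ) : ℚ) = (n : ℚ) - 3 := by rw [Nat.cast_sub hn]; norm_num
  have e3' : ((n - 3 : ℕ) : ℤ) = (n : ℤ) - 3 := by rw [Nat.cast_sub hn]; norm_num
  have z6 : (n : ℚ) ^ ((n : ℤ) - 6) = (n : ℚ) ^ ((n : ℤ) - 7) * n := by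
    rw [← zpow_add_one₀ h0]; congr 1; ring
  have z5 : (n : ℚ) ^ ((n : ℤ) - 5) = (n : ℚ) ^ ((n : ℤ) - 7) * n * n := by
    rw [← z6, ← zpow_add_one₀ h0]; congr 1; ring
  have z4 : (n : ℚ) ^ ((n : ℤ) - 4) = (n : ℚ) ^ ((n : ℤ) - 7) * n * n * n := by
    rw [← z5, ← zpow_add_one₀ h0]; congr 1; ring
  have P21 : hP (n - 3) 2 1 = (n : ℚ) ^ ((n : ℤ) - 7) * n * (9 / 4 * n - ((n : ℚ) - 3) * (5 / 3)) := by
    unfold hP hQ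
    rw [e3, e3', show (2 : ℚ) + 1 + ((n : ℚ) - 3) = n by ring, show (1 : ℚ) + 2 + ((n : ℚ) - 3) = n by ring,
      show (n : ℤ) - 3 - 1 = n - 4 by ring, show (n : ℤ) - 3 - 2 = n - 5 by ring, z4, z5]
    field_simp
    ring
  rcases Nat.eq_or_lt_of_le hn with h3 | h4
  · subst h3
    rw [P21, z6]
    push_cast
    ring
  · have e4 : ((n - 4 : ℕ) : ℚ) = (n : ℚ) - 4 := by rw [Nat.cast_sub h4]; norm_num
    have e4' : ((n - 4 : ℕ) : ℤ) = (n : ℤ) - 4 := by rw [Nat.cast_sub h4]; norm_num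
    have P22 : hP (n - 4) 2 2 = (n : ℚ) ^ ((n : ℤ) - 7) * (n - ((n : ℚ) - 4) * (5 / 6)) := by
      unfold hP hQ
      rw [e4, e4', show (2 : ℚ) + 2 + ((n : ℚ) - 4) = n by ring,
        show (n : ℤ) - 4 - 1 = n - 5 by ring, show (n : ℤ) - 4 - 2 = n - 6 by ring, z5, z6]
      field_simp
      ring
    have P31 : hP (n - 4) 3 1 = (n : ℚ) ^ ((n : ℤ) - 7) * (16 / 9 * n - ((n : ℚ) - 4) * (5 / 4)) := by
      unfold hP hQ
      rw [e4, e4', show (3 : ℚ) + 1 + ((n : ℚ) - 4) = n by ring, show (1 : ℚ) + 3 + ((n : ℚ) - 4) = n by ring,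
        show (n : ℤ) - 4 - 1 = n - 5 by ring, show (n : ℤ) - 4 - 2 = n - 6 by ring, z5, z6]
      field_simp
      ring
    rw [P21, P22, P31, z6, f2, f3, f5]
    ring




/-- Theorem 1.2, first formula. Genus-zero Hurwitz number h_{2^1,2^1}: two branch points of cycle type (3,1^{n-3}) and 2n-6 transpositions; h_{2^1,2^1} = (3/4)(27n^2-137n+180)((2n-6)!/(n-3)!) n^(n-6). -/
theorem hurwitz_number_2_1_2_1 (n : ℕ) (hn : 3 ≤ n) :
    (Nat.card {p : Perm (Fin n) × Perm (Fin n) × (Fin (2 * n - 6) → Perm (Fin n)) //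
        p.1.cycleType = {3} ∧
        p.2.1.cycleType = {3} ∧
        (∀ i, (p.2.2 i).IsSwap) ∧
        p.1 * p.2.1 * (List.ofFn p.2.2).prod = 1 ∧
        (∀ x y : Fin n, ∃ g ∈ Subgroup.closure ({p.1, p.2.1} ∪ Set.range p.2.2),
          g x = y)} : ℚ) =
      (n.factorial : ℚ) * ((3 / 4) * (27 * (n : ℚ) ^ 2 - 137 * (n : ℚ) + 180)) *
        (((2 * n - 6).factorial : ℚ) / ((n - 3).factorial : ℚ)) *
        (n : ℚ) ^ ((n : ℤ) - 6) := by
  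
  have hm : (2 * n - 6) + 6 = 2 * Fintype.card (Fin n) := by rw [Fintype.card_fin]; omega
  haveI : Nonempty (Fin n) := ⟨⟨0, by omega⟩⟩
  classical
  have h := hcount (α := Fin n) (2 * n - 6)
  have h2 : ∀ a b c : Fin n, (if hdist a b c then
      ∑ x : Fin n, ∑ y : Fin n, ∑ z : Fin n,
        (if hdist x y z then hF (2 * n - 6) (hc3 a b c) (hc3 x y z) else 0) else 0) =
      (if hdist a b c then _ else 0) := fun a b c =>
    ite_congr rfl (fun hd => hinner_total (2 * n - 6) hm hd) (fun _ => rfl)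
  simp only [h2] at h
  rw [hsum_dist, Fintype.card_fin, hfinal_id n hn] at h
  have h3 := mul_left_cancel₀ (by norm_num : (9 : ℚ) ≠ 0) h
  rw [h3]
  obtain ⟨k, rfl⟩ := Nat.exists_eq_add_of_le' hn
  have hf : ((k + 3).factorial : ℚ) = ((k + 3 : ℕ) : ℚ) * (((k + 3 : ℕ) : ℚ) - 1) * (((k + 3 : ℕ) : ℚ) - 2) * (k.factorial : ℚ) := by
    rw [Nat.factorial_succ, Nat.factorial_succ, Nat.factorial_succ]
    push_cast
    ring
  have hk : (k.factorial : ℚ) ≠ 0 := by positivity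
  rw [hf, Nat.add_sub_cancel]
  generalize ((k + 3 : ℕ) : ℚ) ^ (((k + 3 : ℕ) : ℤ) - 6) = Z
  field_simp
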